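/- For every ε > 0 there is a constant C(ε) such that for all real N₁, N₂, N₃, N₄ ≥ 2, all Δ > 0, and each choice of sign ±, the number 𝒜_±(N₁,N₂,N₃,N₄;Δ) of quadruples (n₁,n₂,n₃,n₄) of positive integers with N_j < n_j ≤ 2N_j (j = 1,2,3,4) and 0 < |√n₁ + √n₂ ± √n₃ − √n₄| < Δ satisfies 𝒜_±(N₁,N₂,N₃,N₄;Δ) ≤ C(ε) · Π_{j=1}^4 (Δ^{1/4} N_j^{7/8} + N_j^{1/2}) N_j^{ε}. -/

import Mathlib

open Real MeasureTheory Finset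
open scoped Classical

noncomputable section

/-- The set of quadruples counted by `𝒜_±(N₁,N₂,N₃,N₄;Δ)`, the sign `±` being `e`. -/
def Apm (e N₁ N₂ N₃ N₄ Δ : ℝ) : Set (ℕ × ℕ × ℕ × ℕ) :=
  {q | N₁ < (q.1 : ℝ) ∧ (q.1 : ℝ) ≤ 2 * N₁ ∧ N₂ < (q.2.1 : ℝ) ∧ (q.2.1 : ℝ) ≤ 2 * N₂ ∧
       N₃ < (q.2.2.1 : ℝ) ∧ (q.2.2.1 : ℝ) ≤ 2 * N₃ ∧ N₄ < (q.2.2.2 : ℝ) ∧ (q.2.2.2 : ℝ) ≤ 2 * N₄ ∧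
       0 < |Real.sqrt q.1 + Real.sqrt q.2.1 + e * Real.sqrt q.2.2.1 - Real.sqrt q.2.2.2| ∧
       |Real.sqrt q.1 + Real.sqrt q.2.1 + e * Real.sqrt q.2.2.1 - Real.sqrt q.2.2.2| < Δ}

/-- exponential polynomial -/
def EP (F : Finset ℕ) (a : ℕ → ℂ) (l : ℕ → ℝ) (t : ℝ) : ℂ :=
  ∑ n ∈ F, a n * Complex.exp (Complex.I * ((t * l n : ℝ) : ℂ))

/-- Fourier transform of the triangle kernel -/
def tri (T x : ℝ) : ℝ := ∫ t in (-T)..T, (1 - |t| / T) * Real.cos (t * x)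

lemma tri_kernel_nonneg {T t : ℝ} (hT : 0 < T) (ht : t ∈ Set.Icc (-T) T) : 0 ≤ 1 - |t| / T := by
  have : |t| ≤ T := abs_le.mpr ht
  have : |t| / T ≤ 1 := by rw [div_le_one hT]; exact this
  linarith

lemma tri_half (T x : ℝ) (hT : 0 < T) :
    tri T x = 2 * ∫ t in (0:ℝ)..T, (1 - t / T) * Real.cos (t * x) := by
  unfold tri
  have hc : Continuous fun t : ℝ => (1 - |t| / T) * Real.cos (t * x) := by fun_prop
  rw [← intervalIntegral.integral_add_adjacent_intervals (b := 0) (hc.intervalIntegrable _ _)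
    (hc.intervalIntegrable _ _)]
  have h1 : ∫ t in (-T)..0, (1 - |t| / T) * Real.cos (t * x)
      = ∫ t in (0:ℝ)..T, (1 - |t| / T) * Real.cos (t * x) := by
    have := intervalIntegral.integral_comp_neg (a := (0:ℝ)) (b := T)
      (fun t : ℝ => (1 - |t| / T) * Real.cos (t * x))
    simp only [abs_neg, neg_mul, Real.cos_neg, neg_zero] at this
    exact this.symm
  rw [h1, ← two_mul]
  congr 1
  apply intervalIntegral.integral_congr
  intro t ht
  rw [Set.uIcc_of_le hT.le] at ht
  simp [abs_of_nonneg ht.1]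

lemma tri_nonneg (T x : ℝ) (hT : 0 < T) : 0 ≤ tri T x := by
  rw [tri_half T x hT]
  by_cases hx : x = 0
  · subst hx
    apply mul_nonneg (by norm_num)
    apply intervalIntegral.integral_nonneg hT.le
    intro t ht
    simp only [mul_zero, Real.cos_zero, mul_one]
    have : t / T ≤ 1 := by rw [div_le_one hT]; exact ht.2
    linarith
  · have : ∫ t in (0:ℝ)..T, (1 - t / T) * Real.cos (t * x)
      = ((1 - T / T) * (Real.sin (T * x) / x) - Real.cos (T * x) / (T * x ^ 2))
        - ((1 - 0 / T) * (Real.sin (0 * x) / x) - Real.cos (0 * x) / (T * x ^ 2)) := by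
      apply intervalIntegral.integral_eq_sub_of_hasDerivAt
        (f := fun t => (1 - t / T) * (Real.sin (t * x) / x) - Real.cos (t * x) / (T * x ^ 2))
      · intro t _
        have h1 : HasDerivAt (fun t : ℝ => 1 - t / T) (-(1 / T)) t := by
          simpa using ((hasDerivAt_id t).div_const T).const_sub 1
        have h2 : HasDerivAt (fun t : ℝ => Real.sin (t * x) / x) (Real.cos (t * x) * x / x) t := by
          have := ((hasDerivAt_mul_const (x := t) x).sin).div_const x
          simpa using this
        have h3 : HasDerivAt (fun t : ℝ => Real.cos (t * x) / (T * x ^ 2))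
            (-Real.sin (t * x) * x / (T * x ^ 2)) t := by
          have := ((hasDerivAt_mul_const (x := t) x).cos).div_const (T * x ^ 2)
          simpa using this
        have h4 := (h1.mul h2).sub h3
        have h5 : (1 - t / T) * Real.cos (t * x) = -(1 / T) * (Real.sin (t * x) / x)
            + (1 - t / T) * (Real.cos (t * x) * x / x) - -Real.sin (t * x) * x / (T * x ^ 2) := by
          field_simp
          ring
        rw [h5]
        exact h4
      · apply Continuous.intervalIntegrable
        fun_prop
    rw [this]
    have hc := Real.cos_le_one (T * x)
    have : (1 - T / T) * (Real.sin (T * x) / x) = 0 := by rw [div_self hT.ne']; ring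
    rw [this]
    simp only [zero_mul, Real.sin_zero, Real.cos_zero, zero_div, mul_zero, zero_sub]
    have : 0 ≤ (1 - Real.cos (T * x)) / (T * x ^ 2) := by
      apply div_nonneg (by linarith); positivity
    rw [sub_div] at this
    linarith

lemma tri_lower (T x : ℝ) (hT : 0 < T) (hx : |x| * T ≤ 1) : T / 2 ≤ tri T x := by
  rw [tri_half T x hT]
  have h : ∫ t in (0:ℝ)..T, (1 - t / T) * (1 / 2) ≤ ∫ t in (0:ℝ)..T, (1 - t / T) * Real.cos (t * x) := by
    apply intervalIntegral.integral_mono_on hT.le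
    · apply Continuous.intervalIntegrable; fun_prop
    · apply Continuous.intervalIntegrable; fun_prop
    · intro t ht
      have h1 : t / T ≤ 1 := by rw [div_le_one hT]; exact ht.2
      apply mul_le_mul_of_nonneg_left _ (by linarith)
      have h2 : |t * x| ≤ 1 := by
        rw [abs_mul, abs_of_nonneg ht.1]
        calc t * |x| ≤ T * |x| := by gcongr; exact ht.2
          _ ≤ 1 := by linarith
      have h3 := Real.one_sub_sq_div_two_le_cos (x := t * x)
      have h4 : (t * x) ^ 2 ≤ 1 := by
        rw [← sq_abs]; nlinarith [abs_nonneg (t * x)]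
      linarith
  have h0 : ∫ t in (0:ℝ)..T, (1 - t / T) * (1 / 2) = T / 4 := by
    rw [intervalIntegral.integral_mul_const, intervalIntegral.integral_sub (by simp)
      (by apply Continuous.intervalIntegrable; fun_prop), intervalIntegral.integral_div]
    simp only [integral_id, intervalIntegral.integral_const, smul_eq_mul]
    field_simp
    ring
  linarith

lemma tri_complex (T x : ℝ) (hT : 0 < T) :
    ∫ t in (-T)..T, ((1 - |t| / T : ℝ) : ℂ) * Complex.exp (Complex.I * ((t * x : ℝ) : ℂ)) = (tri T x : ℂ) := by
  have h1 : ∀ t : ℝ, ((1 - |t| / T : ℝ) : ℂ) * Complex.exp (Complex.I * ((t * x : ℝ) : ℂ))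
      = (((1 - |t| / T) * Real.cos (t * x) : ℝ) : ℂ) + (((1 - |t| / T) * Real.sin (t * x) : ℝ) : ℂ) * Complex.I := by
    intro t
    rw [mul_comm Complex.I, Complex.exp_mul_I]
    push_cast
    ring
  simp_rw [h1]
  rw [intervalIntegral.integral_add, intervalIntegral.integral_mul_const, intervalIntegral.integral_ofReal,
    intervalIntegral.integral_ofReal]
  · have h2 : ∫ t in (-T)..T, (1 - |t| / T) * Real.sin (t * x) = 0 := by
      have := intervalIntegral.integral_comp_neg (a := -T) (b := T)
        (fun t : ℝ => (1 - |t| / T) * Real.sin (t * x))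
      simp only [abs_neg, neg_mul, Real.sin_neg, neg_neg, mul_neg, intervalIntegral.integral_neg] at this
      linarith
    rw [h2]
    simp [tri]
  · apply Continuous.intervalIntegrable; fun_prop
  · apply Continuous.intervalIntegrable; fun_prop

lemma EP_continuous (F : Finset ℕ) (a : ℕ → ℂ) (l : ℕ → ℝ) : Continuous (EP F a l) := by
  unfold EP; fun_prop

lemma prod4_expand (F₁ F₂ F₃ F₄ : Finset ℕ) (a₁ a₂ a₃ a₄ : ℕ → ℂ) (l₁ l₂ l₃ l₄ : ℕ → ℝ) (t : ℝ) :
    EP F₁ a₁ l₁ t * EP F₂ a₂ l₂ t * EP F₃ a₃ l₃ t * EP F₄ a₄ l₄ t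
    = ∑ q ∈ F₁ ×ˢ F₂ ×ˢ F₃ ×ˢ F₄, (a₁ q.1 * a₂ q.2.1 * a₃ q.2.2.1 * a₄ q.2.2.2) *
        Complex.exp (Complex.I * ((t * (l₁ q.1 + l₂ q.2.1 + l₃ q.2.2.1 + l₄ q.2.2.2) : ℝ) : ℂ)) := by
  unfold EP
  simp_rw [Finset.sum_product]
  rw [Finset.sum_mul_sum, Finset.sum_mul, Finset.sum_mul]
  refine Finset.sum_congr rfl fun i _ => ?_
  rw [Finset.sum_mul, Finset.sum_mul]
  refine Finset.sum_congr rfl fun j _ => ?_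
  rw [Finset.mul_sum (s := F₃), Finset.sum_mul]
  refine Finset.sum_congr rfl fun k _ => ?_
  rw [Finset.mul_sum]
  refine Finset.sum_congr rfl fun m _ => ?_
  have : Complex.exp (Complex.I * ((t * (l₁ i + l₂ j + l₃ k + l₄ m) : ℝ) : ℂ))
    = Complex.exp (Complex.I * ((t * l₁ i : ℝ) : ℂ)) * Complex.exp (Complex.I * ((t * l₂ j : ℝ) : ℂ))
     * Complex.exp (Complex.I * ((t * l₃ k : ℝ) : ℂ)) * Complex.exp (Complex.I * ((t * l₄ m : ℝ) : ℂ)) := by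
    rw [← Complex.exp_add, ← Complex.exp_add, ← Complex.exp_add]
    congr 1
    push_cast
    ring
  rw [this]
  ring

lemma prod4_integral (F₁ F₂ F₃ F₄ : Finset ℕ) (a₁ a₂ a₃ a₄ : ℕ → ℂ) (l₁ l₂ l₃ l₄ : ℕ → ℝ)
    (T : ℝ) (hT : 0 < T) :
    ∫ t in (-T)..T, ((1 - |t| / T : ℝ) : ℂ) *
      (EP F₁ a₁ l₁ t * EP F₂ a₂ l₂ t * EP F₃ a₃ l₃ t * EP F₄ a₄ l₄ t)
    = ∑ q ∈ F₁ ×ˢ F₂ ×ˢ F₃ ×ˢ F₄, (a₁ q.1 * a₂ q.2.1 * a₃ q.2.2.1 * a₄ q.2.2.2) *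
        (tri T (l₁ q.1 + l₂ q.2.1 + l₃ q.2.2.1 + l₄ q.2.2.2) : ℂ) := by
  simp_rw [prod4_expand, Finset.mul_sum]
  rw [intervalIntegral.integral_finsetSum]
  · refine Finset.sum_congr rfl fun q _ => ?_
    rw [← tri_complex T _ hT, ← intervalIntegral.integral_const_mul]
    congr 1
    ext t
    ring
  · intro q _
    apply Continuous.intervalIntegrable
    fun_prop

lemma EP_conj (F : Finset ℕ) (a : ℕ → ℂ) (l : ℕ → ℝ) (t : ℝ) :
    (starRingEnd ℂ) (EP F a l t) = EP F (fun n => (starRingEnd ℂ) (a n)) (fun n => - l n) t := by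
  unfold EP
  rw [map_sum]
  refine Finset.sum_congr rfl fun n _ => ?_
  rw [map_mul, ← Complex.exp_conj]
  simp

lemma norm4_eq (z : ℂ) : ((‖z‖ ^ 4 : ℝ) : ℂ) = z * z * (starRingEnd ℂ) z * (starRingEnd ℂ) z := by
  have h := Complex.mul_conj z
  rw [Complex.normSq_eq_norm_sq] at h
  calc ((‖z‖ ^ 4 : ℝ) : ℂ) = ((‖z‖ ^ 2 : ℝ) : ℂ) * ((‖z‖ ^ 2 : ℝ) : ℂ) := by push_cast; ring
    _ = _ := by rw [← h]; ring

lemma tri_norm4 (F : Finset ℕ) (a : ℕ → ℂ) (l : ℕ → ℝ) (T : ℝ) (hT : 0 < T) :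
    ((∫ t in (-T)..T, (1 - |t| / T) * ‖EP F a l t‖ ^ 4 : ℝ) : ℂ)
     = ∑ q ∈ F ×ˢ F ×ˢ F ×ˢ F, (a q.1 * a q.2.1 * (starRingEnd ℂ) (a q.2.2.1) * (starRingEnd ℂ) (a q.2.2.2)) *
        (tri T (l q.1 + l q.2.1 + (- l q.2.2.1) + (-l q.2.2.2)) : ℂ) := by
  rw [← prod4_integral F F F F a a (fun n => (starRingEnd ℂ) (a n)) (fun n => (starRingEnd ℂ) (a n))
    l l (fun n => - l n) (fun n => - l n) T hT, ← intervalIntegral.integral_ofReal]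
  apply intervalIntegral.integral_congr
  intro t _
  simp only []
  rw [Complex.ofReal_mul, norm4_eq, EP_conj]

lemma tri_majorant (F G : Finset ℕ) (hFG : F ⊆ G) (a : ℕ → ℂ) (b : ℕ → ℝ) (l : ℕ → ℝ) (T : ℝ) (hT : 0 < T)
    (hb : ∀ n ∈ G, 0 ≤ b n) (hab : ∀ n ∈ F, ‖a n‖ ≤ b n) :
    ∫ t in (-T)..T, (1 - |t| / T) * ‖EP F a l t‖ ^ 4
      ≤ ∫ t in (-T)..T, (1 - |t| / T) * ‖EP G (fun n => (b n : ℂ)) l t‖ ^ 4 := by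
  have h1 := tri_norm4 F a l T hT
  have h2 := tri_norm4 G (fun n => (b n : ℂ)) l T hT
  set X := ∫ t in (-T)..T, (1 - |t| / T) * ‖EP F a l t‖ ^ 4
  set Y := ∫ t in (-T)..T, (1 - |t| / T) * ‖EP G (fun n => (b n : ℂ)) l t‖ ^ 4
  have h3 : Y = ∑ q ∈ G ×ˢ G ×ˢ G ×ˢ G, (b q.1 * b q.2.1 * b q.2.2.1 * b q.2.2.2) *
        tri T (l q.1 + l q.2.1 + (- l q.2.2.1) + (-l q.2.2.2)) := by
    apply Complex.ofReal_injective
    rw [h2]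
    push_cast
    simp
  have h4 : X ≤ ‖(X : ℂ)‖ := by
    rw [Complex.norm_real]; exact le_abs_self X
  refine h4.trans ?_
  rw [h1, h3]
  refine (norm_sum_le _ _).trans ?_
  have hsub : F ×ˢ F ×ˢ F ×ˢ F ⊆ G ×ˢ G ×ˢ G ×ˢ G := by
    apply Finset.product_subset_product hFG
    apply Finset.product_subset_product hFG
    exact Finset.product_subset_product hFG hFG
  refine le_trans (Finset.sum_le_sum (g := fun q => (b q.1 * b q.2.1 * b q.2.2.1 * b q.2.2.2) *
        tri T (l q.1 + l q.2.1 + (- l q.2.2.1) + (-l q.2.2.2))) ?_) ?_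
  · intro q hq
    simp only [Finset.mem_product] at hq
    obtain ⟨q1, q2, q3, q4⟩ := hq
    rw [norm_mul, Complex.norm_real, Real.norm_of_nonneg (tri_nonneg _ _ hT)]
    apply mul_le_mul_of_nonneg_right _ (tri_nonneg _ _ hT)
    simp only [norm_mul, RCLike.norm_conj]
    have := hab _ q1
    have := hab _ q2
    have := hab _ q3
    have := hab _ q4
    have := (norm_nonneg _).trans (hab _ q1)
    have := (norm_nonneg _).trans (hab _ q2)
    have := (norm_nonneg _).trans (hab _ q3)
    gcongr
  · apply Finset.sum_le_sum_of_subset_of_nonneg hsub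
    intro q hq _
    simp only [Finset.mem_product] at hq
    obtain ⟨q1, q2, q3, q4⟩ := hq
    have := hb _ q1
    have := hb _ q2
    have := hb _ q3
    have := hb _ q4
    have := tri_nonneg T (l q.1 + l q.2.1 + (- l q.2.2.1) + (-l q.2.2.2)) hT
    positivity

/-- majorant principle for fourth moments -/
lemma majorant (F G : Finset ℕ) (hFG : F ⊆ G) (a : ℕ → ℂ) (b : ℕ → ℝ) (l : ℕ → ℝ) (c T : ℝ) (hT : 0 < T)
    (hb : ∀ n ∈ G, 0 ≤ b n) (hab : ∀ n ∈ F, ‖a n‖ ≤ b n) :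
    ∫ t in (c - T)..(c + T), ‖EP F a l t‖ ^ 4
      ≤ 2 * ∫ t in (-(2 * T))..(2 * T), ‖EP G (fun n => (b n : ℂ)) l t‖ ^ 4 := by
  set a' : ℕ → ℂ := fun n => a n * Complex.exp (Complex.I * ((c * l n : ℝ) : ℂ)) with ha'
  have hshift : ∀ t, EP F a l (t + c) = EP F a' l t := by
    intro t
    unfold EP
    refine Finset.sum_congr rfl fun n _ => ?_
    rw [ha', mul_assoc, ← Complex.exp_add]
    congr 2
    push_cast
    ring
  have h1 : ∫ t in (c - T)..(c + T), ‖EP F a l t‖ ^ 4 = ∫ t in (-T)..T, ‖EP F a' l t‖ ^ 4 := by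
    simp_rw [← hshift]
    rw [intervalIntegral.integral_comp_add_right (fun t => ‖EP F a l t‖ ^ 4)]
    congr 1 <;> ring
  have hc1 := EP_continuous F a' l
  have hc2 := EP_continuous G (fun n => (b n : ℂ)) l
  have h2T : (0:ℝ) < 2 * T := by linarith
  have hn : ∀ n ∈ F, ‖a' n‖ ≤ b n := by
    intro n hn
    rw [ha']
    simp only [norm_mul]
    rw [mul_comm Complex.I, Complex.norm_exp_ofReal_mul_I, mul_one]
    exact hab n hn
  have h2 := tri_majorant F G hFG a' b l (2 * T) h2T hb hn
  have h3 : ∫ t in (-T)..T, ‖EP F a' l t‖ ^ 4 ≤ ∫ t in (-T)..T, 2 * ((1 - |t| / (2 * T)) * ‖EP F a' l t‖ ^ 4) := by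
    apply intervalIntegral.integral_mono_on (by linarith)
    · apply Continuous.intervalIntegrable; fun_prop
    · apply Continuous.intervalIntegrable; fun_prop
    · intro t ht
      have : |t| / (2 * T) ≤ 1 / 2 := by
        rw [div_le_iff₀ h2T]
        have := abs_le.mpr ht
        linarith
      nlinarith [pow_nonneg (norm_nonneg (EP F a' l t)) 4]
  have h4 : ∫ t in (-T)..T, 2 * ((1 - |t| / (2 * T)) * ‖EP F a' l t‖ ^ 4)
      ≤ ∫ t in (-(2 * T))..(2 * T), 2 * ((1 - |t| / (2 * T)) * ‖EP F a' l t‖ ^ 4) := by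
    apply intervalIntegral.integral_mono_interval (by linarith) (by linarith) (by linarith)
    · apply ae_restrict_of_forall_mem measurableSet_Ioc
      intro t ht
      have := tri_kernel_nonneg h2T ⟨ht.1.le, ht.2⟩
      simp only [Pi.zero_apply]
      positivity
    · apply Continuous.intervalIntegrable; fun_prop
  have h5 : ∫ t in (-(2 * T))..(2 * T), (1 - |t| / (2 * T)) * ‖EP G (fun n => (b n : ℂ)) l t‖ ^ 4
      ≤ ∫ t in (-(2 * T))..(2 * T), ‖EP G (fun n => (b n : ℂ)) l t‖ ^ 4 := by
    apply intervalIntegral.integral_mono_on (by linarith)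
    · apply Continuous.intervalIntegrable; fun_prop
    · apply Continuous.intervalIntegrable; fun_prop
    · intro t ht
      have : 0 ≤ |t| / (2 * T) := by positivity
      nlinarith [pow_nonneg (norm_nonneg (EP G (fun n => (b n : ℂ)) l t)) 4]
  have h6 : ∫ t in (-(2 * T))..(2 * T), 2 * ((1 - |t| / (2 * T)) * ‖EP F a' l t‖ ^ 4)
    = 2 * ∫ t in (-(2 * T))..(2 * T), (1 - |t| / (2 * T)) * ‖EP F a' l t‖ ^ 4 :=
    intervalIntegral.integral_const_mul _ _
  rw [h1]
  linarith

lemma levy_u_hasDeriv (c d x : ℝ) (hx : 0 < x) :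
    HasDerivAt (fun x => d * √x - c / √x) (d / (2 * √x) + c / (2 * (x * √x))) x := by
  have hs : 0 < √x := Real.sqrt_pos.mpr hx
  have h1 := Real.hasDerivAt_sqrt hx.ne'
  have h2 := (h1.const_mul d).sub ((hasDerivAt_const x c).div h1 hs.ne')
  have h3 : √x ^ 2 = x := Real.sq_sqrt hx.le
  have h4 : d / (2 * √x) + c / (2 * (x * √x)) = d * (1 / (2 * √x)) - (0 * √x - c * (1 / (2 * √x))) / √x ^ 2 := by
    rw [h3]
    field_simp
    ring
  rw [h4]
  exact h2

lemma levy_real_aux (c d : ℝ) (hc : 0 < c) (hd : 0 < d) :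
    IntegrableOn (fun x => (d / (2 * √x) + c / (2 * (x * √x))) * Real.exp (-(d * √x - c / √x) ^ 2)) (Set.Ioi 0) ∧
    ∫ x in Set.Ioi (0:ℝ), (d / (2 * √x) + c / (2 * (x * √x))) * Real.exp (-(d * √x - c / √x) ^ 2) = √π := by
  set u : ℝ → ℝ := fun x => d * √x - c / √x with hu
  set u' : ℝ → ℝ := fun x => d / (2 * √x) + c / (2 * (x * √x)) with hu'
  have hpos : ∀ x ∈ Set.Ioi (0:ℝ), 0 < u' x := by
    intro x hx
    have hx : 0 < x := hx
    have hs : 0 < √x := Real.sqrt_pos.mpr hx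
    simp only [hu']
    positivity
  have hder : ∀ x ∈ Set.Ioi (0:ℝ), HasDerivWithinAt u (u' x) (Set.Ioi 0) x := fun x hx =>
    (levy_u_hasDeriv c d x hx).hasDerivWithinAt
  have hinj : Set.InjOn u (Set.Ioi 0) := by
    apply StrictMonoOn.injOn
    intro x hx y hy hxy
    have hx : 0 < x := hx
    have hs : 0 < √x := Real.sqrt_pos.mpr hx
    have hxy' : √x < √y := Real.sqrt_lt_sqrt hx.le hxy
    simp only [hu]
    have : c / √y < c / √x := by gcongr
    have : d * √x < d * √y := by gcongr
    linarith
  have himg : u '' (Set.Ioi 0) = Set.univ := by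
    rw [Set.eq_univ_iff_forall]
    intro v
    set r := (v + √(v ^ 2 + 4 * c * d)) / (2 * d) with hr
    have hq : √(v ^ 2 + 4 * c * d) ^ 2 = v ^ 2 + 4 * c * d := Real.sq_sqrt (by positivity)
    have hq' : |v| < √(v ^ 2 + 4 * c * d) := by
      apply Real.lt_sqrt_of_sq_lt
      rw [sq_abs]
      have : 0 < c * d := by positivity
      linarith
    have hr0 : 0 < r := by
      apply div_pos _ (by positivity)
      have := neg_abs_le v
      linarith
    refine ⟨r ^ 2, by simp only [Set.mem_Ioi]; positivity, ?_⟩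
    simp only [hu]
    rw [Real.sqrt_sq hr0.le]
    have h2 : d * r ^ 2 - c = v * r := by
      have : 2 * d * r = v + √(v ^ 2 + 4 * c * d) := by rw [hr]; field_simp
      have h3 : (2 * d * r - v) ^ 2 = v ^ 2 + 4 * c * d := by rw [this]; ring_nf; ring_nf at hq; linarith
      have h4 : 4 * d * (d * r ^ 2 - c - v * r) = 0 := by linarith [h3]
      have : d * r ^ 2 - c - v * r = 0 := by
        rcases mul_eq_zero.mp h4 with h | h
        · linarith
        · exact h
      linarith
    field_simp
    linarith
  have hg : Integrable (fun v : ℝ => Real.exp (-v ^ 2)) := by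
    have := integrable_exp_neg_mul_sq (b := 1) one_pos
    simpa using this
  constructor
  · have h := (integrableOn_image_iff_integrableOn_abs_deriv_smul measurableSet_Ioi hder hinj
      (fun v : ℝ => Real.exp (-v ^ 2))).mp (by rw [himg]; exact hg.integrableOn)
    refine h.congr_fun ?_ measurableSet_Ioi
    intro x hx
    simp only [smul_eq_mul, abs_of_pos (hpos x hx)]
    rfl
  · have h := integral_image_eq_integral_abs_deriv_smul measurableSet_Ioi hder hinj
      (fun v : ℝ => Real.exp (-v ^ 2))
    rw [himg, Measure.restrict_univ] at h
    have h2 := integral_gaussian 1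
    simp only [neg_mul, one_mul, div_one] at h2
    rw [h2] at h
    rw [h]
    apply setIntegral_congr_fun measurableSet_Ioi
    intro x hx
    simp only [smul_eq_mul, abs_of_pos (hpos x hx)]
    rfl

lemma levy_real_aux2 (c d : ℝ) (hc : 0 < c) (hd : 0 < d) :
    ∫ x in Set.Ioi (0:ℝ), d / (2 * √x) * Real.exp (-(d * √x - c / √x) ^ 2)
    = ∫ x in Set.Ioi (0:ℝ), c / (2 * (x * √x)) * Real.exp (-(d * √x - c / √x) ^ 2) := by
  set k := c ^ 2 / d ^ 2 with hk
  have hk0 : 0 < k := by positivity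
  have himg : (fun x : ℝ => k / x) '' (Set.Ioi 0) = Set.Ioi 0 := by
    ext y
    simp only [Set.mem_image, Set.mem_Ioi]
    constructor
    · rintro ⟨x, hx, rfl⟩; positivity
    · intro hy
      exact ⟨k / y, by positivity, by field_simp⟩
  have hder : ∀ x ∈ Set.Ioi (0:ℝ), HasDerivWithinAt (fun x : ℝ => k / x) (-k / x ^ 2) (Set.Ioi 0) x := by
    intro x hx
    have hx : 0 < x := hx
    have := (hasDerivAt_const x k).div (hasDerivAt_id x) hx.ne'
    have h2 := this.hasDerivWithinAt (s := Set.Ioi 0)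
    have h4 : -k / x ^ 2 = (0 * id x - k * 1) / id x ^ 2 := by simp
    rw [h4]
    exact h2
  have hinj : Set.InjOn (fun x : ℝ => k / x) (Set.Ioi 0) := by
    intro x hx y hy h
    have hx : 0 < x := hx
    have hy : 0 < y := hy
    simp only at h
    field_simp at h
    exact h.symm
  have h := integral_image_eq_integral_abs_deriv_smul measurableSet_Ioi hder hinj
      (fun x : ℝ => d / (2 * √x) * Real.exp (-(d * √x - c / √x) ^ 2))
  rw [himg] at h
  rw [h]
  apply setIntegral_congr_fun measurableSet_Ioi
  intro x hx
  have hx : 0 < x := hx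
  have hs : 0 < √x := Real.sqrt_pos.mpr hx
  have hsx : √x ^ 2 = x := Real.sq_sqrt hx.le
  have h1 : √(k / x) = c / (d * √x) := by
    rw [Real.sqrt_div hk0.le, hk, Real.sqrt_div (by positivity), Real.sqrt_sq hc.le, Real.sqrt_sq hd.le]
    field_simp
  simp only [smul_eq_mul]
  rw [h1]
  have h2 : d * (c / (d * √x)) - c / (c / (d * √x)) = -(d * √x - c / √x) := by
    field_simp
    ring
  rw [h2, neg_sq (d * √x - c / √x), ← mul_assoc]
  congr 1
  rw [abs_div, abs_neg, abs_of_pos hk0, abs_of_pos (by positivity), hk]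
  field_simp
  exact hsx

lemma levy_real (c d : ℝ) (hc : 0 < c) (hd : 0 < d) :
    ∫ x in Set.Ioi (0:ℝ), 1 / (x * √x) * Real.exp (-(c ^ 2 / x) - d ^ 2 * x)
      = √π / c * Real.exp (-(2 * c * d)) := by
  obtain ⟨hi, hI⟩ := levy_real_aux c d hc hd
  have h2 := levy_real_aux2 c d hc hd
  have hmeas1 : AEStronglyMeasurable (fun x => d / (2 * √x) * Real.exp (-(d * √x - c / √x) ^ 2))
      (volume.restrict (Set.Ioi 0)) := by
    apply Measurable.aestronglyMeasurable
    fun_prop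
  have hmeas2 : AEStronglyMeasurable (fun x => c / (2 * (x * √x)) * Real.exp (-(d * √x - c / √x) ^ 2))
      (volume.restrict (Set.Ioi 0)) := by
    apply Measurable.aestronglyMeasurable
    fun_prop
  have hi1 : IntegrableOn (fun x => d / (2 * √x) * Real.exp (-(d * √x - c / √x) ^ 2)) (Set.Ioi 0) := by
    refine Integrable.mono' hi hmeas1 ?_
    apply ae_restrict_of_forall_mem measurableSet_Ioi
    intro x hx
    have hx : 0 < x := hx
    have hs : 0 < √x := Real.sqrt_pos.mpr hx
    rw [Real.norm_of_nonneg (by positivity)]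
    gcongr
    have : 0 < c / (2 * (x * √x)) := by positivity
    linarith
  have hi2 : IntegrableOn (fun x => c / (2 * (x * √x)) * Real.exp (-(d * √x - c / √x) ^ 2)) (Set.Ioi 0) := by
    refine Integrable.mono' hi hmeas2 ?_
    apply ae_restrict_of_forall_mem measurableSet_Ioi
    intro x hx
    have hx : 0 < x := hx
    have hs : 0 < √x := Real.sqrt_pos.mpr hx
    rw [Real.norm_of_nonneg (by positivity)]
    gcongr
    have : 0 < d / (2 * √x) := by positivity
    linarith
  simp_rw [add_mul] at hI
  rw [integral_add hi1 hi2, h2, ← two_mul] at hI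
  have h3 : ∫ x in Set.Ioi (0:ℝ), 1 / (x * √x) * Real.exp (-(c ^ 2 / x) - d ^ 2 * x)
      = ∫ x in Set.Ioi (0:ℝ), (2 / c * Real.exp (-(2 * c * d))) * (c / (2 * (x * √x)) * Real.exp (-(d * √x - c / √x) ^ 2)) := by
    apply setIntegral_congr_fun measurableSet_Ioi
    intro x hx
    have hx : 0 < x := hx
    have hs : 0 < √x := Real.sqrt_pos.mpr hx
    have hsx : √x ^ 2 = x := Real.sq_sqrt hx.le
    have h4 : -(c ^ 2 / x) - d ^ 2 * x = -(2 * c * d) + -(d * √x - c / √x) ^ 2 := by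
      have : (d * √x - c / √x) ^ 2 = d ^ 2 * √x ^ 2 - 2 * c * d + c ^ 2 / √x ^ 2 := by
        field_simp
        ring
      rw [this, hsx]
      ring
    simp only []
    rw [h4, Real.exp_add]
    field_simp
  rw [h3, integral_const_mul]
  have : ∫ x in Set.Ioi (0:ℝ), c / (2 * (x * √x)) * Real.exp (-(d * √x - c / √x) ^ 2) = √π / 2 := by linarith
  rw [this]
  ring

lemma w_bd (α : ℝ) (hα : 0 < α) : ∃ C : ℝ, 0 ≤ C ∧ ∀ x : ℝ, 0 < x →
    1 / (x * √x) * Real.exp (-(α / x)) ≤ C ∧ 1 / (x * √x) * Real.exp (-(α / x)) ≤ C * x ∧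
    1 / (x * √x) * Real.exp (-(α / x)) * (1 / x) ≤ C ∧ 1 / (x * √x) * Real.exp (-(α / x)) * x ≤ C := by
  have key : ∀ k : ℕ, ∀ u : ℝ, 0 < u → u ^ k * Real.exp (-(α * u)) ≤ (k.factorial : ℝ) / α ^ k := by
    intro k u hu
    have h1 := Real.pow_div_factorial_le_exp (α * u) (by positivity) k
    rw [mul_pow, div_le_iff₀ (by positivity)] at h1
    rw [Real.exp_neg, le_div_iff₀ (by positivity), mul_right_comm, ← div_eq_mul_inv, div_le_iff₀ (Real.exp_pos _)]
    linarith
  refine ⟨(Nat.factorial 0 : ℝ) / α ^ 0 + (Nat.factorial 1 : ℝ) / α ^ 1 + (Nat.factorial 2 : ℝ) / α ^ 2 + (Nat.factorial 3 : ℝ) / α ^ 3, by positivity, ?_⟩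
  intro x hx
  set C := (Nat.factorial 0 : ℝ) / α ^ 0 + (Nat.factorial 1 : ℝ) / α ^ 1 + (Nat.factorial 2 : ℝ) / α ^ 2 + (Nat.factorial 3 : ℝ) / α ^ 3 with hC
  have hs : 0 < √x := Real.sqrt_pos.mpr hx
  set u := 1 / x with hu
  have hu0 : 0 < u := by positivity
  have hxu : x = 1 / u := by rw [hu]; field_simp
  have hw : 1 / (x * √x) ≤ u + u ^ 2 := by
    have h1 : 1 / √x ≤ 1 + u := by
      have : √x * √x = x := Real.mul_self_sqrt hx.le
      have h2 : u = (1 / √x) ^ 2 := by rw [hu]; field_simp; linarith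
      rw [h2]
      nlinarith [sq_nonneg (1 / √x - 1), sq_nonneg (1 / √x)]
    have h3 : 1 / (x * √x) = u * (1 / √x) := by rw [hu]; field_simp
    rw [h3]; nlinarith
  have he : Real.exp (-(α / x)) = Real.exp (-(α * u)) := by rw [hu]; ring_nf
  rw [he]
  set E := Real.exp (-(α * u)) with hE
  have hE0 : 0 < E := Real.exp_pos _
  have k0 := key 0 u hu0
  have k1 := key 1 u hu0
  have k2 := key 2 u hu0
  have k3 := key 3 u hu0
  rw [← hE] at k0 k1 k2 k3
  have hwE : 1 / (x * √x) * E ≤ (u + u ^ 2) * E := by gcongr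
  have p0 : 0 < u ^ 0 * E := by positivity
  have p1 : 0 < u ^ 1 * E := by positivity
  have p2 : 0 < u ^ 2 * E := by positivity
  have p3 : 0 < u ^ 3 * E := by positivity
  refine ⟨?_, ?_, ?_, ?_⟩
  · linarith
  · rw [hxu, mul_one_div, le_div_iff₀ hu0, ← hxu]
    calc _ ≤ (u + u ^ 2) * E * u := by gcongr
      _ = u ^ 2 * E + u ^ 3 * E := by ring
      _ ≤ _ := by linarith
  · calc _ ≤ (u + u ^ 2) * E * u := by gcongr
      _ = u ^ 2 * E + u ^ 3 * E := by ring
      _ ≤ _ := by linarith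
  · calc _ ≤ (u + u ^ 2) * E * x := by gcongr
      _ = u ^ 0 * E + u ^ 1 * E := by rw [hxu]; field_simp
      _ ≤ _ := by linarith

def levyF (A B η y : ℝ) (ζ : ℂ) (x : ℝ) : ℂ :=
  ((1 / (x * √x) : ℝ) : ℂ) * Complex.exp (-((A - B * ζ) / x) - (η + y * ζ) * x)

lemma levyF_norm (A B η y : ℝ) (ζ : ℂ) (x : ℝ) (hx : 0 < x) :
    ‖levyF A B η y ζ x‖ = 1 / (x * √x) * Real.exp (-((A - B * ζ.re) / x)) * Real.exp (-((η + y * ζ.re) * x)) := by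
  have hs : 0 < √x := Real.sqrt_pos.mpr hx
  unfold levyF
  rw [norm_mul, Complex.norm_exp, Complex.norm_real, Real.norm_of_nonneg (by positivity), mul_assoc, ← Real.exp_add]
  congr 2
  have : ((A - B * ζ) / x : ℂ).re = (A - B * ζ.re) / x := by
    rw [Complex.div_ofReal_re]; simp
  rw [Complex.sub_re, Complex.neg_re, this]
  simp
  ring

lemma levyF_meas (A B η y : ℝ) (ζ : ℂ) : Measurable (levyF A B η y ζ) := by
  unfold levyF; fun_prop

def strip (A B η y : ℝ) : Set ℂ := {ζ | 0 < A - B * ζ.re ∧ 0 < η + y * ζ.re}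

lemma strip_open (A B η y : ℝ) : IsOpen (strip A B η y) := by
  have c1 : Continuous fun v : ℂ => A - B * v.re := by fun_prop
  have c2 : Continuous fun v : ℂ => η + y * v.re := by fun_prop
  exact (isOpen_lt continuous_const c1).inter (isOpen_lt continuous_const c2)

lemma strip_convex (A B η y : ℝ) : Convex ℝ (strip A B η y) := by
  intro u hu v hv a b ha hb hab
  simp only [strip, Set.mem_ofPred_eq] at *
  simp only [Complex.add_re, Complex.real_smul, Complex.re_ofReal_mul]
  constructor
  · have : A - B * (a * u.re + b * v.re) = a * (A - B * u.re) + b * (A - B * v.re) := by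
      have : A = (a + b) * A := by rw [hab]; ring
      linear_combination this
    rw [this]
    rcases ha.eq_or_lt with h | h
    · rw [← h] at hab ⊢; simp at hab; rw [hab]; simp; linarith [hv.1]
    · have h1 := mul_pos h hu.1
      have h2 := mul_nonneg hb hv.1.le
      linarith
  · have : η + y * (a * u.re + b * v.re) = a * (η + y * u.re) + b * (η + y * v.re) := by
      have : η = (a + b) * η := by rw [hab]; ring
      linear_combination this
    rw [this]
    rcases ha.eq_or_lt with h | h
    · rw [← h] at hab ⊢; simp at hab; rw [hab]; simp; linarith [hv.2]
    · have h1 := mul_pos h hu.2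
      have h2 := mul_nonneg hb hv.2.le
      linarith

lemma levyF_integrable (A B η y : ℝ) (ζ : ℂ) (hζ : ζ ∈ strip A B η y) :
    IntegrableOn (levyF A B η y ζ) (Set.Ioi 0) := by
  obtain ⟨C, hC0, hC⟩ := w_bd _ hζ.1
  have h := (integrableOn_exp_mul_Ioi (a := -(η + y * ζ.re)) (by have := hζ.2; linarith) 0).const_mul C
  refine Integrable.mono' h (levyF_meas A B η y ζ).aestronglyMeasurable ?_
  apply ae_restrict_of_forall_mem measurableSet_Ioi
  intro x hx
  rw [levyF_norm _ _ _ _ _ _ hx, neg_mul]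
  gcongr
  exact (hC x hx).1

lemma levyF_diff (A B η y : ℝ) (ζ : ℂ) (hζ : ζ ∈ strip A B η y) :
    DifferentiableAt ℂ (fun ζ => ∫ x in Set.Ioi (0:ℝ), levyF A B η y ζ x) ζ := by
  set α := (A - B * ζ.re) / 2 with hα
  set β := (η + y * ζ.re) / 2 with hβ
  have hα0 : 0 < α := by have := hζ.1; positivity
  have hβ0 : 0 < β := by have := hζ.2; positivity
  obtain ⟨C, hC0, hC⟩ := w_bd α hα0
  have hs : {v : ℂ | α < A - B * v.re ∧ β < η + y * v.re} ∈ nhds ζ := by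
    apply IsOpen.mem_nhds
    · have c1 : Continuous fun v : ℂ => A - B * v.re := by fun_prop
      have c2 : Continuous fun v : ℂ => η + y * v.re := by fun_prop
      exact (isOpen_lt continuous_const c1).inter (isOpen_lt continuous_const c2)
    · constructor
      · have := hζ.1; simp only [hα]; linarith
      · have := hζ.2; simp only [hβ]; linarith
  have hb := ((integrableOn_exp_mul_Ioi (a := -β) (by linarith) 0).const_mul ((|B| + |y|) * C))
  refine (hasDerivAt_integral_of_dominated_loc_of_deriv_le (μ := volume.restrict (Set.Ioi 0)) (F := levyF A B η y)
    (F' := fun ζ x => levyF A B η y ζ x * (B / x - y * x)) hs ?_ (levyF_integrable A B η y ζ hζ) ?_ ?_ hb ?_).2.differentiableAt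
  · exact Filter.Eventually.of_forall fun v => (levyF_meas A B η y v).aestronglyMeasurable
  · apply Measurable.aestronglyMeasurable
    have := levyF_meas A B η y ζ
    fun_prop
  · apply ae_restrict_of_forall_mem measurableSet_Ioi
    intro x hx v hv
    have hx : 0 < x := hx
    have hsx : 0 < √x := Real.sqrt_pos.mpr hx
    rw [norm_mul, levyF_norm _ _ _ _ _ _ hx]
    have h1 : ‖(B / x - y * x : ℂ)‖ ≤ |B| * (1 / x) + |y| * x := by
      refine (norm_sub_le _ _).trans (le_of_eq ?_)
      rw [norm_div, norm_mul, Complex.norm_real, Complex.norm_real, Complex.norm_real, Real.norm_of_nonneg hx.le]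
      simp [div_eq_mul_inv]
    have h2 : Real.exp (-((A - B * v.re) / x)) ≤ Real.exp (-(α / x)) := by
      gcongr; exact hv.1.le
    have h3 : Real.exp (-((η + y * v.re) * x)) ≤ Real.exp (-β * x) := by
      rw [neg_mul]
      gcongr; exact hv.2.le
    obtain ⟨_, _, c3, c4⟩ := hC x hx
    calc _ ≤ 1 / (x * √x) * Real.exp (-(α / x)) * Real.exp (-β * x) * (|B| * (1 / x) + |y| * x) := by gcongr
      _ = (|B| * (1 / (x * √x) * Real.exp (-(α / x)) * (1 / x)) + |y| * (1 / (x * √x) * Real.exp (-(α / x)) * x)) * Real.exp (-β * x) := by ring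
      _ ≤ (|B| * C + |y| * C) * Real.exp (-β * x) := by gcongr
      _ = _ := by ring
  · apply ae_restrict_of_forall_mem measurableSet_Ioi
    intro x hx v hv
    have hx : 0 < x := hx
    unfold levyF
    have h1 : HasDerivAt (fun ζ : ℂ => -((A - B * ζ) / x) - (η + y * ζ) * x) ((B / x - y * x : ℂ)) v := by
      have e1 : (fun ζ : ℂ => -((A - B * ζ) / x) - (η + y * ζ) * x) = fun ζ : ℂ => ζ * (B / x - y * x : ℂ) + (-(A / x : ℂ) - η * x) := by
        funext ζ; ring
      rw [e1]
      have := ((hasDerivAt_id v).mul_const (B / x - y * x : ℂ)).add_const (-(A / x : ℂ) - η * x)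
      simpa using this
    have := (h1.cexp).const_mul (((1 / (x * √x) : ℝ) : ℂ))
    rw [mul_assoc]
    exact this

lemma levyF_eval (A B η y : ℝ) (hA : 0 < A) (hη : 0 < η) :
    Set.EqOn (fun ζ => ∫ x in Set.Ioi (0:ℝ), levyF A B η y ζ x)
      (fun ζ : ℂ => (√π : ℂ) / (A - B * ζ) ^ (2⁻¹ : ℂ) * Complex.exp (-(2 * (A - B * ζ) ^ (2⁻¹ : ℂ) * (η + y * ζ) ^ (2⁻¹ : ℂ))))
      (strip A B η y) := by
  have hop := strip_open A B η y
  have h0 : (0:ℂ) ∈ strip A B η y := by simp [strip, hA, hη]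
  have ha : ∀ ζ ∈ strip A B η y, (A - B * ζ : ℂ) ∈ Complex.slitPlane := by
    intro ζ hζ
    left
    have := hζ.1
    simpa using this
  have hb : ∀ ζ ∈ strip A B η y, (η + y * ζ : ℂ) ∈ Complex.slitPlane := by
    intro ζ hζ
    left
    have := hζ.2
    simpa using this
  apply AnalyticOnNhd.eqOn_of_preconnected_of_frequently_eq (z₀ := 0) _ _ (strip_convex A B η y).isPreconnected h0
  · have hreal : ∀ᶠ t : ℝ in nhdsWithin 0 {0}ᶜ, (t : ℂ) ∈ strip A B η y := by
      apply Filter.Eventually.filter_mono nhdsWithin_le_nhds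
      have : Filter.Tendsto (fun t : ℝ => (t : ℂ)) (nhds 0) (nhds ((0:ℝ):ℂ)) := Complex.continuous_ofReal.continuousAt
      exact this (by simpa using hop.mem_nhds h0)
    have hev : ∀ᶠ t : ℝ in nhdsWithin 0 {0}ᶜ, (fun ζ => ∫ x in Set.Ioi (0:ℝ), levyF A B η y ζ x) (t : ℂ) = (fun ζ : ℂ => (√π : ℂ) / (A - B * ζ) ^ (2⁻¹ : ℂ) * Complex.exp (-(2 * (A - B * ζ) ^ (2⁻¹ : ℂ) * (η + y * ζ) ^ (2⁻¹ : ℂ)))) (t : ℂ) := by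
      filter_upwards [hreal] with t ht
      have h1 : 0 < A - B * t := by simpa using ht.1
      have h2 : 0 < η + y * t := by simpa using ht.2
      have hl := levy_real (√(A - B * t)) (√(η + y * t)) (Real.sqrt_pos.mpr h1) (Real.sqrt_pos.mpr h2)
      rw [Real.sq_sqrt h1.le, Real.sq_sqrt h2.le] at hl
      have e1 : ∀ r : ℝ, 0 < r → ((r : ℂ)) ^ (2⁻¹ : ℂ) = (√r : ℂ) := by
        intro r hr
        rw [Real.sqrt_eq_rpow, Complex.ofReal_cpow hr.le]
        simp
      have e2 : (A - B * (t:ℂ) : ℂ) = ((A - B * t : ℝ) : ℂ) := by push_cast; ring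
      have e3 : (η + y * (t:ℂ) : ℂ) = ((η + y * t : ℝ) : ℂ) := by push_cast; ring
      simp only [e2, e3, e1 _ h1, e1 _ h2]
      have e4 : ∀ x : ℝ, levyF A B η y t x = ((1 / (x * √x) * Real.exp (-((A - B * t) / x) - (η + y * t) * x) : ℝ) : ℂ) := by
        intro x
        unfold levyF
        rw [e2, e3]
        push_cast
        rfl
      simp_rw [e4]
      rw [integral_complex_ofReal, hl]
      push_cast
      ring
    have htend : Filter.Tendsto (fun t : ℝ => (t : ℂ)) (nhdsWithin 0 {0}ᶜ) (nhdsWithin 0 {0}ᶜ) := by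
      apply tendsto_nhdsWithin_of_tendsto_nhds_of_eventually_within
      · have : Filter.Tendsto (fun t : ℝ => (t : ℂ)) (nhds 0) (nhds ((0:ℝ):ℂ)) := Complex.continuous_ofReal.continuousAt
        exact (by simpa using this : Filter.Tendsto (fun t : ℝ => (t : ℂ)) (nhds 0) (nhds 0)).mono_left nhdsWithin_le_nhds
      · filter_upwards [self_mem_nhdsWithin] with t ht
        simpa using ht
    exact htend.frequently hev.frequently
  · apply DifferentiableOn.analyticOnNhd _ hop
    intro ζ hζ
    exact (levyF_diff A B η y ζ hζ).differentiableWithinAt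
  · apply DifferentiableOn.analyticOnNhd _ hop
    intro ζ hζ
    apply DifferentiableAt.differentiableWithinAt
    have d1 : DifferentiableAt ℂ (fun ζ : ℂ => (A - B * ζ) ^ (2⁻¹ : ℂ)) ζ :=
      DifferentiableAt.cpow_const (by fun_prop) (ha ζ hζ)
    have d2 : DifferentiableAt ℂ (fun ζ : ℂ => (η + y * ζ) ^ (2⁻¹ : ℂ)) ζ :=
      DifferentiableAt.cpow_const (by fun_prop) (hb ζ hζ)
    have hne : (A - B * ζ : ℂ) ^ (2⁻¹ : ℂ) ≠ 0 := by
      rw [Complex.cpow_ne_zero_iff]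
      left; exact Complex.slitPlane_ne_zero (ha ζ hζ)
    fun_prop (disch := assumption)

lemma w_eq_rpow (x : ℝ) (hx : 0 < x) : 1 / (x * √x) = x ^ (-(3/2 : ℝ)) := by
  rw [Real.rpow_neg hx.le, show (3/2:ℝ) = 1 + 1/2 by norm_num, Real.rpow_add hx, Real.rpow_one, Real.sqrt_eq_rpow, one_div]

lemma w_integrable (A : ℝ) (hA : 0 < A) :
    IntegrableOn (fun x : ℝ => 1 / (x * √x) * Real.exp (-(A / x))) (Set.Ioi 0) := by
  obtain ⟨C, hC0, hC⟩ := w_bd A hA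
  have hm : Measurable (fun x : ℝ => 1 / (x * √x) * Real.exp (-(A / x))) := by fun_prop
  rw [show Set.Ioi (0:ℝ) = Set.Ioc 0 1 ∪ Set.Ioi 1 by rw [Set.Ioc_union_Ioi_eq_Ioi zero_le_one]]
  apply IntegrableOn.union
  · refine Integrable.mono' (g := fun _ => C) (by simp) hm.aestronglyMeasurable ?_
    apply ae_restrict_of_forall_mem measurableSet_Ioc
    intro x hx
    have hx0 : 0 < x := hx.1
    have hsx : 0 < √x := Real.sqrt_pos.mpr hx0
    rw [Real.norm_of_nonneg (by positivity)]
    exact (hC x hx.1).1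
  · refine Integrable.mono' (integrableOn_Ioi_rpow_of_lt (a := -(3/2 : ℝ)) (by norm_num) one_pos) hm.aestronglyMeasurable ?_
    apply ae_restrict_of_forall_mem measurableSet_Ioi
    intro x hx
    have hx0 : 0 < x := lt_trans one_pos hx
    have hsx : 0 < √x := Real.sqrt_pos.mpr hx0
    rw [Real.norm_of_nonneg (by positivity), ← w_eq_rpow x hx0]
    have : Real.exp (-(A / x)) ≤ 1 := by rw [Real.exp_le_one_iff]; have : 0 < A / x := by positivity
                                         linarith
    exact mul_le_of_le_one_right (by positivity) this

lemma levy_limit (A B y : ℝ) (hA : 0 < A) :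
    ∫ x in Set.Ioi (0:ℝ), levyF A B 0 y Complex.I x =
     (√π : ℂ) / (A - B * Complex.I) ^ (2⁻¹ : ℂ) * Complex.exp (-(2 * (A - B * Complex.I) ^ (2⁻¹ : ℂ) * (y * Complex.I) ^ (2⁻¹ : ℂ))) := by
  have h1 : Filter.Tendsto (fun η : ℝ => ∫ x in Set.Ioi (0:ℝ), levyF A B η y Complex.I x) (nhdsWithin 0 (Set.Ioi 0))
      (nhds (∫ x in Set.Ioi (0:ℝ), levyF A B 0 y Complex.I x)) := by
    apply tendsto_integral_filter_of_dominated_convergence (fun x : ℝ => 1 / (x * √x) * Real.exp (-(A / x)))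
    · exact Filter.Eventually.of_forall fun η => (levyF_meas A B η y Complex.I).aestronglyMeasurable
    · filter_upwards [self_mem_nhdsWithin] with η hη
      have hη : 0 < η := hη
      apply ae_restrict_of_forall_mem measurableSet_Ioi
      intro x hx
      have hx : 0 < x := hx
      have hsx : 0 < √x := Real.sqrt_pos.mpr hx
      rw [levyF_norm _ _ _ _ _ _ hx]
      simp only [Complex.I_re, mul_zero, sub_zero, add_zero]
      have : Real.exp (-(η * x)) ≤ 1 := by
        rw [Real.exp_le_one_iff]; have : 0 < η * x := by positivity
        linarith
      exact mul_le_of_le_one_right (by positivity) this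
    · exact w_integrable A hA
    · apply ae_restrict_of_forall_mem measurableSet_Ioi
      intro x hx
      have : Continuous fun η : ℝ => levyF A B η y Complex.I x := by unfold levyF; fun_prop
      have := (this.tendsto 0).mono_left (nhdsWithin_le_nhds (s := Set.Ioi 0))
      simpa using this
  have h2 : Filter.Tendsto (fun η : ℝ => (√π : ℂ) / (A - B * Complex.I) ^ (2⁻¹ : ℂ) * Complex.exp (-(2 * (A - B * Complex.I) ^ (2⁻¹ : ℂ) * (η + y * Complex.I) ^ (2⁻¹ : ℂ)))) (nhdsWithin 0 (Set.Ioi 0))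
      (nhds ((√π : ℂ) / (A - B * Complex.I) ^ (2⁻¹ : ℂ) * Complex.exp (-(2 * (A - B * Complex.I) ^ (2⁻¹ : ℂ) * (y * Complex.I) ^ (2⁻¹ : ℂ))))) := by
    have c0 : ContinuousAt (fun v : ℂ => v ^ (2⁻¹ : ℂ)) (y * Complex.I) :=
      Complex.continuousAt_cpow_const_of_re_pos (by simp) (by norm_num)
    have c1 : Filter.Tendsto (fun η : ℝ => (η + y * Complex.I : ℂ)) (nhdsWithin 0 (Set.Ioi 0)) (nhds (y * Complex.I)) := by
      have : Continuous fun η : ℝ => (η + y * Complex.I : ℂ) := by fun_prop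
      have := (this.tendsto 0).mono_left (nhdsWithin_le_nhds (s := Set.Ioi 0))
      simpa using this
    have c2 := c0.tendsto.comp c1
    have c3 : Continuous fun v : ℂ => (√π : ℂ) / (A - B * Complex.I) ^ (2⁻¹ : ℂ) * Complex.exp (-(2 * (A - B * Complex.I) ^ (2⁻¹ : ℂ) * v)) := by fun_prop
    exact (c3.tendsto _).comp c2
  refine tendsto_nhds_unique h1 (h2.congr' ?_)
  filter_upwards [self_mem_nhdsWithin] with η hη
  exact (levyF_eval A B η y hA hη (by simp [strip, hA]; exact hη)).symm

def levyf (A B : ℝ) : ℝ → ℂ := Set.indicator (Set.Ioi 0) (levyF A B 0 0 Complex.I)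

lemma levyf_norm (A B x : ℝ) (hx : 0 < x) : ‖levyf A B x‖ = 1 / (x * √x) * Real.exp (-(A / x)) := by
  rw [levyf, Set.indicator_of_mem (by exact hx), levyF_norm _ _ _ _ _ _ hx]
  simp

lemma levyf_nonpos (A B x : ℝ) (hx : x ≤ 0) : levyf A B x = 0 := by
  rw [levyf, Set.indicator_of_notMem]
  simpa using hx

lemma levyf_cont (A B : ℝ) (hA : 0 < A) : Continuous (levyf A B) := by
  rw [continuous_iff_continuousAt]
  intro x
  rcases lt_trichotomy x 0 with h | h | h
  · have : levyf A B =ᶠ[nhds x] fun _ => 0 := by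
      filter_upwards [Iio_mem_nhds h] with y hy
      exact levyf_nonpos A B y (le_of_lt hy)
    exact continuousAt_const.congr this.symm
  · subst h
    obtain ⟨C, hC0, hC⟩ := w_bd A hA
    rw [ContinuousAt, levyf_nonpos A B 0 le_rfl]
    apply squeeze_zero_norm (a := fun x => C * |x|)
    · intro x
      rcases le_or_gt x 0 with hx | hx
      · rw [levyf_nonpos A B x hx, norm_zero]; positivity
      · rw [levyf_norm A B x hx, abs_of_pos hx]
        exact (hC x hx).2.1
    · have : Continuous fun x : ℝ => C * |x| := by fun_prop
      simpa using this.tendsto 0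
  · have : levyf A B =ᶠ[nhds x] levyF A B 0 0 Complex.I := by
      filter_upwards [Ioi_mem_nhds h] with y hy
      rw [levyf, Set.indicator_of_mem hy]
    refine ContinuousAt.congr ?_ this.symm
    unfold levyF
    have hx : (x : ℂ) ≠ 0 := by exact_mod_cast h.ne'
    have hs : √x ≠ 0 := (Real.sqrt_pos.mpr h).ne'
    have h3 : x * √x ≠ 0 := mul_ne_zero h.ne' hs
    have c1 : ContinuousAt (fun x : ℝ => 1 / (x * √x)) x :=
      ContinuousAt.div (by fun_prop) (by fun_prop) h3
    have c2 : ContinuousAt (fun x : ℝ => -((A - B * Complex.I) / (x:ℂ)) - (((0:ℝ):ℂ) + ((0:ℝ):ℂ) * Complex.I) * x) x := by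
      apply ContinuousAt.sub
      · exact (ContinuousAt.div (by fun_prop) (by fun_prop) hx).neg
      · fun_prop
    exact (Complex.continuous_ofReal.continuousAt.comp c1).mul (Complex.continuous_exp.continuousAt.comp c2)

lemma levyf_fourier (A B ξ : ℝ) (hA : 0 < A) :
    FourierTransform.fourier (levyf A B) ξ = (√π : ℂ) / (A - B * Complex.I) ^ (2⁻¹ : ℂ) * Complex.exp (-(2 * (A - B * Complex.I) ^ (2⁻¹ : ℂ) * (((2 * π * ξ : ℝ) : ℂ) * Complex.I) ^ (2⁻¹ : ℂ))) := by
  rw [Real.fourier_real_eq_integral_exp_smul, ← levy_limit A B (2 * π * ξ) hA, ← integral_indicator measurableSet_Ioi]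
  congr 1
  funext x
  by_cases hx : x ∈ Set.Ioi (0:ℝ)
  · rw [Set.indicator_of_mem hx, levyf, Set.indicator_of_mem hx, levyF, levyF, smul_eq_mul, mul_left_comm, ← Complex.exp_add]
    congr 2
    push_cast
    ring
  · rw [Set.indicator_of_notMem hx, levyf, Set.indicator_of_notMem hx, smul_zero]

def zz (τ σ : ℝ) : ℂ := ((τ + σ : ℝ) + (σ - τ : ℝ) * Complex.I) / (√2 : ℝ)

lemma sqrt2_sq : ((√2 : ℝ) : ℂ) ^ 2 = 2 := by
  rw [← Complex.ofReal_pow, Real.sq_sqrt (by norm_num)]; norm_num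

lemma sqrt2_ne : ((√2 : ℝ) : ℂ) ≠ 0 := by
  intro h
  have := sqrt2_sq
  rw [h] at this
  norm_num at this

lemma zz_sq (τ σ : ℝ) : zz τ σ ^ 2 = ((2 * τ * σ : ℝ) : ℂ) - ((τ ^ 2 - σ ^ 2 : ℝ) : ℂ) * Complex.I := by
  unfold zz
  rw [div_pow, sqrt2_sq]
  push_cast
  have := Complex.I_sq
  linear_combination (((σ:ℂ) - τ) ^ 2 / 2) * this

lemma zz_re (τ σ : ℝ) : (zz τ σ).re = (τ + σ) / √2 := by
  unfold zz
  rw [Complex.div_ofReal_re]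
  simp

lemma zz_cpow (τ σ : ℝ) (hτ : 0 < τ) (hσ : 0 < σ) :
    (((2 * τ * σ : ℝ) : ℂ) - ((τ ^ 2 - σ ^ 2 : ℝ) : ℂ) * Complex.I) ^ (2⁻¹ : ℂ) = zz τ σ := by
  rw [← zz_sq, Complex.sq_cpow_two_inv]
  rw [zz_re]; positivity

def lam (n : ℕ) : ℝ := 2 * √(2 * π * n)

lemma cpow_pos (n : ℕ) : (((2 * π * ((n + 1 : ℕ) : ℝ) : ℝ) : ℂ) * Complex.I) ^ (2⁻¹ : ℂ) = (lam (n+1) / 2 : ℝ) * (1 + Complex.I) / (√2 : ℝ) := by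
  have hl : (lam (n+1) / 2) ^ 2 = 2 * π * ((n + 1 : ℕ) : ℝ) := by
    unfold lam
    rw [mul_div_cancel_left₀ _ (by norm_num), Real.sq_sqrt (by positivity)]
  have hl0 : 0 < lam (n+1) := by unfold lam; positivity
  have h : ((2 * π * ((n + 1 : ℕ) : ℝ) : ℝ) : ℂ) * Complex.I = ((lam (n+1) / 2 : ℝ) * (1 + Complex.I) / (√2 : ℝ)) ^ 2 := by
    rw [div_pow, sqrt2_sq, mul_pow, ← Complex.ofReal_pow, hl]
    have := Complex.I_sq
    linear_combination (-((2 * π * ((n + 1 : ℕ) : ℝ) : ℝ) : ℂ) / 2) * this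
  rw [h, Complex.sq_cpow_two_inv]
  rw [Complex.div_ofReal_re, Complex.re_ofReal_mul]
  simp; positivity

lemma cpow_neg' (n : ℕ) : (((2 * π * (-((n + 1 : ℕ) : ℝ)) : ℝ) : ℂ) * Complex.I) ^ (2⁻¹ : ℂ) = (lam (n+1) / 2 : ℝ) * (1 - Complex.I) / (√2 : ℝ) := by
  have hl : (lam (n+1) / 2) ^ 2 = 2 * π * ((n + 1 : ℕ) : ℝ) := by
    unfold lam
    rw [mul_div_cancel_left₀ _ (by norm_num), Real.sq_sqrt (by positivity)]
  have hl0 : 0 < lam (n+1) := by unfold lam; positivity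
  have h : ((2 * π * (-((n + 1 : ℕ) : ℝ)) : ℝ) : ℂ) * Complex.I = ((lam (n+1) / 2 : ℝ) * (1 - Complex.I) / (√2 : ℝ)) ^ 2 := by
    rw [div_pow, sqrt2_sq, mul_pow, ← Complex.ofReal_pow, hl]
    have := Complex.I_sq
    push_cast
    linear_combination (-(2 * π * (n + 1) : ℂ) / 2) * this
  rw [h, Complex.sq_cpow_two_inv]
  rw [Complex.div_ofReal_re, Complex.re_ofReal_mul]
  simp; positivity

lemma summable_exp_lam (c : ℝ) (hc : 0 < c) : Summable fun n : ℕ => Real.exp (-(c * lam (n+1))) := by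
  have h : Summable fun n : ℕ => (24 / (c ^ 4 * (64 * π ^ 2))) * (1 / ((n + 1 : ℕ) : ℝ) ^ 2) := by
    apply Summable.mul_left
    exact (summable_nat_add_iff 1).mpr (Real.summable_one_div_nat_pow.mpr one_lt_two)
  refine Summable.of_nonneg_of_le (fun n => (Real.exp_pos _).le) (fun n => ?_) h
  have hl0 : 0 < lam (n+1) := by unfold lam; positivity
  have h1 := Real.pow_div_factorial_le_exp (c * lam (n+1)) (by positivity) 4
  have h2 : lam (n+1) ^ 4 = 64 * π ^ 2 * ((n + 1 : ℕ) : ℝ) ^ 2 := by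
    have hl : √(2 * π * ((n + 1 : ℕ) : ℝ)) ^ 2 = 2 * π * ((n + 1 : ℕ) : ℝ) := by
      rw [Real.sq_sqrt (by positivity)]
    unfold lam
    calc _ = 16 * (√(2 * π * ((n + 1 : ℕ) : ℝ)) ^ 2) ^ 2 := by ring
      _ = _ := by rw [hl]; ring
  rw [mul_pow, h2, show ((Nat.factorial 4 : ℕ) : ℝ) = 24 by norm_num [Nat.factorial]] at h1
  rw [Real.exp_neg]
  calc _ ≤ (c ^ 4 * (64 * π ^ 2 * ((n + 1 : ℕ) : ℝ) ^ 2) / 24)⁻¹ := by gcongr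
    _ = _ := by field_simp

lemma summable_w : Summable fun n : ℕ => 1 / (((n + 1 : ℕ) : ℝ) * √((n + 1 : ℕ) : ℝ)) := by
  have h : Summable fun n : ℕ => 1 / ((n : ℕ) : ℝ) ^ (3/2 : ℝ) := Real.summable_one_div_nat_rpow.mpr (by norm_num)
  have h2 := (summable_nat_add_iff 1).mpr h
  refine h2.congr (fun n => ?_)
  rw [w_eq_rpow _ (by positivity), Real.rpow_neg (by positivity), one_div]

set_option maxHeartbeats 2000000 in
/-- The exact transformation identity. -/
theorem key_identity (τ σ : ℝ) (hτ : 0 < τ) (hσ : 0 < σ) :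
    ∑' n : ℕ, ((1 / (((n + 1 : ℕ) : ℝ) * √((n + 1 : ℕ) : ℝ)) : ℝ) : ℂ) * Complex.exp (-(zz τ σ ^ 2 / (((n + 1 : ℕ) : ℝ) : ℂ)))
    = (√π : ℝ) / zz τ σ * (1 + ∑' n : ℕ, Complex.exp (-((σ - τ * Complex.I) * lam (n+1)))
        + ∑' n : ℕ, Complex.exp (-((τ + σ * Complex.I) * lam (n+1)))) := by
  set A := 2 * τ * σ with hA
  set B := τ ^ 2 - σ ^ 2 with hB
  have hA0 : 0 < A := by positivity
  have hF : ∀ ξ : ℝ, FourierTransform.fourier (levyf A B) ξ = (√π : ℝ) / zz τ σ * Complex.exp (-(2 * zz τ σ * (((2 * π * ξ : ℝ) : ℂ) * Complex.I) ^ (2⁻¹ : ℂ))) := by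
    intro ξ
    rw [levyf_fourier A B ξ hA0, hA, hB, zz_cpow τ σ hτ hσ]
  have hF0 : FourierTransform.fourier (levyf A B) ((0:ℕ) : ℝ) = (√π : ℝ) / zz τ σ := by
    rw [hF]
    simp
  have hFp : ∀ n : ℕ, FourierTransform.fourier (levyf A B) ((n + 1 : ℕ) : ℝ) = (√π : ℝ) / zz τ σ * Complex.exp (-((τ + σ * Complex.I) * lam (n+1))) := by
    intro n
    rw [hF, cpow_pos]
    congr 3
    unfold zz
    have h1 := sqrt2_sq
    have h2 := sqrt2_ne
    have h3 := Complex.I_sq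
    field_simp
    rw [h1]
    push_cast
    linear_combination ((lam (n+1) : ℂ) * (σ - τ)) * h3
  have hFn : ∀ n : ℕ, FourierTransform.fourier (levyf A B) (-((n + 1 : ℕ) : ℝ)) = (√π : ℝ) / zz τ σ * Complex.exp (-((σ - τ * Complex.I) * lam (n+1))) := by
    intro n
    rw [hF, cpow_neg']
    congr 3
    unfold zz
    have h1 := sqrt2_sq
    have h2 := sqrt2_ne
    have h3 := Complex.I_sq
    field_simp
    rw [h1]
    push_cast
    linear_combination (-(lam (n+1) : ℂ) * (σ - τ)) * h3
  have s1 : Summable fun n : ℕ => Complex.exp (-((τ + σ * Complex.I) * lam (n+1))) := by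
    refine Summable.of_norm ((summable_exp_lam τ hτ).congr (fun n => ?_))
    rw [Complex.norm_exp]; simp
  have s2 : Summable fun n : ℕ => Complex.exp (-((σ - τ * Complex.I) * lam (n+1))) := by
    refine Summable.of_norm ((summable_exp_lam σ hσ).congr (fun n => ?_))
    rw [Complex.norm_exp]; simp
  have sp : Summable fun n : ℕ => FourierTransform.fourier (levyf A B) (((n : ℕ) : ℤ) : ℝ) := by
    rw [← summable_nat_add_iff 1]
    simp only [Int.cast_natCast, hFp]
    exact s1.mul_left _
  have sn : Summable fun n : ℕ => FourierTransform.fourier (levyf A B) ((-((n : ℤ) + 1) : ℤ) : ℝ) := by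
    refine (s2.mul_left ((√π : ℝ) / zz τ σ)).congr (fun n => ?_)
    rw [← hFn]; push_cast; rfl
  have sZ : Summable fun n : ℤ => FourierTransform.fourier (levyf A B) (n : ℝ) := by
    exact Summable.of_nat_of_neg_add_one sp sn
  have hdec : (levyf A B) =O[Filter.cocompact ℝ] (fun x : ℝ => |x| ^ (-(3/2 : ℝ))) := by
    apply Asymptotics.IsBigO.of_bound 1
    apply Filter.Eventually.of_forall
    intro x
    rw [one_mul, Real.norm_of_nonneg (by positivity)]
    rcases le_or_gt x 0 with hx | hx
    · rw [levyf_nonpos A B x hx, norm_zero]; positivity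
    · rw [levyf_norm A B x hx, abs_of_pos hx, w_eq_rpow x hx]
      have : Real.exp (-(A / x)) ≤ 1 := by
        rw [Real.exp_le_one_iff]; have : 0 < A / x := by positivity
        linarith
      exact mul_le_of_le_one_right (by positivity) this
  have hP := Real.tsum_eq_tsum_fourier_of_rpow_decay_of_summable (levyf_cont A B hA0) (b := 3/2) (by norm_num) hdec sZ 0
  have hR : ∑' n : ℤ, FourierTransform.fourier (levyf A B) n * fourier n ((0:ℝ) : UnitAddCircle) = ∑' n : ℤ, FourierTransform.fourier (levyf A B) (n : ℝ) := by
    apply tsum_congr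
    intro n
    simp
  have hZ := tsum_of_nat_of_neg_add_one (f := fun n : ℤ => FourierTransform.fourier (levyf A B) (n : ℝ)) sp sn
  rw [sp.tsum_eq_zero_add] at hZ
  rw [hR, hZ] at hP
  clear hR hZ
  simp only [Int.cast_natCast] at hP
  rw [hF0] at hP
  simp only [hFp] at hP
  have hn' : ∑' n : ℕ, FourierTransform.fourier (levyf A B) ((-((n : ℤ) + 1) : ℤ) : ℝ) = ∑' n : ℕ, (√π : ℝ) / zz τ σ * Complex.exp (-((σ - τ * Complex.I) * lam (n+1))) := by
    apply tsum_congr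
    intro n
    rw [← hFn]; push_cast; rfl
  rw [hn', tsum_mul_left, tsum_mul_left] at hP
  have hfn : ∀ n : ℕ, levyf A B ((n + 1 : ℕ) : ℝ) = ((1 / (((n + 1 : ℕ) : ℝ) * √((n + 1 : ℕ) : ℝ)) : ℝ) : ℂ) * Complex.exp (-(zz τ σ ^ 2 / (((n + 1 : ℕ) : ℝ) : ℂ))) := by
    intro n
    have hpos : (0:ℝ) < ((n + 1 : ℕ) : ℝ) := by positivity
    rw [levyf, Set.indicator_of_mem (by exact hpos), levyF, zz_sq]
    simp [hA, hB]
  have hfs : Summable fun n : ℕ => levyf A B ((n : ℤ) : ℝ) := by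
    rw [← summable_nat_add_iff 1]
    refine Summable.of_norm (Summable.of_nonneg_of_le (fun n => norm_nonneg _) (fun n => ?_) summable_w)
    have hpos : (0:ℝ) < ((n + 1 : ℕ) : ℝ) := by positivity
    rw [Int.cast_natCast, levyf_norm _ _ _ hpos]
    have : Real.exp (-(A / ((n + 1 : ℕ) : ℝ))) ≤ 1 := by
        rw [Real.exp_le_one_iff]; have : 0 < A / ((n + 1 : ℕ) : ℝ) := by positivity
        linarith
    exact mul_le_of_le_one_right (by positivity) this
  have hneg0 : ∀ n : ℕ, levyf A B ((-((n : ℤ) + 1) : ℤ) : ℝ) = 0 := by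
    intro n
    apply levyf_nonpos
    push_cast
    have : (0:ℝ) ≤ n := by positivity
    linarith
  have hL : ∑' n : ℤ, levyf A B ((0:ℝ) + n) = ∑' n : ℕ, levyf A B ((n + 1 : ℕ) : ℝ) := by
    simp only [zero_add]
    rw [tsum_of_nat_of_neg_add_one (f := fun n : ℤ => levyf A B (n : ℝ)) hfs (by simp only [hneg0]; exact summable_zero), hfs.tsum_eq_zero_add]
    simp only [hneg0, tsum_zero, add_zero]
    rw [levyf_nonpos A B _ (by simp), zero_add]
    simp
  rw [hL] at hP
  simp only [hfn] at hP
  rw [hP]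
  ring

lemma rpow_tele (p x : ℝ) (hp : 0 < p) (hx : 1 < x) : p * x ^ (-1 - p) ≤ (x - 1) ^ (-p) - x ^ (-p) := by
  have hx0 : 0 < x := by linarith
  have h1 : (x - 1) ^ (-p) = x ^ (-p) * (1 - 1 / x) ^ (-p) := by
    rw [← Real.mul_rpow hx0.le (by rw [sub_nonneg, div_le_one hx0]; exact hx.le)]
    congr 1; field_simp
  have h2 : 0 < 1 - 1 / x := by rw [sub_pos, div_lt_one hx0]; exact hx
  have h3 : 1 + p / x ≤ (1 - 1 / x) ^ (-p) := by
    rw [Real.rpow_def_of_pos h2]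
    have h4 := Real.log_le_sub_one_of_pos h2
    have h5 := Real.add_one_le_exp (Real.log (1 - 1 / x) * -p)
    have : p / x = p * (1 / x) := by ring
    nlinarith
  have h6 : x ^ (-1 - p) = x ^ (-p) / x := by
    rw [show -1 - p = -p - 1 by ring, Real.rpow_sub hx0, Real.rpow_one]
  rw [h1, h6]
  have h7 : 0 < x ^ (-p) := by positivity
  have : p * (x ^ (-p) / x) = x ^ (-p) * (p / x) := by ring
  nlinarith

lemma exp_pow_bd (q : ℝ) (_ : 0 ≤ q) : ∃ C : ℝ, 0 < C ∧ ∀ x : ℝ, 0 ≤ x → (1 + x) ^ q * Real.exp (-x) ≤ C := by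
  obtain ⟨k, hk⟩ := exists_nat_ge q
  refine ⟨(k.factorial : ℝ) * Real.exp 1, by positivity, fun x hx => ?_⟩
  have h1 := Real.pow_div_factorial_le_exp (1 + x) (by linarith) k
  rw [div_le_iff₀ (by positivity)] at h1
  have h2 : (1 + x) ^ q ≤ (1 + x) ^ k := by
    rw [← Real.rpow_natCast]
    exact Real.rpow_le_rpow_of_exponent_le (by linarith) hk
  rw [Real.exp_neg, ← div_eq_mul_inv, div_le_iff₀ (Real.exp_pos _)]
  calc _ ≤ _ := h2
    _ ≤ _ := h1
    _ = _ := by rw [Real.exp_add]; ring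

lemma powsum (p : ℝ) (hp : 0 < p) : ∃ C : ℝ, 0 < C ∧ ∀ m : ℝ, 0 < m → ∀ W : ℕ,
    ∑ ν ∈ Icc 1 W, (ν : ℝ) ^ (-1 - p) * Real.exp (-(m / ν)) ≤ C * m ^ (-p) := by
  obtain ⟨C, hC, h⟩ := exp_pow_bd (1 + p) (by linarith)
  refine ⟨C / p, by positivity, fun m hm W => ?_⟩
  have hstep : ∀ W : ℕ, ∑ ν ∈ Icc 1 W, (ν : ℝ) ^ (-1 - p) * Real.exp (-(m / ν)) ≤ C / p * (m ^ (-p) - (m + W) ^ (-p)) := by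
    intro W
    induction W with
    | zero => simp
    | succ W ih =>
      rw [Finset.sum_Icc_succ_top (by omega)]
      have hν : (0:ℝ) < ((W + 1 : ℕ) : ℝ) := by positivity
      set ν := ((W + 1 : ℕ) : ℝ) with hνd
      have h1 := h (m / ν) (by positivity)
      have h2 := rpow_tele p (m + ν) hp (by rw [hνd]; push_cast; have : (0:ℝ) ≤ W := by positivity
                                            linarith)
      have h3 : ν ^ (-1 - p) * Real.exp (-(m / ν)) ≤ C * (m + ν) ^ (-1 - p) := by
        have e1 : (1 + m / ν) = (m + ν) / ν := by field_simp; ring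
        rw [e1, Real.div_rpow (by positivity) (by positivity)] at h1
        have e2 : ν ^ (-1 - p) = 1 / ν ^ (1 + p) := by rw [show -1 - p = -(1 + p) by ring, Real.rpow_neg hν.le, one_div]
        have e3 : (m + ν) ^ (-1 - p) = 1 / (m + ν) ^ (1 + p) := by rw [show -1 - p = -(1 + p) by ring, Real.rpow_neg (by positivity), one_div]
        rw [e2, e3, mul_one_div, le_div_iff₀ (by positivity)]
        calc _ = _ := by ring
          _ ≤ _ := h1
      have e4 : m + ν - 1 = m + W := by rw [hνd]; push_cast; ring
      rw [e4] at h2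
      have h5 : C * (m + ν) ^ (-1 - p) ≤ C / p * ((m + W) ^ (-p) - (m + ν) ^ (-p)) := by
        rw [div_mul_eq_mul_div, le_div_iff₀ hp]
        nlinarith
      calc _ ≤ C / p * (m ^ (-p) - (m + W) ^ (-p)) + C / p * ((m + W) ^ (-p) - (m + ν) ^ (-p)) := by
            linarith
        _ = _ := by ring
  refine (hstep W).trans ?_
  have : 0 ≤ (m + W) ^ (-p) := by positivity
  gcongr
  linarith

lemma expsum0 (a : ℝ) (ha : 0 < a) (W : ℕ) : ∑ n ∈ Icc 1 W, a * (1 / √n) * Real.exp (-(a * √n)) ≤ 2 := by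
  have hstep : ∀ W : ℕ, ∑ n ∈ Icc 1 W, a * (1 / √n) * Real.exp (-(a * √n)) ≤ 2 * (1 - Real.exp (-(a * √W))) := by
    intro W
    induction W with
    | zero => simp
    | succ W ih =>
      rw [Finset.sum_Icc_succ_top (by omega)]
      have hν : (0:ℝ) < ((W + 1 : ℕ) : ℝ) := by positivity
      set x := √((W + 1 : ℕ) : ℝ) with hx
      set y := √(W : ℝ) with hy
      have hx0 : 0 < x := Real.sqrt_pos.mpr hν
      have hy0 : 0 ≤ y := Real.sqrt_nonneg _
      have h1 : x ^ 2 = W + 1 := by rw [hx, Real.sq_sqrt hν.le]; push_cast; ring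
      have h2 : y ^ 2 = W := by rw [hy, Real.sq_sqrt (by positivity)]
      have hyx : y ≤ x := by nlinarith
      have h3 : 1 / x ≤ 2 * (x - y) := by
        rw [div_le_iff₀ hx0]
        nlinarith
      have h4 : Real.exp (-(a * y)) = Real.exp (-(a * x)) * Real.exp (a * (x - y)) := by
        rw [← Real.exp_add]; ring_nf
      have h5 := Real.add_one_le_exp (a * (x - y))
      have h6 := Real.exp_pos (-(a * x))
      have h7 : a * (1 / x) ≤ 2 * (a * (x - y)) := by nlinarith
      have h8 : a * (1 / x) * Real.exp (-(a * x)) ≤ 2 * (Real.exp (-(a * y)) - Real.exp (-(a * x))) := by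
        rw [h4]; nlinarith
      linarith
  refine (hstep W).trans ?_
  have := Real.exp_pos (-(a * √W))
  linarith

lemma lam_eq (n : ℕ) : lam n = 2 * √(2 * π) * √n := by
  unfold lam; rw [Real.sqrt_mul (by positivity)]; ring

lemma cpi_bounds : 1 ≤ √(2 * π) ∧ √(2 * π) ≤ 3 := by
  constructor
  · rw [Real.one_le_sqrt]; linarith [Real.pi_gt_three]
  · rw [Real.sqrt_le_left (by norm_num)]; linarith [Real.pi_lt_four]

lemma lam_nonneg (n : ℕ) : 0 ≤ lam n := by unfold lam; positivity

lemma expsum (p : ℝ) (hp : 0 ≤ p) : ∃ C : ℝ, 0 < C ∧ ∀ σ : ℝ, 0 < σ → ∀ W : ℕ,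
    ∑ n ∈ Icc 1 W, σ * (1 / √n) * Real.exp (-(σ * lam n)) * (n : ℝ) ^ p ≤ C * σ ^ (-(2 * p)) := by
  obtain ⟨C, hC, h⟩ := exp_pow_bd (2 * p) (by linarith)
  refine ⟨2 * C, by positivity, fun σ hσ W => ?_⟩
  have h0 := expsum0 σ hσ W
  have hterm : ∀ n ∈ Icc 1 W, σ * (1 / √n) * Real.exp (-(σ * lam n)) * (n : ℝ) ^ p ≤ (C * σ ^ (-(2 * p))) * (σ * (1 / √n) * Real.exp (-(σ * √n))) := by
    intro n hn
    have hn0 : (0:ℝ) < n := by have := (Finset.mem_Icc.mp hn).1; exact_mod_cast this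
    have hs : 0 < √(n:ℝ) := Real.sqrt_pos.mpr hn0
    have hl : 2 * √n ≤ lam n := by
      rw [lam_eq]; nlinarith [cpi_bounds.1]
    have h1 : Real.exp (-(σ * lam n)) ≤ Real.exp (-(σ * √n)) * Real.exp (-(σ * √n)) := by
      rw [← Real.exp_add]; gcongr; nlinarith
    have h2 := h (σ * √n) (by positivity)
    have h3 : (σ * √n) ^ (2 * p) ≤ (1 + σ * √n) ^ (2 * p) := by
      apply Real.rpow_le_rpow (by positivity) (by linarith) (by linarith)
    have h4 : (σ * √n) ^ (2 * p) = σ ^ (2 * p) * (n : ℝ) ^ p := by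
      rw [Real.mul_rpow hσ.le hs.le, Real.rpow_mul hs.le]
      congr 2
      rw [show (2:ℝ) = ((2:ℕ):ℝ) by norm_num, Real.rpow_natCast, Real.sq_sqrt hn0.le]
    have h5 : (n:ℝ) ^ p * Real.exp (-(σ * √n)) ≤ C * σ ^ (-(2 * p)) := by
      rw [Real.rpow_neg hσ.le, ← div_eq_mul_inv, le_div_iff₀ (by positivity)]
      calc _ = (σ ^ (2 * p) * (n : ℝ) ^ p) * Real.exp (-(σ * √n)) := by ring
        _ ≤ (1 + σ * √n) ^ (2 * p) * Real.exp (-(σ * √n)) := by rw [← h4]; gcongr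
        _ ≤ C := h2
    calc _ ≤ σ * (1 / √n) * (Real.exp (-(σ * √n)) * Real.exp (-(σ * √n))) * (n : ℝ) ^ p := by gcongr
      _ = ((n:ℝ) ^ p * Real.exp (-(σ * √n))) * (σ * (1 / √n) * Real.exp (-(σ * √n))) := by ring
      _ ≤ _ := by gcongr
  calc _ ≤ ∑ n ∈ Icc 1 W, (C * σ ^ (-(2 * p))) * (σ * (1 / √n) * Real.exp (-(σ * √n))) := Finset.sum_le_sum hterm
    _ = (C * σ ^ (-(2 * p))) * ∑ n ∈ Icc 1 W, (σ * (1 / √n) * Real.exp (-(σ * √n))) := by rw [Finset.mul_sum]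
    _ ≤ (C * σ ^ (-(2 * p))) * 2 := by gcongr
    _ = _ := by ring

lemma explam : ∃ C : ℝ, 0 < C ∧ ∀ σ : ℝ, 0 < σ → ∀ W : ℕ,
    ∑ n ∈ Icc 1 W, Real.exp (-(σ * lam n)) ≤ C / σ ^ 2 := by
  obtain ⟨C, hC, h⟩ := expsum (1/2) (by norm_num)
  refine ⟨C, hC, fun σ hσ W => ?_⟩
  have h1 := h σ hσ W
  have h2 : ∀ n ∈ Icc 1 W, σ * (1 / √n) * Real.exp (-(σ * lam n)) * (n : ℝ) ^ (1/2:ℝ) = σ * Real.exp (-(σ * lam n)) := by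
    intro n hn
    have hn0 : (0:ℝ) < n := by have := (Finset.mem_Icc.mp hn).1; exact_mod_cast this
    have hs : 0 < √(n:ℝ) := Real.sqrt_pos.mpr hn0
    rw [← Real.sqrt_eq_rpow]
    field_simp
  rw [Finset.sum_congr rfl h2, ← Finset.mul_sum] at h1
  have h3 : σ ^ (-(2 * (1/2:ℝ))) = 1 / σ := by rw [show -(2 * (1/2:ℝ)) = -1 by norm_num, Real.rpow_neg_one, one_div]
  rw [h3] at h1
  rw [le_div_iff₀ (by positivity)]
  have h4 : σ * (σ * ∑ n ∈ Icc 1 W, Real.exp (-(σ * lam n))) ≤ σ * (C * (1 / σ)) := by gcongr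
  have h5 : σ * (C * (1 / σ)) = C := by field_simp
  linarith

lemma sum_Icc_range {M : Type*} [AddCommMonoid M] (f : ℕ → M) (W : ℕ) : ∑ n ∈ Icc 1 W, f n = ∑ n ∈ range W, f (n + 1) := by
  induction W with
  | zero => simp
  | succ W ih => rw [Finset.sum_Icc_succ_top (by omega), Finset.sum_range_succ, ih]

lemma explam_tsum : ∃ C : ℝ, 0 < C ∧ ∀ σ : ℝ, 0 < σ → ∑' n : ℕ, Real.exp (-(σ * lam (n+1))) ≤ C / σ ^ 2 := by
  obtain ⟨C, hC, h⟩ := explam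
  refine ⟨C, hC, fun σ hσ => ?_⟩
  apply Real.tsum_le_of_sum_range_le (fun n => (Real.exp_pos _).le)
  intro W
  rw [← sum_Icc_range (fun n => Real.exp (-(σ * lam n)))]
  exact h σ hσ W

lemma abel_id (φ : ℕ → ℂ) (e : ℕ → ℂ) (W : ℕ) :
    ∑ n ∈ Icc 1 W, φ n * e n = ∑ n ∈ Icc 1 W, (φ n - φ (n+1)) * ∑ k ∈ Icc 1 n, e k + φ (W+1) * ∑ k ∈ Icc 1 W, e k := by
  induction W with
  | zero => simp
  | succ W ih =>
    rw [Finset.sum_Icc_succ_top (by omega), ih, Finset.sum_Icc_succ_top (by omega), Finset.sum_Icc_succ_top (by omega)]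
    ring

lemma abel_bd (φ : ℕ → ℝ) (ψ : ℕ → ℝ) (e : ℕ → ℂ) (W : ℕ) (h : ∀ n, 1 ≤ n → |φ n - φ (n+1)| ≤ ψ n) :
    ‖∑ n ∈ Icc 1 W, (φ n : ℂ) * e n‖ ≤ ∑ n ∈ Icc 1 W, ψ n * ‖∑ k ∈ Icc 1 n, e k‖ + |φ (W+1)| * ‖∑ k ∈ Icc 1 W, e k‖ := by
  rw [abel_id (fun n => (φ n : ℂ))]
  refine (norm_add_le _ _).trans ?_
  gcongr ?_ + ?_
  · refine (norm_sum_le _ _).trans ?_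
    apply Finset.sum_le_sum
    intro n hn
    rw [norm_mul, ← Complex.ofReal_sub, Complex.norm_real, Real.norm_eq_abs]
    gcongr
    exact h n (Finset.mem_Icc.mp hn).1
  · rw [norm_mul, Complex.norm_real, Real.norm_eq_abs]

lemma holder4 (F : Finset ℕ) (ψ a d : ℕ → ℝ) (hψ : ∀ n ∈ F, 0 ≤ ψ n) (ha : ∀ n ∈ F, 0 < a n) :
    (∑ n ∈ F, ψ n * d n) ^ 4 ≤ (∑ n ∈ F, ψ n * a n) ^ 3 * ∑ n ∈ F, ψ n * (a n ^ 3)⁻¹ * d n ^ 4 := by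
  have hP : 0 ≤ ∑ n ∈ F, ψ n * a n := Finset.sum_nonneg fun n hn => mul_nonneg (hψ n hn) (ha n hn).le
  have h1 : (∑ n ∈ F, ψ n * d n) ^ 2 ≤ (∑ n ∈ F, ψ n * a n) * ∑ n ∈ F, ψ n * (a n)⁻¹ * d n ^ 2 := by
    apply Finset.sum_sq_le_sum_mul_sum_of_sq_le_mul
    · intro n hn; exact mul_nonneg (hψ n hn) (ha n hn).le
    · intro n hn; have := hψ n hn; have := ha n hn; positivity
    · intro n hn; have := ha n hn; apply le_of_eq; field_simp
  have h2 : (∑ n ∈ F, ψ n * (a n)⁻¹ * d n ^ 2) ^ 2 ≤ (∑ n ∈ F, ψ n * a n) * ∑ n ∈ F, ψ n * (a n ^ 3)⁻¹ * d n ^ 4 := by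
    apply Finset.sum_sq_le_sum_mul_sum_of_sq_le_mul
    · intro n hn; exact mul_nonneg (hψ n hn) (ha n hn).le
    · intro n hn; have := hψ n hn; have := ha n hn; positivity
    · intro n hn; have := ha n hn; apply le_of_eq; field_simp
  calc (∑ n ∈ F, ψ n * d n) ^ 4 = ((∑ n ∈ F, ψ n * d n) ^ 2) ^ 2 := by ring
    _ ≤ ((∑ n ∈ F, ψ n * a n) * ∑ n ∈ F, ψ n * (a n)⁻¹ * d n ^ 2) ^ 2 := by gcongr
    _ = (∑ n ∈ F, ψ n * a n) ^ 2 * (∑ n ∈ F, ψ n * (a n)⁻¹ * d n ^ 2) ^ 2 := by ring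
    _ ≤ (∑ n ∈ F, ψ n * a n) ^ 2 * ((∑ n ∈ F, ψ n * a n) * ∑ n ∈ F, ψ n * (a n ^ 3)⁻¹ * d n ^ 4) := by gcongr
    _ = _ := by ring

lemma tail_lemma (g : ℕ → ℝ) (hg : Summable g) (δ : ℝ) (hδ : 0 < δ) : ∃ V0 : ℕ, ∀ V, V0 ≤ V → ∀ f : ℕ → ℂ,
    (∀ n, ‖f n‖ ≤ g n) → ‖(∑' n, f n) - ∑ n ∈ range V, f n‖ ≤ δ := by
  have ht := (tendsto_sum_nat_add g).eventually (gt_mem_nhds hδ)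
  obtain ⟨V0, hV0⟩ := Filter.eventually_atTop.mp ht
  refine ⟨V0, fun V hV f hf => ?_⟩
  have hs : Summable f := Summable.of_norm (Summable.of_nonneg_of_le (fun n => norm_nonneg _) hf hg)
  rw [← hs.sum_add_tsum_nat_add V, add_sub_cancel_left]
  refine (tsum_of_norm_bounded ((summable_nat_add_iff V).mpr hg).hasSum (fun n => hf _)).trans (hV0 V hV).le

lemma int_sub_le (g : ℝ → ℝ) (hg : Continuous g) (h0 : ∀ x, 0 ≤ g x) (a b c d : ℝ) (hca : c ≤ a) (hab : a ≤ b) (hbd : b ≤ d) :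
    ∫ x in a..b, g x ≤ ∫ x in c..d, g x := by
  apply intervalIntegral.integral_mono_interval hca hab hbd
  · exact Filter.Eventually.of_forall h0
  · exact hg.intervalIntegrable _ _

lemma dyadic_up (g : ℝ → ℝ) (hg : Continuous g) (h0 : ∀ x, 0 ≤ g x) (K₁ K₂ Z X : ℝ) (hK₁ : 0 ≤ K₁) (hK₂ : 0 ≤ K₂)
    (hZ : 0 < Z) (h : ∀ Y, Z ≤ Y → Y ≤ X → ∫ x in Y..(2 * Y), g x ≤ K₁ * Y + K₂ / Y) (hX : Z ≤ X) :
    ∫ x in Z..X, g x ≤ K₁ * X + 3 * K₂ / Z := by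
  have key : ∀ j : ℕ, ∀ X' : ℝ, Z ≤ X' → X' ≤ X → X' ≤ 2 ^ (j + 1) * Z → ∫ x in Z..X', g x ≤ K₁ * X' + K₂ * (3 / Z - 2 / X') := by
    intro j
    induction j with
    | zero =>
      intro X' h1 h2 h3
      norm_num at h3
      have h4 := h Z le_rfl hX
      have h5 := int_sub_le g hg h0 Z X' Z (2 * Z) le_rfl h1 (by linarith)
      have h6 : 2 / X' ≤ 2 / Z := by gcongr
      have h7 : K₁ * Z ≤ K₁ * X' := by gcongr
      have h8 : K₂ * (3 / Z - 2 / X') ≥ K₂ * (1 / Z) := by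
        have : 3 / Z = 1 / Z + 2 / Z := by ring
        gcongr
        linarith
      rw [mul_one_div] at h8
      linarith
    | succ j ih =>
      intro X' h1 h2 h3
      rcases le_or_gt X' (2 * Z) with hc | hc
      · refine ih X' h1 h2 (hc.trans ?_)
        have : (1:ℝ) ≤ 2 ^ j := one_le_pow₀ (by norm_num)
        rw [pow_succ]
        nlinarith
      · have hX0 : 0 < X' := by linarith
        have i1 := ih (X' / 2) (by linarith) (by linarith) (by rw [pow_succ] at h3; linarith)
        have i2 := h (X' / 2) (by linarith) (by linarith)
        rw [show 2 * (X' / 2) = X' by ring] at i2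
        rw [← intervalIntegral.integral_add_adjacent_intervals (b := X' / 2) (hg.intervalIntegrable _ _) (hg.intervalIntegrable _ _)]
        have e1 : K₂ / (X' / 2) = K₂ * (2 / X') := by field_simp
        have e2 : 2 / (X' / 2) = 2 * (2 / X') := by field_simp
        rw [e1] at i2
        rw [e2] at i1
        nlinarith
  obtain ⟨j, hj⟩ := pow_unbounded_of_one_lt (X / Z) (one_lt_two)
  have h1 : X ≤ 2 ^ (j + 1) * Z := by
    rw [div_lt_iff₀ hZ] at hj
    rw [pow_succ]
    nlinarith
  refine (key j X hX le_rfl h1).trans ?_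
  have h2 : 0 < 2 / X := by have : 0 < X := by linarith
                            positivity
  have h3 : 3 * K₂ / Z = K₂ * (3 / Z) := by ring
  rw [h3]
  gcongr
  linarith

lemma extension (g : ℝ → ℝ) (hg : Continuous g) (h0 : ∀ x, 0 ≤ g x) (K S₀ : ℝ) (hK : 0 ≤ K) (hS₀ : 0 < S₀)
    (h : ∀ c, ∫ x in (c - S₀)..(c + S₀), g x ≤ K) (S : ℝ) (hS : 0 < S) :
    ∫ x in (-S)..S, g x ≤ K * (1 + S / S₀) := by
  have key : ∀ n : ℕ, ∫ x in (-S)..(-S + n * (2 * S₀)), g x ≤ n * K := by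
    intro n
    induction n with
    | zero => simp
    | succ n ih =>
      rw [← intervalIntegral.integral_add_adjacent_intervals (b := -S + n * (2 * S₀)) (hg.intervalIntegrable _ _) (hg.intervalIntegrable _ _)]
      have := h (-S + n * (2 * S₀) + S₀)
      have e1 : -S + n * (2 * S₀) + S₀ - S₀ = -S + n * (2 * S₀) := by ring
      have e2 : -S + n * (2 * S₀) + S₀ + S₀ = -S + ((n + 1 : ℕ) : ℝ) * (2 * S₀) := by push_cast; ring
      rw [e1, e2] at this
      push_cast at this ⊢
      linarith
  have h1 := key ⌈S / S₀⌉₊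
  have h2 : S / S₀ ≤ ⌈S / S₀⌉₊ := Nat.le_ceil _
  have h3 : (⌈S / S₀⌉₊ : ℝ) < S / S₀ + 1 := Nat.ceil_lt_add_one (by positivity)
  have h4 : S ≤ ⌈S / S₀⌉₊ * S₀ := by rwa [div_le_iff₀ hS₀] at h2
  have h5 := int_sub_le g hg h0 (-S) S (-S) (-S + ⌈S / S₀⌉₊ * (2 * S₀)) le_rfl (by linarith) (by linarith)
  nlinarith

lemma var_w (a : ℝ) (ha : 0 < a) (ν : ℕ) (hν : 1 ≤ ν) :
    |1 / ((ν : ℝ) * √ν) * Real.exp (-(a / ν)) - 1 / (((ν + 1 : ℕ) : ℝ) * √((ν + 1 : ℕ) : ℝ)) * Real.exp (-(a / ((ν + 1 : ℕ) : ℝ)))|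
      ≤ 6 * ((ν : ℝ) ^ (-(5/2) : ℝ) * Real.exp (-(a / 4 / ν))) := by
  have hx1 : (1:ℝ) ≤ ν := by exact_mod_cast hν
  push_cast
  set x : ℝ := (ν : ℝ) with hx
  have hx0 : 0 < x := by linarith
  have hs : 0 < √x := Real.sqrt_pos.mpr hx0
  have hs' : 0 < √(x + 1) := Real.sqrt_pos.mpr (by linarith)
  have ew : x ^ (-(5/2) : ℝ) = 1 / (x * √x) * (1 / x) := by
    rw [w_eq_rpow x hx0, ← Real.rpow_neg_one x |>.trans (one_div x).symm, ← Real.rpow_add hx0]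
    norm_num
  set w := 1 / (x * √x) with hw
  set w' := 1 / ((x + 1) * √(x + 1)) with hw'
  have hw0 : 0 < w := by positivity
  have hw0' : 0 < w' := by positivity
  have hww : w' ≤ w := by
    rw [hw, hw']; gcongr <;> linarith
  have h1 : w - w' ≤ 3 / 2 * (w * (1 / x)) := by
    have e1 : w' = w * (1 + 1 / x) ^ (-(3/2) : ℝ) := by
      rw [hw, hw', w_eq_rpow x hx0, w_eq_rpow (x + 1) (by linarith), ← Real.mul_rpow hx0.le (by positivity)]
      congr 1; field_simp
    have e2 : 1 - 3 / 2 * (1 / x) ≤ (1 + 1 / x) ^ (-(3/2) : ℝ) := by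
      rw [Real.rpow_def_of_pos (by positivity)]
      have a1 := Real.log_le_sub_one_of_pos (show 0 < 1 + 1 / x by positivity)
      have a2 := Real.add_one_le_exp (Real.log (1 + 1 / x) * -(3/2))
      linarith
    rw [e1]
    nlinarith
  set E := Real.exp (-(a / x)) with hE
  set E' := Real.exp (-(a / (x + 1))) with hE'
  set E4 := Real.exp (-(a / 4 / x)) with hE4
  have hE0 : 0 < E := Real.exp_pos _
  have hE0' : 0 < E' := Real.exp_pos _
  have hE40 : 0 < E4 := Real.exp_pos _
  have b1 : E ≤ E4 := by
    rw [hE, hE4]; gcongr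
    linarith
  have b2 : E ≤ E' := by
    rw [hE, hE']; gcongr; linarith
  have b3 : E' - E ≤ 4 * (E4 * (1 / x)) := by
    have c1 : E = E' * Real.exp (-(a / (x * (x + 1)))) := by
      rw [hE, hE', ← Real.exp_add]; congr 1; field_simp; ring
    have c2 := Real.add_one_le_exp (-(a / (x * (x + 1))))
    have c3 : E' - E ≤ E' * (a / (x * (x + 1))) := by rw [c1]; nlinarith
    have c4 : a / (x * (x + 1)) ≤ a / x * (1 / x) := by
      rw [div_mul_div_comm, mul_one]; gcongr; linarith
    have c5 : E' ≤ E4 * E4 := by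
      rw [hE', hE4, ← Real.exp_add]
      gcongr
      have : a / (2 * x) ≤ a / (x + 1) := by gcongr; linarith
      have e : a / (2 * x) = a / 4 / x + a / 4 / x := by field_simp; ring
      linarith
    have c6 : E4 * (a / x) ≤ 4 := by
      have := Real.add_one_le_exp (a / 4 / x)
      have e : a / x = 4 * (a / 4 / x) := by field_simp
      rw [hE4, Real.exp_neg, e, inv_mul_le_iff₀ (Real.exp_pos _)]
      linarith
    calc E' - E ≤ E' * (a / (x * (x + 1))) := c3
      _ ≤ (E4 * E4) * (a / x * (1 / x)) := by gcongr
      _ = (E4 * (a / x)) * (E4 * (1 / x)) := by ring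
      _ ≤ 4 * (E4 * (1 / x)) := by gcongr
  rw [ew]
  have d1 : 0 ≤ (w - w') * E := mul_nonneg (by linarith) hE0.le
  have d2 : 0 ≤ w' * (E' - E) := mul_nonneg hw0'.le (by linarith)
  have d3 : (w - w') * E ≤ 3 / 2 * (w * (1 / x)) * E4 := by gcongr
  have d4 : w' * (E' - E) ≤ w * (4 * (E4 * (1 / x))) := by
    gcongr
  have d5 : 0 < w * (1 / x) * E4 := by positivity
  have d6 : w * E - w' * E' = (w - w') * E - w' * (E' - E) := by ring
  rw [d6, abs_le]
  constructor <;> nlinarith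

lemma var_lam (σ : ℝ) (hσ : 0 < σ) (n : ℕ) (hn : 1 ≤ n) :
    |Real.exp (-(σ * lam n)) - Real.exp (-(σ * lam (n+1)))| ≤ 3 * (σ * (1 / √n) * Real.exp (-(σ * lam n))) := by
  have hx1 : (1:ℝ) ≤ n := by exact_mod_cast hn
  have hs : 0 < √(n:ℝ) := Real.sqrt_pos.mpr (by linarith)
  have h1 : √((n + 1 : ℕ) : ℝ) - √n ≤ 1 / √n / 2 := by
    have a1 : √((n + 1 : ℕ) : ℝ) ^ 2 = n + 1 := by rw [Real.sq_sqrt (by positivity)]; push_cast; ring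
    have a2 : √(n : ℝ) ^ 2 = n := Real.sq_sqrt (by positivity)
    have a3 : √((n + 1 : ℕ) : ℝ) ≤ √n + 1 / √n / 2 := by
      apply Real.sqrt_le_iff.mpr
      constructor
      · positivity
      · have : (√(n:ℝ) + 1 / √n / 2) ^ 2 = √(n:ℝ) ^ 2 + 1 + (1 / √n / 2) ^ 2 := by field_simp; ring
        rw [this, a2]; push_cast; nlinarith [sq_nonneg (1 / √(n:ℝ) / 2)]
    linarith
  have h0 : √(n:ℝ) ≤ √((n + 1 : ℕ) : ℝ) := by apply Real.sqrt_le_sqrt; push_cast; linarith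
  have h2 : lam (n+1) - lam n ≤ 3 * (1 / √n) := by
    rw [lam_eq, lam_eq]
    have c2 := cpi_bounds.2
    have c1 := cpi_bounds.1
    calc 2 * √(2 * π) * √((n + 1 : ℕ) : ℝ) - 2 * √(2 * π) * √n = √(2 * π) * (2 * (√((n + 1 : ℕ) : ℝ) - √n)) := by ring
      _ ≤ 3 * (1 / √n) := by gcongr <;> linarith
  have h3 : lam n ≤ lam (n+1) := by
    rw [lam_eq, lam_eq]; gcongr
  have h4 : Real.exp (-(σ * lam (n+1))) = Real.exp (-(σ * lam n)) * Real.exp (-(σ * (lam (n+1) - lam n))) := by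
    rw [← Real.exp_add]; ring_nf
  have h5 := Real.add_one_le_exp (-(σ * (lam (n+1) - lam n)))
  have h6 := Real.exp_pos (-(σ * lam n))
  have h7 : Real.exp (-(σ * lam (n+1))) ≤ Real.exp (-(σ * lam n)) := by gcongr
  rw [abs_of_nonneg (by linarith), h4]
  have h8 : σ * (lam (n+1) - lam n) ≤ σ * (3 * (1 / √n)) := by gcongr
  nlinarith

lemma int_holder (F : Finset ℕ) (ψ a : ℕ → ℝ) (d : ℕ → ℝ → ℝ) (hd : ∀ n, Continuous (d n))
    (hψ : ∀ n ∈ F, 0 ≤ ψ n) (ha : ∀ n ∈ F, 0 < a n) (x y : ℝ) (hxy : x ≤ y) :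
    ∫ t in x..y, (∑ n ∈ F, ψ n * d n t) ^ 4 ≤ (∑ n ∈ F, ψ n * a n) ^ 3 * ∑ n ∈ F, ψ n * (a n ^ 3)⁻¹ * ∫ t in x..y, d n t ^ 4 := by
  have h1 : ∫ t in x..y, (∑ n ∈ F, ψ n * d n t) ^ 4 ≤ ∫ t in x..y, (∑ n ∈ F, ψ n * a n) ^ 3 * ∑ n ∈ F, ψ n * (a n ^ 3)⁻¹ * d n t ^ 4 := by
    apply intervalIntegral.integral_mono_on hxy
    · apply Continuous.intervalIntegrable; fun_prop
    · apply Continuous.intervalIntegrable; fun_prop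
    · intro t _
      exact holder4 F ψ a (fun n => d n t) hψ ha
  refine h1.trans (le_of_eq ?_)
  rw [intervalIntegral.integral_const_mul, intervalIntegral.integral_finsetSum]
  · congr 1
    apply Finset.sum_congr rfl
    intro n _
    rw [intervalIntegral.integral_const_mul]
  · intro n _
    apply Continuous.intervalIntegrable; fun_prop

def SN (N : ℕ) (t : ℝ) : ℂ := EP (Icc 1 N) (fun _ => 1) lam t
def DM (M : ℕ) (t : ℝ) : ℂ := EP (Icc 1 M) (fun _ => 1) (fun ν => 1 / (ν : ℝ)) t

lemma SN_cont (N : ℕ) : Continuous (SN N) := EP_continuous _ _ _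
lemma DM_cont (N : ℕ) : Continuous (DM N) := EP_continuous _ _ _

def HS (κ : ℝ) : Prop := ∃ C : ℝ, 0 < C ∧ ∀ N : ℕ, 1 ≤ N → ∀ T : ℝ, 0 < T →
  ∫ t in (-T)..T, ‖SN N t‖ ^ 4 ≤ C * ((N : ℝ) ^ (7/2 : ℝ) + T * (N : ℝ) ^ (2 + κ))

def HD (κ : ℝ) : Prop := ∃ C : ℝ, 0 < C ∧ ∀ M : ℕ, 1 ≤ M → ∀ T : ℝ, 0 < T →
  ∫ t in (-T)..T, ‖DM M t‖ ^ 4 ≤ C * ((M : ℝ) ^ (5 : ℝ) + T * (M : ℝ) ^ (2 + κ))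

lemma S_avg (κ : ℝ) (hκ : 0 ≤ κ) (h : HS κ) : ∃ C : ℝ, 0 < C ∧ ∀ σ : ℝ, 0 < σ → ∀ T : ℝ, 0 < T → ∀ W : ℕ,
    ∫ t in (-T)..T, (∑ n ∈ Icc 1 W, σ * (1 / √n) * Real.exp (-(σ * lam n)) * ‖SN n t‖) ^ 4
      ≤ C * (σ ^ (-7 : ℝ) + T * σ ^ (-4 - 2 * κ)) := by
  obtain ⟨C, hC, hS⟩ := h
  obtain ⟨C0, hC0, h0⟩ := expsum 0 le_rfl
  obtain ⟨C1, hC1, h1⟩ := expsum (7/2) (by norm_num)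
  obtain ⟨C2, hC2, h2⟩ := expsum (2 + κ) (by linarith)
  refine ⟨C0 ^ 3 * (C * (C1 + C2)), by positivity, fun σ hσ T hT W => ?_⟩
  set ψ : ℕ → ℝ := fun n => σ * (1 / √n) * Real.exp (-(σ * lam n)) with hψ
  have hψ0 : ∀ n ∈ Icc 1 W, 0 ≤ ψ n := fun n _ => by simp only [hψ]; positivity
  have hh := int_holder (Icc 1 W) ψ (fun _ => 1) (fun n t => ‖SN n t‖) (fun n => (SN_cont n).norm) hψ0 (fun _ _ => one_pos) (-T) T (by linarith)
  refine hh.trans ?_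
  have k0 : ∑ n ∈ Icc 1 W, ψ n * 1 ≤ C0 := by
    have := h0 σ hσ W
    simpa [hψ] using this
  have k0' : 0 ≤ ∑ n ∈ Icc 1 W, ψ n * 1 := Finset.sum_nonneg fun n hn => by simpa using hψ0 n hn
  have k1 := h1 σ hσ W
  have k2 := h2 σ hσ W
  have k3 : ∑ n ∈ Icc 1 W, ψ n * ((1:ℝ) ^ 3)⁻¹ * ∫ t in (-T)..T, ‖SN n t‖ ^ 4 ≤ C * (∑ n ∈ Icc 1 W, ψ n * (n : ℝ) ^ (7/2 : ℝ) + T * ∑ n ∈ Icc 1 W, ψ n * (n : ℝ) ^ (2 + κ)) := by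
    rw [Finset.mul_sum, ← Finset.sum_add_distrib, Finset.mul_sum]
    apply Finset.sum_le_sum
    intro n hn
    have := hS n (Finset.mem_Icc.mp hn).1 T hT
    have h3 := mul_le_mul_of_nonneg_left this (hψ0 n hn)
    calc _ = ψ n * ∫ t in (-T)..T, ‖SN n t‖ ^ 4 := by simp
      _ ≤ _ := h3
      _ = _ := by ring
  have e1 : σ ^ (-(2 * (7/2:ℝ))) = σ ^ (-7 : ℝ) := by norm_num
  have e2 : σ ^ (-(2 * (2 + κ))) = σ ^ (-4 - 2 * κ) := by congr 1; ring
  rw [e1] at k1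
  rw [e2] at k2
  have p1 : 0 < σ ^ (-7 : ℝ) := by positivity
  have p2 : 0 < σ ^ (-4 - 2 * κ) := by positivity
  have k4 : ∑ n ∈ Icc 1 W, ψ n * ((1:ℝ) ^ 3)⁻¹ * ∫ t in (-T)..T, ‖SN n t‖ ^ 4 ≤ C * (C1 + C2) * (σ ^ (-7 : ℝ) + T * σ ^ (-4 - 2 * κ)) := by
    refine k3.trans ?_
    calc _ ≤ C * (C1 * σ ^ (-7 : ℝ) + T * (C2 * σ ^ (-4 - 2 * κ))) := by gcongr
      _ ≤ _ := by
        rw [mul_assoc]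
        gcongr
        have : 0 < T * σ ^ (-4 - 2 * κ) := by positivity
        nlinarith [mul_pos hC1 this, mul_pos hC2 p1]
  have knn : 0 ≤ ∑ n ∈ Icc 1 W, ψ n * ((1:ℝ) ^ 3)⁻¹ * ∫ t in (-T)..T, ‖SN n t‖ ^ 4 :=
    Finset.sum_nonneg fun n hn => mul_nonneg (mul_nonneg (hψ0 n hn) (by positivity)) (intervalIntegral.integral_nonneg (by linarith) (fun _ _ => by positivity))
  calc _ ≤ C0 ^ 3 * (C * (C1 + C2) * (σ ^ (-7 : ℝ) + T * σ ^ (-4 - 2 * κ))) := by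
        gcongr
    _ = _ := by ring

lemma D_avg (κ : ℝ) (hκ2 : κ ≤ 2) (h : HD κ) : ∃ C : ℝ, 0 < C ∧ ∀ m : ℝ, 0 < m → ∀ T : ℝ, 0 < T → ∀ W : ℕ,
    ∫ t in (-T)..T, (∑ n ∈ Icc 1 W, (n : ℝ) ^ (-(5/2) : ℝ) * Real.exp (-(m / n)) * ‖DM n t‖) ^ 4
      ≤ C * (m ^ (-1 : ℝ) + T * m ^ (-4 + κ)) := by
  obtain ⟨C, hC, hS⟩ := h
  obtain ⟨C0, hC0, h0⟩ := powsum (1/4) (by norm_num)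
  obtain ⟨C2, hC2, h2⟩ := powsum (13/4 - κ) (by linarith)
  refine ⟨C0 ^ 3 * (C * (C0 + C2)), by positivity, fun m hm T hT W => ?_⟩
  set ψ : ℕ → ℝ := fun n => (n : ℝ) ^ (-(5/2) : ℝ) * Real.exp (-(m / n)) with hψ
  have hn0 : ∀ n ∈ Icc 1 W, (0:ℝ) < n := fun n hn => by
    have := (Finset.mem_Icc.mp hn).1; exact_mod_cast this
  have hψ0 : ∀ n ∈ Icc 1 W, 0 ≤ ψ n := fun n _ => by simp only [hψ]; positivity
  have hh := int_holder (Icc 1 W) ψ (fun n => (n:ℝ) ^ (5/4 : ℝ)) (fun n t => ‖DM n t‖) (fun n => (DM_cont n).norm) hψ0 (fun n hn => Real.rpow_pos_of_pos (hn0 n hn) _) (-T) T (by linarith)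
  refine hh.trans ?_
  have k1 := h0 m hm W
  have k2 := h2 m hm W
  have k0 : ∑ n ∈ Icc 1 W, ψ n * (n:ℝ) ^ (5/4 : ℝ) ≤ C0 * m ^ (-(1/4) : ℝ) := by
    refine le_trans (le_of_eq ?_) k1
    apply Finset.sum_congr rfl
    intro n hn
    simp only [hψ]
    rw [mul_right_comm, ← Real.rpow_add (hn0 n hn)]
    norm_num
  have k0' : 0 ≤ ∑ n ∈ Icc 1 W, ψ n * (n:ℝ) ^ (5/4 : ℝ) := Finset.sum_nonneg fun n hn => mul_nonneg (hψ0 n hn) (by positivity)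
  have k3 : ∑ n ∈ Icc 1 W, ψ n * (((n:ℝ) ^ (5/4 : ℝ)) ^ 3)⁻¹ * ∫ t in (-T)..T, ‖DM n t‖ ^ 4 ≤ C * (∑ n ∈ Icc 1 W, (n:ℝ) ^ (-1 - 1/4 : ℝ) * Real.exp (-(m / n)) + T * ∑ n ∈ Icc 1 W, (n:ℝ) ^ (-1 - (13/4 - κ)) * Real.exp (-(m / n))) := by
    rw [Finset.mul_sum, ← Finset.sum_add_distrib, Finset.mul_sum]
    apply Finset.sum_le_sum
    intro n hn
    have hp := hn0 n hn
    have := hS n (Finset.mem_Icc.mp hn).1 T hT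
    have e0 : (((n:ℝ) ^ (5/4 : ℝ)) ^ 3)⁻¹ = (n:ℝ) ^ (-(15/4) : ℝ) := by
      rw [← Real.rpow_natCast, ← Real.rpow_mul hp.le, ← Real.rpow_neg hp.le]; norm_num
    have h3 := mul_le_mul_of_nonneg_left this (mul_nonneg (hψ0 n hn) (show 0 ≤ (n:ℝ) ^ (-(15/4) : ℝ) by positivity))
    rw [e0]
    refine h3.trans (le_of_eq ?_)
    have e1 : (n:ℝ) ^ (-1 - 1/4 : ℝ) = (n:ℝ) ^ (-(5/2) : ℝ) * (n:ℝ) ^ (-(15/4) : ℝ) * (n:ℝ) ^ (5 : ℝ) := by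
      rw [← Real.rpow_add hp, ← Real.rpow_add hp]; norm_num
    have e2 : (n:ℝ) ^ (-1 - (13/4 - κ)) = (n:ℝ) ^ (-(5/2) : ℝ) * (n:ℝ) ^ (-(15/4) : ℝ) * (n:ℝ) ^ (2 + κ) := by
      rw [← Real.rpow_add hp, ← Real.rpow_add hp]; congr 1; ring
    rw [e1, e2]
    simp only [hψ]
    ring
  have p1 : 0 < m ^ (-(1/4) : ℝ) := by positivity
  have p2 : 0 < m ^ (-(13/4 - κ)) := by positivity
  have k4 : ∑ n ∈ Icc 1 W, ψ n * (((n:ℝ) ^ (5/4 : ℝ)) ^ 3)⁻¹ * ∫ t in (-T)..T, ‖DM n t‖ ^ 4 ≤ C * (C0 + C2) * (m ^ (-(1/4) : ℝ) + T * m ^ (-(13/4 - κ))) := by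
    refine k3.trans ?_
    calc _ ≤ C * (C0 * m ^ (-(1/4) : ℝ) + T * (C2 * m ^ (-(13/4 - κ)))) := by gcongr
      _ ≤ _ := by
        rw [mul_assoc]
        gcongr
        have : 0 < T * m ^ (-(13/4 - κ)) := by positivity
        nlinarith [mul_pos hC0 this, mul_pos hC2 p1]
  have knn : 0 ≤ ∑ n ∈ Icc 1 W, ψ n * (((n:ℝ) ^ (5/4 : ℝ)) ^ 3)⁻¹ * ∫ t in (-T)..T, ‖DM n t‖ ^ 4 :=
    Finset.sum_nonneg fun n hn => mul_nonneg (mul_nonneg (hψ0 n hn) (by positivity)) (intervalIntegral.integral_nonneg (by linarith) (fun _ _ => by positivity))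
  calc _ ≤ (C0 * m ^ (-(1/4) : ℝ)) ^ 3 * (C * (C0 + C2) * (m ^ (-(1/4) : ℝ) + T * m ^ (-(13/4 - κ)))) := by
        gcongr
    _ = C0 ^ 3 * (C * (C0 + C2)) * ((m ^ (-(1/4) : ℝ)) ^ 3 * m ^ (-(1/4) : ℝ) + T * ((m ^ (-(1/4) : ℝ)) ^ 3 * m ^ (-(13/4 - κ)))) := by ring
    _ = _ := by
      have e : (m ^ (-(1/4) : ℝ)) ^ 3 = m ^ (-(3/4) : ℝ) := by
        rw [← Real.rpow_natCast, ← Real.rpow_mul hm.le]; norm_num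
      rw [e, ← Real.rpow_add hm, ← Real.rpow_add hm]
      congr 4
      · norm_num
      · ring

def Bt (a s : ℝ) (ν : ℕ) : ℂ := ((1 / ((ν : ℝ) * √(ν : ℝ)) * Real.exp (-(a / ν)) : ℝ) : ℂ) * Complex.exp (Complex.I * ((s * (1 / (ν : ℝ)) : ℝ) : ℂ))
def Ft (σ τ : ℝ) (n : ℕ) : ℂ := ((Real.exp (-(σ * lam n)) : ℝ) : ℂ) * Complex.exp (Complex.I * ((τ * lam n : ℝ) : ℂ))

lemma norm_expI (x : ℝ) : ‖Complex.exp (Complex.I * (x : ℂ))‖ = 1 := by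
  rw [mul_comm]; exact Complex.norm_exp_ofReal_mul_I x

lemma Ft_norm (σ τ : ℝ) (n : ℕ) : ‖Ft σ τ n‖ = Real.exp (-(σ * lam n)) := by
  rw [Ft, norm_mul, norm_expI, mul_one, Complex.norm_real, Real.norm_of_nonneg (Real.exp_pos _).le]

lemma Bt_norm (a s : ℝ) (ν : ℕ) : ‖Bt a s ν‖ = 1 / ((ν : ℝ) * √(ν : ℝ)) * Real.exp (-(a / ν)) := by
  rw [Bt, norm_mul, norm_expI, mul_one, Complex.norm_real, Real.norm_of_nonneg (by positivity)]

lemma Bt_norm_le (a s : ℝ) (ha : 0 ≤ a) (ν : ℕ) : ‖Bt a s ν‖ ≤ 1 / ((ν : ℝ) * √(ν : ℝ)) := by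
  rw [Bt_norm]
  apply mul_le_of_le_one_right (by positivity)
  rw [Real.exp_le_one_iff]
  have : 0 ≤ a / ν := by positivity
  linarith

lemma zz_norm_sq (τ σ : ℝ) : ‖zz τ σ‖ ^ 2 = τ ^ 2 + σ ^ 2 := by
  rw [← norm_pow, zz_sq]
  have h : (((2*τ*σ:ℝ):ℂ) - ((τ^2-σ^2:ℝ):ℂ)*Complex.I) = Complex.mk (2*τ*σ) (-(τ^2-σ^2)) := by
    apply Complex.ext <;> simp [pow_two]
  rw [h, Complex.norm_def, Complex.normSq_mk]
  rw [Real.sqrt_eq_iff_mul_self_eq (by nlinarith [sq_nonneg (2*τ*σ), sq_nonneg (τ^2-σ^2)]) (by positivity)]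
  ring

lemma key2 : ∃ C : ℝ, 0 < C ∧ ∀ τ σ : ℝ, 0 < τ → 0 < σ → ∃ R : ℂ, ‖R‖ ≤ C / τ ^ 2 ∧
    ∑' n : ℕ, Bt (2 * τ * σ) (τ ^ 2 - σ ^ 2) (n + 1) = ((√π : ℝ) : ℂ) / zz τ σ * (1 + ∑' n : ℕ, Ft σ τ (n + 1) + R) := by
  obtain ⟨C, hC, h⟩ := explam_tsum
  refine ⟨C, hC, fun τ σ hτ hσ => ⟨∑' n : ℕ, Complex.exp (-((τ + σ * Complex.I) * lam (n+1))), ?_, ?_⟩⟩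
  · refine le_trans ?_ (h τ hτ)
    have e : ∀ n : ℕ, ‖Complex.exp (-((τ + σ * Complex.I) * lam (n+1)))‖ = Real.exp (-(τ * lam (n+1))) := by
      intro n
      rw [Complex.norm_exp]; congr 1; simp
    have := norm_tsum_le_tsum_norm (f := fun n : ℕ => Complex.exp (-((τ + σ * Complex.I) * lam (n+1)))) (by
      simp only [e]; exact summable_exp_lam τ hτ)
    simpa only [e] using this
  · have k := key_identity τ σ hτ hσ
    have e1 : ∀ n : ℕ, Bt (2 * τ * σ) (τ ^ 2 - σ ^ 2) (n + 1) = ((1/(((n+1:ℕ):ℝ)*√((n+1:ℕ):ℝ)):ℝ):ℂ) * Complex.exp (-(zz τ σ^2/(((n+1:ℕ):ℝ):ℂ))) := by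
      intro n
      rw [Bt, zz_sq, Complex.ofReal_mul, mul_assoc, Complex.ofReal_exp, ← Complex.exp_add]
      congr 2
      push_cast
      ring
    have e2 : ∀ n : ℕ, Ft σ τ (n + 1) = Complex.exp (-((σ-τ*Complex.I)*lam (n+1))) := by
      intro n
      rw [Ft, Complex.ofReal_exp, ← Complex.exp_add]
      congr 1
      push_cast
      ring
    simp only [e1, e2]
    exact k

lemma DM_le (M : ℕ) (s : ℝ) : ‖DM M s‖ ≤ M := by
  rw [DM, EP]
  refine (norm_sum_le _ _).trans ?_
  simp only [norm_mul, norm_one, one_mul, norm_expI]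
  simp

lemma SN_le (M : ℕ) (s : ℝ) : ‖SN M s‖ ≤ M := by
  rw [SN, EP]
  refine (norm_sum_le _ _).trans ?_
  simp only [norm_mul, norm_one, one_mul, norm_expI]
  simp

lemma B_abel (a : ℝ) (ha : 0 < a) (s : ℝ) (W : ℕ) : ‖∑ ν ∈ Icc 1 W, Bt a s ν‖ ≤
    6 * ∑ ν ∈ Icc 1 W, (ν : ℝ) ^ (-(5/2) : ℝ) * Real.exp (-(a / 4 / ν)) * ‖DM ν s‖ + 1 / √((W + 1 : ℕ) : ℝ) := by
  have h := abel_bd (fun ν : ℕ => 1 / ((ν : ℝ) * √(ν : ℝ)) * Real.exp (-(a / ν))) (fun ν : ℕ => 6 * ((ν : ℝ) ^ (-(5/2) : ℝ) * Real.exp (-(a / 4 / ν))))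
    (fun ν => Complex.exp (Complex.I * ((s * (1 / (ν : ℝ)) : ℝ) : ℂ))) W (fun n hn => var_w a ha n hn)
  have hD : ∀ n : ℕ, DM n s = ∑ k ∈ Icc 1 n, Complex.exp (Complex.I * ((s * (1 / (k : ℝ)) : ℝ) : ℂ)) := by
    intro n; simp [DM, EP]
  simp only [← hD] at h
  refine h.trans (add_le_add ?_ ?_)
  · rw [Finset.mul_sum]
    apply le_of_eq
    apply Finset.sum_congr rfl
    intro n _; ring
  · rw [abs_of_nonneg (by positivity)]
    have h1 := DM_le W s
    have hp : (0:ℝ) < ((W + 1 : ℕ) : ℝ) := by positivity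
    have h2 : Real.exp (-(a / ((W + 1 : ℕ) : ℝ))) ≤ 1 := by
      rw [Real.exp_le_one_iff]
      have : 0 ≤ a / ((W + 1 : ℕ) : ℝ) := by positivity
      linarith
    have h3 : ‖DM W s‖ ≤ ((W + 1 : ℕ) : ℝ) := h1.trans (by push_cast; linarith)
    calc 1 / (((W + 1 : ℕ) : ℝ) * √((W + 1 : ℕ) : ℝ)) * Real.exp (-(a / ((W + 1 : ℕ) : ℝ))) * ‖DM W s‖ ≤ 1 / (((W + 1 : ℕ) : ℝ) * √((W + 1 : ℕ) : ℝ)) * 1 * ((W + 1 : ℕ) : ℝ) := by gcongr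
      _ = 1 / √((W + 1 : ℕ) : ℝ) := by field_simp

/-- a uniform cut for the Lévy side -/
lemma B_cut (δ : ℝ) (hδ : 0 < δ) : ∃ W : ℕ, ∀ a m s : ℝ, 0 < m → 4 * m ≤ a →
    ‖∑' n : ℕ, Bt a s (n + 1)‖ ≤ δ + 6 * ∑ ν ∈ Icc 1 W, (ν : ℝ) ^ (-(5/2) : ℝ) * Real.exp (-(m / ν)) * ‖DM ν s‖ := by
  obtain ⟨V0, hV⟩ := tail_lemma _ summable_w (δ / 2) (by linarith)
  obtain ⟨W1, hW1⟩ := exists_nat_ge ((2 / δ) ^ 2)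
  refine ⟨max V0 W1, fun a m s hm ham => ?_⟩
  have ha : 0 < a := by linarith
  set W := max V0 W1 with hW
  have h1 := hV W (le_max_left _ _) (fun n => Bt a s (n + 1)) (fun n => Bt_norm_le a s ha.le _)
  rw [← sum_Icc_range] at h1
  have h2 := B_abel a ha s W
  have h3 : 1 / √((W + 1 : ℕ) : ℝ) ≤ δ / 2 := by
    have : 2 / δ ≤ √((W + 1 : ℕ) : ℝ) := by
      apply Real.le_sqrt_of_sq_le
      have : (W1 : ℝ) ≤ W := by exact_mod_cast le_max_right V0 W1
      push_cast; linarith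
    have h0 : 0 < 2 / δ := by positivity
    rw [show δ / 2 = 1 / (2 / δ) by field_simp]
    gcongr
  have h4 : ∑ ν ∈ Icc 1 W, (ν : ℝ) ^ (-(5/2) : ℝ) * Real.exp (-(a / 4 / ν)) * ‖DM ν s‖ ≤ ∑ ν ∈ Icc 1 W, (ν : ℝ) ^ (-(5/2) : ℝ) * Real.exp (-(m / ν)) * ‖DM ν s‖ := by
    apply Finset.sum_le_sum
    intro n _
    gcongr
    linarith
  have h5 := norm_le_norm_add_norm_sub' (∑' n : ℕ, Bt a s (n + 1)) (∑ ν ∈ Icc 1 W, Bt a s ν)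
  linarith

lemma comp_sq (g : ℝ → ℝ) (hg : Continuous g) (h0 : ∀ x, 0 ≤ g x) (Y σ : ℝ) (hY : 0 < Y) (hσ : σ ^ 2 ≤ Y ^ 2) :
    ∫ τ in Y..(2 * Y), g (τ ^ 2 - σ ^ 2) ≤ 1 / (2 * Y) * ∫ s in (-(4 * Y ^ 2))..(4 * Y ^ 2), g s := by
  have h1 : ∫ τ in Y..(2 * Y), g (τ ^ 2 - σ ^ 2) ≤ ∫ τ in Y..(2 * Y), 1 / (2 * Y) * ((g ∘ fun τ => τ ^ 2 - σ ^ 2) τ * (2 * τ)) := by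
    apply intervalIntegral.integral_mono_on (by linarith)
    · apply Continuous.intervalIntegrable; fun_prop
    · apply Continuous.intervalIntegrable; fun_prop
    · intro t ht
      have := h0 (t ^ 2 - σ ^ 2)
      simp only [Function.comp]
      rw [one_div, ← div_eq_inv_mul, le_div_iff₀ (by positivity)]
      have := ht.1
      gcongr
  refine h1.trans ?_
  rw [intervalIntegral.integral_const_mul, intervalIntegral.integral_comp_mul_deriv (f := fun τ => τ ^ 2 - σ ^ 2) (f' := fun τ => 2 * τ)]
  · gcongr
    apply int_sub_le g hg h0
    · nlinarith
    · nlinarith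
    · nlinarith [sq_nonneg σ]
  · intro x _
    have := (hasDerivAt_pow 2 x).sub_const (σ ^ 2)
    simpa using this
  · fun_prop
  · exact hg

def FV (σ : ℝ) (V : ℕ) (τ : ℝ) : ℂ := EP (Icc 1 V) (fun n => ((Real.exp (-(σ * lam n)) : ℝ) : ℂ)) lam τ

lemma FV_eq (σ : ℝ) (V : ℕ) (τ : ℝ) : FV σ V τ = ∑ n ∈ Icc 1 V, Ft σ τ n := rfl

lemma FV_cont (σ : ℝ) (V : ℕ) : Continuous (FV σ V) := EP_continuous _ _ _

def GV (σ : ℝ) (V : ℕ) : Prop := ∀ τ, ‖(∑' n : ℕ, Ft σ τ (n + 1)) - FV σ V τ‖ ≤ 1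

lemma GV_exists (σ : ℝ) (hσ : 0 < σ) (N : ℕ) : ∃ V, N ≤ V ∧ GV σ V := by
  obtain ⟨V0, hV⟩ := tail_lemma _ (summable_exp_lam σ hσ) 1 one_pos
  refine ⟨max N V0, le_max_left _ _, fun τ => ?_⟩
  have := hV (max N V0) (le_max_right _ _) (fun n => Ft σ τ (n + 1)) (fun n => (Ft_norm σ τ _).le)
  rw [FV_eq, sum_Icc_range]
  exact this

lemma one_le_sqrt_pi : 1 ≤ √π := by
  rw [Real.one_le_sqrt]; linarith [Real.pi_gt_three]

lemma F_point : ∃ C : ℝ, 0 < C ∧ ∀ σ τ : ℝ, 0 < σ → 0 < τ → ∀ V : ℕ, GV σ V →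
    ‖FV σ V τ‖ ≤ 2 + C / τ ^ 2 + ‖zz τ σ‖ * ‖∑' n : ℕ, Bt (2 * τ * σ) (τ ^ 2 - σ ^ 2) (n + 1)‖ := by
  obtain ⟨C, hC, h⟩ := key2
  refine ⟨C, hC, fun σ τ hσ hτ V hV => ?_⟩
  obtain ⟨R, hR, hk⟩ := h τ σ hτ hσ
  have hz : 0 < ‖zz τ σ‖ := by
    have := zz_norm_sq τ σ
    have h2 := norm_nonneg (zz τ σ)
    rcases h2.eq_or_lt with h3 | h3
    · rw [← h3] at this; nlinarith
    · exact h3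
  have hz' : zz τ σ ≠ 0 := norm_pos_iff.mp hz
  have hp : ((√π : ℝ) : ℂ) ≠ 0 := by
    have := one_le_sqrt_pi
    exact_mod_cast (by linarith : (√π : ℝ) ≠ 0)
  set B := ∑' n : ℕ, Bt (2 * τ * σ) (τ ^ 2 - σ ^ 2) (n + 1)
  have e : ∑' n : ℕ, Ft σ τ (n + 1) = zz τ σ / ((√π : ℝ) : ℂ) * B - 1 - R := by
    rw [hk]; field_simp; ring
  have h1 := hV τ
  have h2 : ‖zz τ σ / ((√π : ℝ) : ℂ) * B‖ ≤ ‖zz τ σ‖ * ‖B‖ := by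
    rw [norm_mul, norm_div, Complex.norm_real, Real.norm_of_nonneg (by positivity)]
    gcongr
    apply div_le_self hz.le one_le_sqrt_pi
  have h3 := norm_le_norm_add_norm_sub (∑' n : ℕ, Ft σ τ (n + 1)) (FV σ V τ)
  have h4 : ‖∑' n : ℕ, Ft σ τ (n + 1)‖ ≤ ‖zz τ σ / ((√π : ℝ) : ℂ) * B‖ + 1 + ‖R‖ := by
    rw [e]
    refine (norm_sub_le _ _).trans ?_
    gcongr
    refine (norm_sub_le _ _).trans ?_
    simp
  linarith

lemma pow4_add (a b : ℝ) : (a + b) ^ 4 ≤ 8 * (a ^ 4 + b ^ 4) := by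
  nlinarith [sq_nonneg (a - b), sq_nonneg (a + b), sq_nonneg (a^2 - b^2), mul_nonneg (sq_nonneg (a - b)) (sq_nonneg (a + b)), mul_nonneg (sq_nonneg (a-b)) (sq_nonneg a), mul_nonneg (sq_nonneg (a-b)) (sq_nonneg b), mul_nonneg (sq_nonneg (a-b)) (sq_nonneg (a-b))]

lemma int_affine (f : ℝ → ℝ) (hf : Continuous f) (A B x y : ℝ) :
    ∫ t in x..y, (A + B * f t) = A * (y - x) + B * ∫ t in x..y, f t := by
  rw [intervalIntegral.integral_add (by simp) (by apply Continuous.intervalIntegrable; fun_prop), intervalIntegral.integral_const, intervalIntegral.integral_const_mul]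
  simp only [smul_eq_mul]; ring

lemma S_dyadic (κ : ℝ) (hκ : 0 ≤ κ) (hκ2 : κ ≤ 2) (h : HD κ) : ∃ C : ℝ, 0 < C ∧ ∀ σ Y : ℝ, 0 < σ → σ ≤ 1 → 1 ≤ Y → ∀ V : ℕ, GV σ V →
    ∫ τ in Y..(2 * Y), ‖FV σ V τ‖ ^ 4 ≤ C * (Y + Y ^ 2 / σ + Y ^ (1 + κ) * σ ^ (κ - 4)) := by
  obtain ⟨C, hC, hF⟩ := F_point
  obtain ⟨D, hD, hA⟩ := D_avg κ hκ2 h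
  refine ⟨8 * (3 + C) ^ 4 + 8 * 18 ^ 4 * (D * (1 + 32)), by positivity, fun σ Y hσ hσ1 hY V hV => ?_⟩
  have hY0 : 0 < Y := by linarith
  obtain ⟨W, hW⟩ := B_cut (1 / (3 * Y)) (by positivity)
  set m := Y * σ / 2 with hm
  have hm0 : 0 < m := by positivity
  set Q : ℝ → ℝ := fun s => ∑ ν ∈ Icc 1 W, (ν : ℝ) ^ (-(5/2) : ℝ) * Real.exp (-(m / ν)) * ‖DM ν s‖ with hQ
  have hQc : Continuous Q := by
    rw [hQ]
    apply continuous_finsetSum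
    intro n _
    exact continuous_const.mul (DM_cont n).norm
  have hpt : ∀ τ ∈ Set.Icc Y (2 * Y), ‖FV σ V τ‖ ^ 4 ≤ 8 * (3 + C) ^ 4 + 8 * 18 ^ 4 * Y ^ 4 * (Q (τ ^ 2 - σ ^ 2)) ^ 4 := by
    intro τ ht
    obtain ⟨t1, t2⟩ := ht
    have hτ0 : 0 < τ := by linarith
    have h1 := hF σ τ hσ hτ0 V hV
    have h2 := hW (2 * τ * σ) m (τ ^ 2 - σ ^ 2) hm0 (by rw [hm]; nlinarith)
    have h3 : C / τ ^ 2 ≤ C := by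
      apply div_le_self hC.le
      nlinarith
    have h4 : ‖zz τ σ‖ ≤ 3 * Y := by
      apply abs_le_of_sq_le_sq' _ (by positivity) |>.2
      rw [zz_norm_sq]; nlinarith
    have h5 : ‖zz τ σ‖ * ‖∑' n : ℕ, Bt (2 * τ * σ) (τ ^ 2 - σ ^ 2) (n + 1)‖ ≤ (3 * Y) * (1 / (3 * Y) + 6 * Q (τ ^ 2 - σ ^ 2)) := by
      gcongr
    have h6 : (3 * Y) * (1 / (3 * Y) + 6 * Q (τ ^ 2 - σ ^ 2)) = 1 + 18 * Y * Q (τ ^ 2 - σ ^ 2) := by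
      field_simp; ring
    have h7 : ‖FV σ V τ‖ ≤ (3 + C) + 18 * Y * Q (τ ^ 2 - σ ^ 2) := by linarith
    calc ‖FV σ V τ‖ ^ 4 ≤ ((3 + C) + 18 * Y * Q (τ ^ 2 - σ ^ 2)) ^ 4 := by gcongr
      _ ≤ 8 * ((3 + C) ^ 4 + (18 * Y * Q (τ ^ 2 - σ ^ 2)) ^ 4) := pow4_add _ _
      _ = _ := by ring
  have hcs := comp_sq (fun s => Q s ^ 4) (hQc.pow 4) (fun s => by positivity) Y σ hY0 (by nlinarith)
  have hav := hA m hm0 (4 * Y ^ 2) (by positivity) W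
  have hI : ∫ τ in Y..(2 * Y), ‖FV σ V τ‖ ^ 4 ≤ 8 * (3 + C) ^ 4 * Y + 8 * 18 ^ 4 * Y ^ 4 * ∫ τ in Y..(2 * Y), (Q (τ ^ 2 - σ ^ 2)) ^ 4 := by
    have hc2 : Continuous fun τ : ℝ => (Q (τ ^ 2 - σ ^ 2)) ^ 4 := by fun_prop
    calc _ ≤ ∫ τ in Y..(2 * Y), (8 * (3 + C) ^ 4 + 8 * 18 ^ 4 * Y ^ 4 * (Q (τ ^ 2 - σ ^ 2)) ^ 4) := by
          apply intervalIntegral.integral_mono_on (by linarith) _ _ hpt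
          · exact ((FV_cont σ V).norm.pow 4).intervalIntegrable _ _
          · apply Continuous.intervalIntegrable; fun_prop
      _ = _ := by
          rw [int_affine _ hc2]
          ring
  refine hI.trans ?_
  have e1 : Y ^ 4 * (1 / (2 * Y) * (D * (m ^ (-1 : ℝ) + 4 * Y ^ 2 * m ^ (-4 + κ)))) = D * (Y ^ 2 / σ + (2:ℝ)^(5 - κ) * (Y ^ (1 + κ) * σ ^ (κ - 4))) := by
    have a1 : m ^ (-1 : ℝ) = 2 / (Y * σ) := by rw [Real.rpow_neg_one, hm]; field_simp
    have a2 : m ^ (-4 + κ) = Y ^ (-4 + κ) * σ ^ (κ - 4) * 2 ^ (4 - κ) := by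
      rw [hm, Real.div_rpow (by positivity) (by norm_num), Real.mul_rpow hY0.le hσ.le, show -4 + κ = κ - 4 by ring, show (4 - κ) = -(κ - 4) by ring, Real.rpow_neg (by norm_num)]
      rfl
    have a3 : Y ^ (1 + κ) = Y ^ 5 * Y ^ (-4 + κ) := by
      rw [← Real.rpow_natCast, ← Real.rpow_add hY0]; congr 1; push_cast; ring
    have a4 : (2:ℝ)^(5 - κ) = 2 * 2 ^ (4 - κ) := by
      rw [show 5 - κ = 1 + (4 - κ) by ring, Real.rpow_add (by norm_num), Real.rpow_one]
    rw [a1, a2, a3, a4]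
    field_simp
    ring
  have e2 : (2:ℝ)^(5 - κ) ≤ 32 := by
    calc (2:ℝ)^(5 - κ) ≤ 2 ^ (5:ℝ) := by
          apply Real.rpow_le_rpow_of_exponent_le (by norm_num); linarith
      _ = 32 := by norm_num
  set X := Y ^ (1 + κ) * σ ^ (κ - 4) with hX
  have hX0 : 0 < X := by positivity
  have hYs : 0 < Y ^ 2 / σ := by positivity
  have e3 : Y ^ 4 * ∫ τ in Y..(2 * Y), (Q (τ ^ 2 - σ ^ 2)) ^ 4 ≤ D * (Y ^ 2 / σ + 32 * X) := by
    calc _ ≤ Y ^ 4 * (1 / (2 * Y) * (D * (m ^ (-1 : ℝ) + 4 * Y ^ 2 * m ^ (-4 + κ)))) := by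
          gcongr
          refine hcs.trans ?_
          gcongr
      _ = _ := e1
      _ ≤ _ := by gcongr
  have : D * (Y ^ 2 / σ + 32 * X) ≤ D * (1 + 32) * (Y + Y ^ 2 / σ + X) := by
    rw [mul_assoc]; gcongr; nlinarith
  have h9 : 0 ≤ (3 + C) ^ 4 := by positivity
  calc _ = 8 * (3 + C) ^ 4 * Y + 8 * 18 ^ 4 * (Y ^ 4 * ∫ τ in Y..(2 * Y), (Q (τ ^ 2 - σ ^ 2)) ^ 4) := by ring
    _ ≤ 8 * (3 + C) ^ 4 * (Y + Y ^ 2 / σ + X) + 8 * 18 ^ 4 * (D * (1 + 32) * (Y + Y ^ 2 / σ + X)) := by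
        refine add_le_add (mul_le_mul_of_nonneg_left (by linarith) (by positivity)) (mul_le_mul_of_nonneg_left (e3.trans this) (by norm_num))
    _ = _ := by ring

lemma F_triv : ∃ C : ℝ, 0 < C ∧ ∀ σ τ : ℝ, 0 < σ → ∀ V : ℕ, ‖FV σ V τ‖ ≤ C / σ ^ 2 := by
  obtain ⟨C, hC, h⟩ := explam
  refine ⟨C, hC, fun σ τ hσ V => ?_⟩
  refine le_trans ?_ (h σ hσ V)
  rw [FV_eq]
  refine (norm_sum_le _ _).trans (le_of_eq ?_)
  simp only [Ft_norm]

lemma F_low : ∃ C : ℝ, 0 < C ∧ ∀ σ τ : ℝ, 0 < σ → σ ≤ 1 → 0 < τ → τ ≤ 1 → ∀ V : ℕ, GV σ V → ‖FV σ V τ‖ ≤ C / τ ^ 2 := by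
  obtain ⟨C, hC, hF⟩ := F_point
  set A : ℝ := ∑' n : ℕ, 1/(((n+1:ℕ):ℝ)*√((n+1:ℕ):ℝ)) with hA
  have hA0 : 0 ≤ A := tsum_nonneg fun n => by positivity
  refine ⟨2 + C + 2 * A, by positivity, fun σ τ hσ hσ1 hτ hτ1 V hV => ?_⟩
  have h1 := hF σ τ hσ hτ V hV
  have h4 : ‖zz τ σ‖ ≤ 2 := by
    apply abs_le_of_sq_le_sq' _ (by positivity) |>.2
    rw [zz_norm_sq]; nlinarith
  have h5 : ‖∑' n : ℕ, Bt (2 * τ * σ) (τ ^ 2 - σ ^ 2) (n + 1)‖ ≤ A := by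
    apply tsum_of_norm_bounded summable_w.hasSum
    intro n
    exact Bt_norm_le _ _ (by positivity) _
  have h6 : ‖zz τ σ‖ * ‖∑' n : ℕ, Bt (2 * τ * σ) (τ ^ 2 - σ ^ 2) (n + 1)‖ ≤ 2 * A := by gcongr
  have h7 : 2 + 2 * A ≤ (2 + 2 * A) / τ ^ 2 := by
    apply le_div_self (by positivity) (by positivity)
    nlinarith
  calc _ ≤ (2 + 2 * A) + C / τ ^ 2 := by linarith
    _ ≤ (2 + 2 * A) / τ ^ 2 + C / τ ^ 2 := by linarith
    _ = _ := by ring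

lemma int_neg8 (a : ℝ) (ha : 0 < a) (ha1 : a ≤ 1) : ∫ t in a..1, t ^ (-8 : ℝ) ≤ a ^ (-7 : ℝ) := by
  rw [integral_rpow (Or.inr ⟨by norm_num, by rw [Set.uIcc_of_le ha1]; intro h; exact absurd h.1 (not_le.mpr ha)⟩)]
  norm_num
  have : 0 < (a ^ 7)⁻¹ := by positivity
  linarith

lemma S_low : ∃ C : ℝ, 0 < C ∧ ∀ σ : ℝ, 0 < σ → σ ≤ 1 → ∀ V : ℕ, GV σ V → ∫ τ in (0:ℝ)..1, ‖FV σ V τ‖ ^ 4 ≤ C * σ ^ (-7 : ℝ) := by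
  obtain ⟨C, hC, h⟩ := F_triv
  obtain ⟨C', hC', h'⟩ := F_low
  refine ⟨C ^ 4 + C' ^ 4, by positivity, fun σ hσ hσ1 V hV => ?_⟩
  have hc : Continuous fun τ => ‖FV σ V τ‖ ^ 4 := (FV_cont σ V).norm.pow 4
  rw [← intervalIntegral.integral_add_adjacent_intervals (b := σ) (hc.intervalIntegrable _ _) (hc.intervalIntegrable _ _)]
  have p7 : σ ^ (-7 : ℝ) = (σ ^ 7)⁻¹ := by rw [Real.rpow_neg hσ.le]; norm_cast
  have i1 : ∫ τ in (0:ℝ)..σ, ‖FV σ V τ‖ ^ 4 ≤ C ^ 4 * σ ^ (-7 : ℝ) := by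
    calc _ ≤ ∫ τ in (0:ℝ)..σ, (C / σ ^ 2) ^ 4 := by
          apply intervalIntegral.integral_mono_on hσ.le (hc.intervalIntegrable _ _) (by simp)
          intro t _
          have := h σ t hσ V
          gcongr
      _ = _ := by
          rw [intervalIntegral.integral_const, p7, smul_eq_mul]; field_simp; ring
  have i2 : ∫ τ in σ..1, ‖FV σ V τ‖ ^ 4 ≤ C' ^ 4 * σ ^ (-7 : ℝ) := by
    calc _ ≤ ∫ τ in σ..1, C' ^ 4 * τ ^ (-8 : ℝ) := by
          apply intervalIntegral.integral_mono_on hσ1 (hc.intervalIntegrable _ _)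
          · apply ContinuousOn.intervalIntegrable
            rw [Set.uIcc_of_le hσ1]
            apply ContinuousOn.mul continuousOn_const
            apply ContinuousOn.rpow_const continuousOn_id
            intro x hx
            left
            have := hx.1
            simp only [id]; linarith
          intro t ht
          have ht0 : 0 < t := by linarith [ht.1]
          have := h' σ t hσ hσ1 ht0 ht.2 V hV
          calc ‖FV σ V t‖ ^ 4 ≤ (C' / t ^ 2) ^ 4 := by gcongr
            _ = _ := by
              rw [Real.rpow_neg ht0.le, div_pow, ← pow_mul, div_eq_mul_inv]; norm_cast
      _ ≤ _ := by
          rw [intervalIntegral.integral_const_mul]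
          gcongr
          exact int_neg8 σ hσ hσ1
  linarith

lemma S_half (κ κ' : ℝ) (hκ : 0 ≤ κ) (hκ2 : κ ≤ 2) (hκ' : κ' * (1 + κ) = κ) (h : HD κ) : ∃ C : ℝ, 0 < C ∧ ∀ σ : ℝ, 0 < σ → σ ≤ 1 →
    ∀ V : ℕ, GV σ V → ∫ τ in (0:ℝ)..(2 * σ ^ (-(3 - 2 * κ'))), ‖FV σ V τ‖ ^ 4 ≤ C * σ ^ (-7 : ℝ) := by
  obtain ⟨C, hC, hd⟩ := S_dyadic κ hκ hκ2 h
  obtain ⟨C', hC', h'⟩ := S_low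
  have k0 : 0 ≤ κ' := by by_contra hc; nlinarith
  have k1 : κ' ≤ 1 := by by_contra hc; nlinarith
  refine ⟨C' + C * (2 + 4 + 8), by positivity, fun σ hσ hσ1 V hV => ?_⟩
  set X := 2 * σ ^ (-(3 - 2 * κ')) with hX
  have hT1 : 1 ≤ σ ^ (-(3 - 2 * κ')) := Real.one_le_rpow_of_pos_of_le_one_of_nonpos hσ hσ1 (by linarith)
  have hX1 : 1 ≤ X := by linarith
  have hX0 : 0 < X := by linarith
  have hc : Continuous fun τ => ‖FV σ V τ‖ ^ 4 := (FV_cont σ V).norm.pow 4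
  rw [← intervalIntegral.integral_add_adjacent_intervals (b := 1) (hc.intervalIntegrable _ _) (hc.intervalIntegrable _ _)]
  have i1 := h' σ hσ hσ1 V hV
  have i2 := dyadic_up (fun τ => ‖FV σ V τ‖ ^ 4) hc (fun _ => by positivity) (C * (1 + X / σ + X ^ κ * σ ^ (κ - 4))) 0 1 X (by positivity) le_rfl one_pos (by
    intro Y hY1 hYX
    have hY0 : 0 < Y := by linarith
    refine (hd σ Y hσ hσ1 hY1 V hV).trans ?_
    rw [zero_div, add_zero, mul_assoc]
    gcongr
    have e : Y ^ (1 + κ) = Y * Y ^ κ := by rw [Real.rpow_add hY0, Real.rpow_one]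
    rw [e]
    calc Y + Y ^ 2 / σ + Y * Y ^ κ * σ ^ (κ - 4) = (1 + Y / σ + Y ^ κ * σ ^ (κ - 4)) * Y := by ring
      _ ≤ _ := by gcongr) hX1
  have e1 : X ≤ 2 * σ ^ (-7:ℝ) := by
    rw [hX]; gcongr 2 * ?_
    exact Real.rpow_le_rpow_of_exponent_ge hσ hσ1 (by linarith)
  have e2 : X / σ * X ≤ 4 * σ ^ (-7:ℝ) := by
    have a : X ≤ 2 * σ ^ (-3:ℝ) := by
      rw [hX]; gcongr 2 * ?_
      exact Real.rpow_le_rpow_of_exponent_ge hσ hσ1 (by linarith)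
    calc X / σ * X ≤ (2 * σ ^ (-3:ℝ)) / σ * (2 * σ ^ (-3:ℝ)) := by gcongr
      _ = 4 * (σ ^ (-3:ℝ) * σ ^ (-1:ℝ) * σ ^ (-3:ℝ)) := by rw [Real.rpow_neg_one]; ring
      _ = _ := by rw [← Real.rpow_add hσ, ← Real.rpow_add hσ]; norm_num
  have e3 : X ^ κ * σ ^ (κ - 4) * X ≤ 8 * σ ^ (-7:ℝ) := by
    have a : X ^ κ * X = X ^ (κ + 1) := by rw [Real.rpow_add hX0, Real.rpow_one]
    have b : X ^ (κ + 1) = 2 ^ (κ + 1) * σ ^ (-7 - (κ - 4)) := by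
      rw [hX, Real.mul_rpow (by norm_num) (by positivity), ← Real.rpow_mul hσ.le]
      congr 2
      linarith
    have c : (2:ℝ) ^ (κ + 1) ≤ 8 := by
      calc (2:ℝ)^(κ + 1) ≤ 2 ^ (3:ℝ) := by
            apply Real.rpow_le_rpow_of_exponent_le (by norm_num); linarith
        _ = 8 := by norm_num
    calc X ^ κ * σ ^ (κ - 4) * X = 2 ^ (κ + 1) * (σ ^ (-7 - (κ - 4)) * σ ^ (κ - 4)) := by
          rw [mul_right_comm, a, b]; ring
      _ = 2 ^ (κ + 1) * σ ^ (-7:ℝ) := by rw [← Real.rpow_add hσ]; congr 2; ring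
      _ ≤ _ := by gcongr
  have e4 : C * (1 + X / σ + X ^ κ * σ ^ (κ - 4)) * X = C * (X + X / σ * X + X ^ κ * σ ^ (κ - 4) * X) := by ring
  rw [e4] at i2
  have e5 : C * (X + X / σ * X + X ^ κ * σ ^ (κ - 4) * X) ≤ C * (2 * σ ^ (-7:ℝ) + 4 * σ ^ (-7:ℝ) + 8 * σ ^ (-7:ℝ)) := by gcongr
  norm_num at i2
  linarith

lemma even_int (g : ℝ → ℝ) (hg : Continuous g) (he : ∀ x, g (-x) = g x) (X : ℝ) : ∫ t in (-X)..X, g t = 2 * ∫ t in (0:ℝ)..X, g t := by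
  rw [← intervalIntegral.integral_add_adjacent_intervals (b := 0) (hg.intervalIntegrable _ _) (hg.intervalIntegrable _ _)]
  have := intervalIntegral.integral_comp_neg (f := g) (a := 0) (b := X)
  simp only [he, neg_zero] at this
  rw [← this]; ring

lemma EP_even (F : Finset ℕ) (b : ℕ → ℝ) (l : ℕ → ℝ) (t : ℝ) : ‖EP F (fun n => (b n : ℂ)) l (-t)‖ = ‖EP F (fun n => (b n : ℂ)) l t‖ := by
  rw [← Complex.norm_conj (EP F (fun n => (b n : ℂ)) l t), EP_conj]
  congr 1
  unfold EP
  apply Finset.sum_congr rfl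
  intro n _
  simp

lemma EP_smul (F : Finset ℕ) (c : ℝ) (b : ℕ → ℝ) (l : ℕ → ℝ) (t : ℝ) : EP F (fun n => ((c * b n : ℝ) : ℂ)) l t = c * EP F (fun n => (b n : ℂ)) l t := by
  unfold EP
  rw [Finset.mul_sum]
  apply Finset.sum_congr rfl
  intro n _
  push_cast; ring

lemma S_core (κ κ' : ℝ) (hκ : 0 ≤ κ) (hκ2 : κ ≤ 2) (hκ' : κ' * (1 + κ) = κ) (h : HD κ) : HS κ' := by
  obtain ⟨C, hC, hh⟩ := S_half κ κ' hκ hκ2 hκ' h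
  have hE : 0 < Real.exp 6 := Real.exp_pos _
  refine ⟨4 * Real.exp 6 ^ 4 * C, by positivity, fun N hN T hT => ?_⟩
  have hN1 : (1:ℝ) ≤ N := by exact_mod_cast hN
  have hN0 : (0:ℝ) < N := by linarith
  set σ : ℝ := (N:ℝ) ^ (-(1/2) : ℝ) with hσ
  have hσ0 : 0 < σ := by positivity
  have hσ1 : σ ≤ 1 := Real.rpow_le_one_of_one_le_of_nonpos hN1 (by norm_num)
  obtain ⟨V, hNV, hV⟩ := GV_exists σ hσ0 N
  set T0 := σ ^ (-(3 - 2 * κ')) with hT0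
  have hT0p : 0 < T0 := by positivity
  have h7 : σ ^ (-7:ℝ) = (N:ℝ) ^ (7/2 : ℝ) := by
    rw [hσ, ← Real.rpow_mul hN0.le]; norm_num
  have hT0N : T0 = (N:ℝ) ^ (3/2 - κ') := by
    rw [hT0, hσ, ← Real.rpow_mul hN0.le]; congr 1; ring
  have hhV := hh σ hσ0 hσ1 V hV
  rw [h7] at hhV
  have hSN : ∀ c : ℝ, ∫ t in (c - T0)..(c + T0), ‖SN N t‖ ^ 4 ≤ 4 * Real.exp 6 ^ 4 * C * (N:ℝ) ^ (7/2 : ℝ) := by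
    intro c
    have hm := majorant (Icc 1 N) (Icc 1 V) (Finset.Icc_subset_Icc_right hNV) (fun _ => 1) (fun n => Real.exp 6 * Real.exp (-(σ * lam n))) lam c T0 hT0p
      (fun n _ => by positivity) (by
        intro n hn
        rw [norm_one, ← Real.exp_add, Real.one_le_exp_iff]
        have hnN : (n:ℝ) ≤ N := by exact_mod_cast (Finset.mem_Icc.mp hn).2
        rw [lam_eq]
        have h1 : σ * √(n:ℝ) ≤ 1 := by
          calc σ * √(n:ℝ) ≤ σ * √(N:ℝ) := by gcongr
            _ = 1 := by rw [hσ, Real.sqrt_eq_rpow, ← Real.rpow_add hN0]; norm_num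
        have h2 := cpi_bounds.2
        have h3 : √(2 * π) * (σ * √(n:ℝ)) ≤ 3 * 1 := by gcongr
        linarith)
    refine hm.trans ?_
    have e : ∀ t, ‖EP (Icc 1 V) (fun n => ((Real.exp 6 * Real.exp (-(σ * lam n)) : ℝ) : ℂ)) lam t‖ ^ 4 = Real.exp 6 ^ 4 * ‖FV σ V t‖ ^ 4 := by
      intro t
      rw [EP_smul, norm_mul, mul_pow, Complex.norm_real, Real.norm_of_nonneg hE.le]; rfl
    simp only [e]
    rw [intervalIntegral.integral_const_mul, even_int (fun t => ‖FV σ V t‖ ^ 4) ((FV_cont σ V).norm.pow 4) (fun x => by simp only [FV]; rw [EP_even])]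
    have := mul_le_mul_of_nonneg_left hhV (by positivity : 0 ≤ 4 * Real.exp 6 ^ 4)
    calc _ = 4 * Real.exp 6 ^ 4 * ∫ τ in (0:ℝ)..(2 * T0), ‖FV σ V τ‖ ^ 4 := by ring
      _ ≤ _ := this
      _ = _ := by ring
  have hext := extension (fun t => ‖SN N t‖ ^ 4) ((SN_cont N).norm.pow 4) (fun _ => by positivity) _ T0 (by positivity) hT0p hSN T hT
  refine hext.trans (le_of_eq ?_)
  have e1 : (N:ℝ) ^ (2 + κ') = (N:ℝ) ^ (7/2 : ℝ) / T0 := by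
    rw [hT0N, ← Real.rpow_sub hN0]; congr 1; ring
  rw [e1]; ring

lemma F_abel (σ : ℝ) (hσ : 0 < σ) (τ : ℝ) (W : ℕ) : ‖∑ n ∈ Icc 1 W, Ft σ τ n‖ ≤
    3 * ∑ n ∈ Icc 1 W, σ * (1 / √n) * Real.exp (-(σ * lam n)) * ‖SN n τ‖ + Real.exp (-(σ * lam (W + 1))) * W := by
  have h := abel_bd (fun n : ℕ => Real.exp (-(σ * lam n))) (fun n : ℕ => 3 * (σ * (1 / √n) * Real.exp (-(σ * lam n))))
    (fun n => Complex.exp (Complex.I * ((τ * lam n : ℝ) : ℂ))) W (fun n hn => var_lam σ hσ n hn)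
  have hD : ∀ n : ℕ, SN n τ = ∑ k ∈ Icc 1 n, Complex.exp (Complex.I * ((τ * lam k : ℝ) : ℂ)) := by
    intro n; simp [SN, EP]
  simp only [← hD] at h
  refine h.trans (add_le_add ?_ ?_)
  · rw [Finset.mul_sum]
    apply le_of_eq
    apply Finset.sum_congr rfl
    intro n _; ring
  · rw [abs_of_nonneg (by positivity)]
    gcongr
    exact SN_le W τ

lemma F_cut (σ0 : ℝ) (hσ0 : 0 < σ0) : ∃ W : ℕ, ∀ σ τ : ℝ, σ0 ≤ σ → σ ≤ 2 * σ0 →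
    ‖∑' n : ℕ, Ft σ τ (n + 1)‖ ≤ 2 + 6 * ∑ n ∈ Icc 1 W, σ0 * (1 / √n) * Real.exp (-(σ0 * lam n)) * ‖SN n τ‖ := by
  obtain ⟨V0, hV⟩ := tail_lemma _ (summable_exp_lam σ0 hσ0) 1 one_pos
  obtain ⟨W1, hW1⟩ := exists_nat_ge (24 / σ0 ^ 4)
  refine ⟨max V0 W1, fun σ τ h1 h2 => ?_⟩
  set W := max V0 W1 with hW
  have hσ : 0 < σ := by linarith
  have hexp : ∀ n : ℕ, Real.exp (-(σ * lam n)) ≤ Real.exp (-(σ0 * lam n)) := by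
    intro n
    have := lam_nonneg n
    gcongr
  have a1 := hV W (le_max_left _ _) (fun n => Ft σ τ (n + 1)) (fun n => by rw [Ft_norm]; exact hexp _)
  rw [← sum_Icc_range] at a1
  have a2 := F_abel σ hσ τ W
  have a3 : Real.exp (-(σ * lam (W + 1))) * W ≤ 1 := by
    have hl : √((W + 1 : ℕ) : ℝ) ≤ lam (W + 1) := by
      rw [lam_eq]
      have := cpi_bounds.1
      have := Real.sqrt_nonneg ((W + 1 : ℕ) : ℝ)
      nlinarith
    have b1 : σ0 * √((W + 1 : ℕ) : ℝ) ≤ σ * lam (W + 1) := by gcongr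
    have b2 := Real.pow_div_factorial_le_exp (σ0 * √((W + 1 : ℕ) : ℝ)) (by positivity) 4
    have b3 : √((W + 1 : ℕ) : ℝ) ^ 4 = ((W + 1 : ℕ) : ℝ) ^ 2 := by
      rw [show 4 = 2 * 2 by norm_num, pow_mul, Real.sq_sqrt (by positivity)]
    have b4 : Real.exp (σ0 * √((W + 1 : ℕ) : ℝ)) ≤ Real.exp (σ * lam (W + 1)) := by gcongr
    rw [mul_pow, b3] at b2
    have b5 : ((4 : ℕ).factorial : ℝ) = 24 := by norm_num [Nat.factorial]
    rw [b5] at b2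
    have b6 : (W1 : ℝ) ≤ W := by exact_mod_cast le_max_right V0 W1
    have b7 : 24 / σ0 ^ 4 ≤ (W:ℝ) := by linarith
    rw [div_le_iff₀ (by positivity)] at b7
    rw [Real.exp_neg, inv_mul_le_iff₀ (Real.exp_pos _), mul_one]
    have b8 : (W : ℝ) ≤ σ0 ^ 4 * ((W + 1 : ℕ) : ℝ) ^ 2 / 24 := by
      rw [le_div_iff₀ (by norm_num)]
      have hp : 0 ≤ (W:ℝ) := by positivity
      have hp2 : 0 < σ0 ^ 4 := by positivity
      push_cast
      nlinarith [mul_le_mul_of_nonneg_right b7 hp]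
    linarith
  have a4 : ∑ n ∈ Icc 1 W, σ * (1 / √n) * Real.exp (-(σ * lam n)) * ‖SN n τ‖ ≤ 2 * ∑ n ∈ Icc 1 W, σ0 * (1 / √n) * Real.exp (-(σ0 * lam n)) * ‖SN n τ‖ := by
    rw [Finset.mul_sum]
    apply Finset.sum_le_sum
    intro n _
    have := hexp n
    calc σ * (1 / √n) * Real.exp (-(σ * lam n)) * ‖SN n τ‖ ≤ (2 * σ0) * (1 / √n) * Real.exp (-(σ0 * lam n)) * ‖SN n τ‖ := by gcongr
      _ = _ := by ring
  have a5 := norm_le_norm_add_norm_sub' (∑' n : ℕ, Ft σ τ (n + 1)) (∑ n ∈ Icc 1 W, Ft σ τ n)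
  linarith

lemma D_point : ∃ C : ℝ, 0 < C ∧ ∀ σ τ : ℝ, 0 < σ → 0 < τ →
    ‖∑' n : ℕ, Bt (2 * τ * σ) (τ ^ 2 - σ ^ 2) (n + 1)‖ ≤ 2 / τ * (1 + ‖∑' n : ℕ, Ft σ τ (n + 1)‖ + C / τ ^ 2) := by
  obtain ⟨C, hC, h⟩ := key2
  refine ⟨C, hC, fun σ τ hσ hτ => ?_⟩
  obtain ⟨R, hR, hk⟩ := h τ σ hτ hσ
  rw [hk, norm_mul]
  have hz : τ ≤ ‖zz τ σ‖ := by
    apply abs_le_of_sq_le_sq' _ (norm_nonneg _) |>.2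
    rw [zz_norm_sq]; nlinarith
  have hp : √π ≤ 2 := by
    rw [Real.sqrt_le_iff]
    constructor
    · norm_num
    · linarith [Real.pi_le_four]
  have h1 : ‖((√π : ℝ) : ℂ) / zz τ σ‖ ≤ 2 / τ := by
    rw [norm_div, Complex.norm_real, Real.norm_of_nonneg (by positivity)]
    gcongr
  have h2 : ‖1 + ∑' n : ℕ, Ft σ τ (n + 1) + R‖ ≤ 1 + ‖∑' n : ℕ, Ft σ τ (n + 1)‖ + C / τ ^ 2 := by
    refine (norm_add_le _ _).trans ?_
    gcongr
    refine (norm_add_le _ _).trans ?_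
    simp
  gcongr

def BV (a : ℝ) (V : ℕ) (s : ℝ) : ℂ := EP (Icc 1 V) (fun ν => ((1 / ((ν : ℝ) * √(ν : ℝ)) * Real.exp (-(a / ν)) : ℝ) : ℂ)) (fun ν => 1 / (ν : ℝ)) s

lemma BV_eq (a : ℝ) (V : ℕ) (s : ℝ) : BV a V s = ∑ n ∈ Icc 1 V, Bt a s n := rfl
lemma BV_cont (a : ℝ) (V : ℕ) : Continuous (BV a V) := EP_continuous _ _ _

def GB (δ : ℝ) (V : ℕ) : Prop := ∀ a s, 0 ≤ a → ‖(∑' n : ℕ, Bt a s (n + 1)) - BV a V s‖ ≤ δ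

lemma GB_exists (δ : ℝ) (hδ : 0 < δ) (N : ℕ) : ∃ V, N ≤ V ∧ GB δ V := by
  obtain ⟨V0, hV⟩ := tail_lemma _ summable_w δ hδ
  refine ⟨max N V0, le_max_left _ _, fun a s ha => ?_⟩
  have := hV (max N V0) (le_max_right _ _) (fun n => Bt a s (n + 1)) (fun n => Bt_norm_le a s ha _)
  rw [BV_eq, sum_Icc_range]
  exact this

lemma comp_u (g : ℝ → ℝ) (hg : Continuous g) (h0 : ∀ x, 0 ≤ g x) (M Z : ℝ) (hM : 0 < M) (hZ : 0 < Z) (hMZ : M ≤ Z ^ 2)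
    (K : ℝ → ℝ) (hK : Continuous K) (hgK : ∀ τ ∈ Set.Icc Z (2 * Z), g (τ ^ 2 - (M / (2 * τ)) ^ 2) ≤ K τ) :
    ∫ s in (Z ^ 2)..(2 * Z ^ 2), g s ≤ 5 * Z * ∫ τ in Z..(2 * Z), K τ := by
  set u : ℝ → ℝ := fun τ => τ ^ 2 - (M / (2 * τ)) ^ 2 with hu
  set u' : ℝ → ℝ := fun τ => 2 * τ + M ^ 2 / (2 * τ ^ 3) with hu'
  have hMM : M ^ 2 ≤ (Z ^ 2) ^ 2 := by gcongr
  have h1 : u Z ≤ Z ^ 2 := by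
    simp only [hu]
    have : 0 ≤ (M / (2 * Z)) ^ 2 := by positivity
    linarith
  have h2 : 2 * Z ^ 2 ≤ u (2 * Z) := by
    simp only [hu]
    have : (M / (2 * (2 * Z))) ^ 2 ≤ Z ^ 2 := by
      rw [div_pow, div_le_iff₀ (by positivity)]
      nlinarith [sq_nonneg (Z ^ 2)]
    nlinarith
  have huu : Set.uIcc Z (2 * Z) = Set.Icc Z (2 * Z) := Set.uIcc_of_le (by linarith)
  have hder : ∀ x ∈ Set.uIcc Z (2 * Z), HasDerivAt u (u' x) x := by
    intro x hx
    rw [huu] at hx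
    have hx0 : x ≠ 0 := by linarith [hx.1]
    have d1 := hasDerivAt_pow 2 x
    have d2 := ((hasDerivAt_inv hx0).const_mul (M / 2)).pow 2
    have d3 := d1.sub d2
    refine (d3.congr_deriv ?_).congr_of_eventuallyEq ?_
    · simp only [hu', Nat.cast_ofNat, Nat.add_one_sub_one, pow_one]; field_simp; ring
    · apply Filter.Eventually.of_forall
      intro y
      simp only [hu, Pi.sub_apply, Pi.pow_apply]
      congr 2
      rw [div_mul_eq_div_div, div_eq_mul_inv (M / 2)]
  have hcu' : ContinuousOn u' (Set.uIcc Z (2 * Z)) := by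
    rw [huu]
    simp only [hu']
    apply ContinuousOn.add (by fun_prop)
    apply ContinuousOn.div continuousOn_const (by fun_prop)
    intro x hx
    have : 0 < x := by linarith [hx.1]
    positivity
  have hcu : ContinuousOn u (Set.uIcc Z (2 * Z)) := fun x hx => (hder x hx).continuousAt.continuousWithinAt
  have h3 := int_sub_le g hg h0 (Z ^ 2) (2 * Z ^ 2) (u Z) (u (2 * Z)) h1 (by nlinarith) h2
  have h4 := intervalIntegral.integral_comp_mul_deriv hder hcu' hg
  rw [← h4] at h3
  refine h3.trans ?_
  rw [← intervalIntegral.integral_const_mul]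
  apply intervalIntegral.integral_mono_on (by linarith)
  · exact ((hg.comp_continuousOn hcu).mul hcu').intervalIntegrable
  · apply Continuous.intervalIntegrable; fun_prop
  · intro τ ht
    have hτ : 0 < τ := by linarith [ht.1]
    have hk := hgK τ ht
    have hu5 : u' τ ≤ 5 * Z := by
      simp only [hu']
      have a : M ^ 2 / (2 * τ ^ 3) ≤ Z := by
        rw [div_le_iff₀ (by positivity)]
        have : Z ^ 3 ≤ τ ^ 3 := by have := ht.1; gcongr
        nlinarith
      linarith [ht.2]
    have hu0 : 0 ≤ u' τ := by simp only [hu']; positivity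
    have hg0 := h0 (u τ)
    calc g (u τ) * u' τ ≤ K τ * (5 * Z) := by
          apply mul_le_mul hk hu5 hu0 (hg0.trans hk)
      _ = _ := by ring

lemma D_dyadic (κ : ℝ) (hκ : 0 ≤ κ) (hκ2 : κ ≤ 2) (h : HS κ) : ∃ C : ℝ, 0 < C ∧ ∀ M Y : ℝ, 1 ≤ M → M ≤ Y → ∀ V : ℕ, GB (M ^ (-(3/2) : ℝ)) V →
    M ^ 6 * ∫ s in Y..(2 * Y), ‖BV M V s‖ ^ 4 ≤ C * (Y + M ^ 6 / Y + Y ^ 2 / M + Y ^ (1 + κ) * M ^ (2 - 2 * κ)) := by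
  obtain ⟨C, hC, hF⟩ := D_point
  obtain ⟨D, hD, hA⟩ := S_avg κ hκ h
  refine ⟨40 + 5120 * (3 + C) ^ 4 + 5120 * 6 ^ 4 * (D * (4 ^ 7 + 2 * 4 ^ 8)), by positivity, fun M Y hM hMY V hV => ?_⟩
  have hM0 : 0 < M := by linarith
  have hY0 : 0 < Y := by linarith
  set Z := √Y with hZ
  have hZ2 : Z ^ 2 = Y := Real.sq_sqrt hY0.le
  have hZ0 : 0 < Z := Real.sqrt_pos.mpr hY0
  have hZ1 : 1 ≤ Z := by rw [hZ, Real.one_le_sqrt]; linarith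
  set σ0 := M / (4 * Z) with hσ0
  have hσ0p : 0 < σ0 := by positivity
  obtain ⟨W, hW⟩ := F_cut σ0 hσ0p
  set Q : ℝ → ℝ := fun τ => ∑ n ∈ Icc 1 W, σ0 * (1 / √n) * Real.exp (-(σ0 * lam n)) * ‖SN n τ‖ with hQ
  have hQc : Continuous Q := by
    rw [hQ]
    apply continuous_finsetSum
    intro n _
    exact continuous_const.mul (SN_cont n).norm
  have hQ0 : ∀ τ, 0 ≤ Q τ := by
    intro τ
    simp only [hQ]
    positivity
  set δ := M ^ (-(3/2) : ℝ) with hδ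
  have hδ0 : 0 < δ := by positivity
  have hδ4 : M ^ 6 * δ ^ 4 = 1 := by
    rw [hδ, ← Real.rpow_natCast, ← Real.rpow_natCast, ← Real.rpow_mul hM0.le, ← Real.rpow_add hM0]; norm_num
  have hpt : ∀ τ ∈ Set.Icc Z (2 * Z), ‖BV M V (τ ^ 2 - (M / (2 * τ)) ^ 2)‖ ^ 4 ≤ (8 * δ ^ 4 + 1024 * (3 + C) ^ 4 / Z ^ 4) + 1024 * 6 ^ 4 / Z ^ 4 * (Q τ) ^ 4 := by
    intro τ ht
    obtain ⟨t1, t2⟩ := ht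
    have hτ : 0 < τ := by linarith
    set σ := M / (2 * τ) with hσ
    have hσp : 0 < σ := by positivity
    have e1 : 2 * τ * σ = M := by rw [hσ]; field_simp
    have h1 := hF σ τ hσp hτ
    rw [e1] at h1
    have h2 := hW σ τ (by rw [hσ, hσ0]; exact div_le_div_of_nonneg_left hM0.le (by positivity) (by linarith)) (by
      rw [hσ, hσ0, show 2 * (M / (4 * Z)) = M / (2 * Z) by field_simp; ring]; gcongr)
    have h3 := hV M (τ ^ 2 - σ ^ 2) hM0.le
    have h4 := norm_le_norm_add_norm_sub (∑' n : ℕ, Bt M (τ ^ 2 - σ ^ 2) (n + 1)) (BV M V (τ ^ 2 - σ ^ 2))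
    have h5 : C / τ ^ 2 ≤ C := by
      apply div_le_self hC.le
      nlinarith
    have h6 : 2 / τ * (1 + ‖∑' n : ℕ, Ft σ τ (n + 1)‖ + C / τ ^ 2) ≤ 2 / Z * ((3 + C) + 6 * Q τ) := by
      apply mul_le_mul (by gcongr) _ (by positivity) (by positivity)
      have : ‖∑' n : ℕ, Ft σ τ (n + 1)‖ ≤ 2 + 6 * Q τ := h2
      linarith
    have h7 : ‖BV M V (τ ^ 2 - σ ^ 2)‖ ≤ δ + 2 / Z * ((3 + C) + 6 * Q τ) := by linarith
    calc ‖BV M V (τ ^ 2 - σ ^ 2)‖ ^ 4 ≤ (δ + 2 / Z * ((3 + C) + 6 * Q τ)) ^ 4 := by gcongr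
      _ ≤ 8 * (δ ^ 4 + (2 / Z * ((3 + C) + 6 * Q τ)) ^ 4) := pow4_add _ _
      _ = 8 * δ ^ 4 + 128 / Z ^ 4 * ((3 + C) + 6 * Q τ) ^ 4 := by rw [mul_pow (2 / Z)]; field_simp; ring
      _ ≤ 8 * δ ^ 4 + 128 / Z ^ 4 * (8 * ((3 + C) ^ 4 + (6 * Q τ) ^ 4)) := by gcongr; exact pow4_add _ _
      _ = _ := by ring
  have hcs := comp_u (fun s => ‖BV M V s‖ ^ 4) ((BV_cont M V).norm.pow 4) (fun _ => by positivity) M Z hM0 hZ0 (by rw [hZ2]; exact hMY) _ (by fun_prop) hpt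
  rw [hZ2, int_affine (fun τ => Q τ ^ 4) (hQc.pow 4)] at hcs
  have hav := hA σ0 hσ0p (2 * Z) (by positivity) W
  have hI := int_sub_le (fun τ => Q τ ^ 4) (hQc.pow 4) (fun _ => by positivity) Z (2 * Z) (-(2 * Z)) (2 * Z) (by linarith) (by linarith) le_rfl
  have hI2 : ∫ τ in Z..(2 * Z), Q τ ^ 4 ≤ D * (σ0 ^ (-7 : ℝ) + 2 * Z * σ0 ^ (-4 - 2 * κ)) := hI.trans hav
  have s1 : σ0 ^ (-7 : ℝ) = 4 ^ 7 * Z ^ 7 / M ^ 7 := by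
    rw [Real.rpow_neg hσ0p.le, hσ0]; norm_cast; rw [div_pow, inv_div]; ring
  have s2 : σ0 ^ (-4 - 2 * κ) ≤ 4 ^ 8 * (Z ^ 4 * Y ^ κ / (M ^ 4 * M ^ (2 * κ))) := by
    have b1 : σ0 ^ (-4 - 2 * κ) = (4 * Z) ^ (4 + 2 * κ) / M ^ (4 + 2 * κ) := by
      rw [show -4 - 2 * κ = -(4 + 2 * κ) by ring, Real.rpow_neg hσ0p.le, hσ0, Real.div_rpow hM0.le (by positivity), inv_div]
    have b2 : M ^ (4 + 2 * κ) = M ^ 4 * M ^ (2 * κ) := by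
      rw [Real.rpow_add hM0]; norm_cast
    have b3 : (4 * Z) ^ (4 + 2 * κ) = 4 ^ (4 + 2 * κ) * (Z ^ 4 * Y ^ κ) := by
      rw [Real.mul_rpow (by norm_num) hZ0.le, Real.rpow_add hZ0, Real.rpow_mul hZ0.le]
      congr 2
      · norm_cast
      · rw [← hZ2]; norm_cast
    have b4 : (4:ℝ) ^ (4 + 2 * κ) ≤ 4 ^ 8 := by
      calc (4:ℝ) ^ (4 + 2 * κ) ≤ 4 ^ (8:ℝ) := Real.rpow_le_rpow_of_exponent_le (by norm_num) (by linarith)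
        _ = _ := by norm_cast
    rw [b1, b2, b3, mul_div_assoc]
    gcongr
  have m1 : M ^ (2 - 2 * κ) = M ^ 2 / M ^ (2 * κ) := by
    rw [Real.rpow_sub hM0]; norm_cast
  have m2 : Y ^ (1 + κ) = Y * Y ^ κ := by rw [Real.rpow_add hY0, Real.rpow_one]
  have hP : 0 < M ^ (2 * κ) := by positivity
  have hYk : 0 < Y ^ κ := by positivity
  set P := M ^ (2 * κ) with hPdef
  set R := Y ^ κ with hRdef
  have hI3 : ∫ τ in Z..(2 * Z), Q τ ^ 4 ≤ D * (4 ^ 7 * Z ^ 7 / M ^ 7 + 2 * Z * (4 ^ 8 * (Z ^ 4 * R / (M ^ 4 * P)))) := by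
    refine hI2.trans ?_
    rw [s1]
    gcongr
  have hfin : M ^ 6 * ∫ s in Y..(2 * Y), ‖BV M V s‖ ^ 4 ≤ M ^ 6 * (5 * Z * ((8 * δ ^ 4 + 1024 * (3 + C) ^ 4 / Z ^ 4) * (2 * Z - Z) + 1024 * 6 ^ 4 / Z ^ 4 * (D * (4 ^ 7 * Z ^ 7 / M ^ 7 + 2 * Z * (4 ^ 8 * (Z ^ 4 * R / (M ^ 4 * P))))))) := by
    gcongr
    refine hcs.trans ?_
    gcongr
  refine hfin.trans ?_
  have heq : M ^ 6 * (5 * Z * ((8 * δ ^ 4 + 1024 * (3 + C) ^ 4 / Z ^ 4) * (2 * Z - Z) + 1024 * 6 ^ 4 / Z ^ 4 * (D * (4 ^ 7 * Z ^ 7 / M ^ 7 + 2 * Z * (4 ^ 8 * (Z ^ 4 * R / (M ^ 4 * P)))))))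
      = 40 * (M ^ 6 * δ ^ 4) * Z ^ 2 + 5120 * (3 + C) ^ 4 * (M ^ 6 / Z ^ 2) + 5120 * 6 ^ 4 * (D * (4 ^ 7 * ((Z ^ 2) ^ 2 / M) + 2 * 4 ^ 8 * (Z ^ 2 * R * (M ^ 2 / P)))) := by
    field_simp
    ring
  rw [heq, hδ4, hZ2, m1, m2]
  have q1 : 0 < M ^ 6 / Y := by positivity
  have q2 : 0 < Y ^ 2 / M := by positivity
  have q3 : 0 < Y * R * (M ^ 2 / P) := by positivity
  set A := M ^ 6 / Y
  set B := Y ^ 2 / M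
  set E := Y * R * (M ^ 2 / P)
  have hS : 0 < Y + A + B + E := by positivity
  calc 40 * 1 * Y + 5120 * (3 + C) ^ 4 * A + 5120 * 6 ^ 4 * (D * (4 ^ 7 * B + 2 * 4 ^ 8 * E))
      ≤ 40 * 1 * (Y + A + B + E) + 5120 * (3 + C) ^ 4 * (Y + A + B + E) + 5120 * 6 ^ 4 * (D * (4 ^ 7 * (Y + A + B + E) + 2 * 4 ^ 8 * (Y + A + B + E))) := by
        gcongr <;> linarith
    _ = _ := by ring

lemma D_low : ∃ C : ℝ, 0 < C ∧ ∀ M : ℝ, 1 ≤ M → ∀ V : ℕ, M ^ 6 * ∫ s in (0:ℝ)..M, ‖BV M V s‖ ^ 4 ≤ C * M ^ 5 := by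
  obtain ⟨C, hC, h⟩ := powsum (1/2) (by norm_num)
  refine ⟨C ^ 4, by positivity, fun M hM V => ?_⟩
  have hM0 : 0 < M := by linarith
  have hb : ∀ s, ‖BV M V s‖ ≤ C * M ^ (-(1/2) : ℝ) := by
    intro s
    refine le_trans ?_ (h M hM0 V)
    rw [BV_eq]
    refine (norm_sum_le _ _).trans (le_of_eq ?_)
    apply Finset.sum_congr rfl
    intro n hn
    have : (0:ℝ) < n := by exact_mod_cast (Finset.mem_Icc.mp hn).1
    rw [Bt_norm, w_eq_rpow _ this]
    norm_num
  have e : (M ^ (-(1/2) : ℝ)) ^ 4 = (M ^ 2)⁻¹ := by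
    rw [← Real.rpow_natCast, ← Real.rpow_mul hM0.le, ← Real.rpow_natCast, ← Real.rpow_neg hM0.le]; norm_num
  calc M ^ 6 * ∫ s in (0:ℝ)..M, ‖BV M V s‖ ^ 4 ≤ M ^ 6 * ∫ s in (0:ℝ)..M, (C * M ^ (-(1/2) : ℝ)) ^ 4 := by
        gcongr
        apply intervalIntegral.integral_mono_on hM0.le
        · exact ((BV_cont M V).norm.pow 4).intervalIntegrable _ _
        · simp
        · intro t _
          have := hb t
          gcongr
    _ = _ := by
        rw [intervalIntegral.integral_const, mul_pow, e, smul_eq_mul]; field_simp; ring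

lemma D_half (κ κ' : ℝ) (hκ : 0 ≤ κ) (hκ2 : κ ≤ 2) (hκ' : κ' * (1 + κ) = κ) (h : HS κ) : ∃ C : ℝ, 0 < C ∧ ∀ M : ℝ, 1 ≤ M →
    ∀ V : ℕ, GB (M ^ (-(3/2) : ℝ)) V → M ^ 6 * ∫ s in (0:ℝ)..(2 * M ^ (3 - κ')), ‖BV M V s‖ ^ 4 ≤ C * M ^ 5 := by
  obtain ⟨C, hC, hd⟩ := D_dyadic κ hκ hκ2 h
  obtain ⟨C', hC', h'⟩ := D_low
  have k0 : 0 ≤ κ' := by by_contra hc; nlinarith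
  have k1 : κ' ≤ 1 := by by_contra hc; nlinarith
  refine ⟨C' + C * (2 + 4 + 8 + 3), by positivity, fun M hM V hV => ?_⟩
  have hM0 : 0 < M := by linarith
  set X := 2 * M ^ (3 - κ') with hX
  have hX1 : M ≤ X := by
    have : M ^ (1:ℝ) ≤ M ^ (3 - κ') := Real.rpow_le_rpow_of_exponent_le hM (by linarith)
    rw [Real.rpow_one] at this
    linarith
  have hX0 : 0 < X := by linarith
  have hc : Continuous fun s => ‖BV M V s‖ ^ 4 := (BV_cont M V).norm.pow 4
  rw [← intervalIntegral.integral_add_adjacent_intervals (b := M) (hc.intervalIntegrable _ _) (hc.intervalIntegrable _ _), mul_add]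
  have i1 := h' M hM V
  have i2 := dyadic_up (fun s => M ^ 6 * ‖BV M V s‖ ^ 4) (by fun_prop) (fun _ => by positivity) (C * (1 + X / M + X ^ κ * M ^ (2 - 2 * κ))) (C * M ^ 6) M X (by positivity) (by positivity) hM0 (by
    intro Y hY1 hYX
    have hY0 : 0 < Y := by linarith
    rw [intervalIntegral.integral_const_mul]
    refine (hd M Y hM hY1 V hV).trans ?_
    have e : Y ^ (1 + κ) = Y * Y ^ κ := by rw [Real.rpow_add hY0, Real.rpow_one]
    rw [e]
    calc C * (Y + M ^ 6 / Y + Y ^ 2 / M + Y * Y ^ κ * M ^ (2 - 2 * κ)) = C * (1 + Y / M + Y ^ κ * M ^ (2 - 2 * κ)) * Y + C * M ^ 6 / Y := by ring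
      _ ≤ _ := by gcongr) hX1
  rw [intervalIntegral.integral_const_mul] at i2
  have a3 : X ≤ 2 * M ^ 3 := by
    rw [hX]; gcongr 2 * ?_
    calc M ^ (3 - κ') ≤ M ^ (3:ℝ) := Real.rpow_le_rpow_of_exponent_le hM (by linarith)
      _ = M ^ 3 := by norm_cast
  have e1 : X ≤ 2 * M ^ 5 := by
    exact a3.trans (mul_le_mul_of_nonneg_left (pow_le_pow_right₀ hM (by norm_num)) (by norm_num))
  have e2 : X / M * X ≤ 4 * M ^ 5 := by
    calc X / M * X ≤ (2 * M ^ 3) / M * (2 * M ^ 3) := by gcongr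
      _ = _ := by field_simp; ring
  have e3 : X ^ κ * M ^ (2 - 2 * κ) * X ≤ 8 * M ^ 5 := by
    have a : X ^ κ * X = X ^ (κ + 1) := by rw [Real.rpow_add hX0, Real.rpow_one]
    have b : X ^ (κ + 1) = 2 ^ (κ + 1) * M ^ (5 - (2 - 2 * κ)) := by
      rw [hX, Real.mul_rpow (by norm_num) (by positivity), ← Real.rpow_mul hM0.le]
      congr 2
      linarith
    have c : (2:ℝ) ^ (κ + 1) ≤ 8 := by
      calc (2:ℝ)^(κ + 1) ≤ 2 ^ (3:ℝ) := by
            apply Real.rpow_le_rpow_of_exponent_le (by norm_num); linarith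
        _ = 8 := by norm_num
    calc X ^ κ * M ^ (2 - 2 * κ) * X = 2 ^ (κ + 1) * (M ^ (5 - (2 - 2 * κ)) * M ^ (2 - 2 * κ)) := by
          rw [mul_right_comm, a, b]; ring
      _ = 2 ^ (κ + 1) * M ^ 5 := by
          rw [← Real.rpow_add hM0, ← Real.rpow_natCast]; congr 2; push_cast; ring
      _ ≤ _ := by gcongr
  have e4 : C * (1 + X / M + X ^ κ * M ^ (2 - 2 * κ)) * X = C * (X + X / M * X + X ^ κ * M ^ (2 - 2 * κ) * X) := by ring
  rw [e4] at i2
  have e5 : C * (X + X / M * X + X ^ κ * M ^ (2 - 2 * κ) * X) ≤ C * (2 * M ^ 5 + 4 * M ^ 5 + 8 * M ^ 5) := by gcongr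
  have e6 : 3 * (C * M ^ 6) / M = 3 * C * M ^ 5 := by field_simp
  rw [e6] at i2
  linarith

def BL (M : ℕ) (t : ℝ) : ℂ := EP (Ioc (M / 2) M) (fun _ => 1) (fun ν => 1 / (ν : ℝ)) t

lemma BL_cont (M : ℕ) : Continuous (BL M) := EP_continuous _ _ _

lemma DM_split (M : ℕ) (t : ℝ) : DM M t = DM (M / 2) t + BL M t := by
  simp only [DM, BL, EP]
  rw [← Finset.sum_union]
  · congr 1
    ext x
    simp only [Finset.mem_union, Finset.mem_Icc, Finset.mem_Ioc]
    omega
  · rw [Finset.disjoint_left]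
    intro x
    simp only [Finset.mem_Icc, Finset.mem_Ioc]
    omega

lemma pow4_split (a b : ℝ) (ha : 0 ≤ a) (hb : 0 ≤ b) : (a + b) ^ 4 ≤ 2 * a ^ 4 + 2401 * b ^ 4 := by
  rcases le_or_gt (6 * b) a with h | h
  · have : (a + b) ^ 4 ≤ (7 / 6 * a) ^ 4 := by gcongr; linarith
    have h2 : 0 ≤ a ^ 4 := by positivity
    have h3 : 0 ≤ b ^ 4 := by positivity
    rw [mul_pow] at this
    norm_num at this
    linarith
  · have : (a + b) ^ 4 ≤ (7 * b) ^ 4 := by gcongr; linarith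
    have h2 : 0 ≤ a ^ 4 := by positivity
    rw [mul_pow] at this
    norm_num at this
    linarith

lemma D_block (κ κ' : ℝ) (hκ : 0 ≤ κ) (hκ2 : κ ≤ 2) (hκ' : κ' * (1 + κ) = κ) (h : HS κ) : ∃ C : ℝ, 0 < C ∧ ∀ M : ℕ, 1 ≤ M → ∀ T : ℝ, 0 < T →
    ∫ t in (-T)..T, ‖BL M t‖ ^ 4 ≤ C * ((M : ℝ) ^ (5 : ℝ) + T * (M : ℝ) ^ (2 + κ')) := by
  obtain ⟨C, hC, hh⟩ := D_half κ κ' hκ hκ2 hκ' h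
  have hE : 0 < Real.exp 2 := Real.exp_pos _
  refine ⟨4 * Real.exp 2 ^ 4 * C, by positivity, fun N hN T hT => ?_⟩
  have hN1 : (1:ℝ) ≤ N := by exact_mod_cast hN
  have hN0 : (0:ℝ) < N := by linarith
  set M : ℝ := (N : ℝ) with hM
  obtain ⟨V, hNV, hV⟩ := GB_exists (M ^ (-(3/2) : ℝ)) (by positivity) N
  set T0 := M ^ (3 - κ') with hT0
  have hT0p : 0 < T0 := by positivity
  have hhV := hh M hN1 V hV
  set m : ℝ := M ^ (3/2 : ℝ) with hm
  have hm0 : 0 < m := by positivity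
  have hm4 : m ^ 4 = M ^ 6 := by
    rw [hm, ← Real.rpow_natCast, ← Real.rpow_natCast, ← Real.rpow_mul hN0.le]; norm_num
  have hBL : ∀ c : ℝ, ∫ t in (c - T0)..(c + T0), ‖BL N t‖ ^ 4 ≤ 4 * Real.exp 2 ^ 4 * C * M ^ (5 : ℝ) := by
    intro c
    have hmj := majorant (Ioc (N / 2) N) (Icc 1 V) (by
        intro x
        simp only [Finset.mem_Icc, Finset.mem_Ioc]
        omega) (fun _ => 1) (fun n => (Real.exp 2 * m) * (1 / ((n : ℝ) * √(n : ℝ)) * Real.exp (-(M / n)))) (fun ν => 1 / (ν : ℝ)) c T0 hT0p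
      (fun n _ => by positivity) (by
        intro n hn
        rw [Finset.mem_Ioc] at hn
        have hn1 : 1 ≤ n := by omega
        have hn0 : (0:ℝ) < n := by exact_mod_cast hn1
        have hnN : (n:ℝ) ≤ M := by rw [hM]; exact_mod_cast hn.2
        have h2n : M ≤ 2 * n := by rw [hM]; exact_mod_cast (by omega : N ≤ 2 * n)
        rw [norm_one, w_eq_rpow _ hn0]
        have a1 : M ^ (-(3/2) : ℝ) ≤ (n:ℝ) ^ (-(3/2) : ℝ) := Real.rpow_le_rpow_of_nonpos hn0 hnN (by norm_num)
        have a2 : m * M ^ (-(3/2) : ℝ) = 1 := by rw [hm, ← Real.rpow_add hN0]; norm_num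
        have a3 : 1 ≤ Real.exp 2 * Real.exp (-(M / n)) := by
          rw [← Real.exp_add, Real.one_le_exp_iff]
          have : M / n ≤ 2 := by rw [div_le_iff₀ hn0]; exact h2n
          linarith
        have a4 : 1 ≤ m * (n:ℝ) ^ (-(3/2) : ℝ) := by rw [← a2]; gcongr
        calc (1:ℝ) ≤ (Real.exp 2 * Real.exp (-(M / n))) * (m * (n:ℝ) ^ (-(3/2) : ℝ)) := one_le_mul_of_one_le_of_one_le a3 a4
          _ = _ := by ring)
    refine hmj.trans ?_
    have e : ∀ t, ‖EP (Icc 1 V) (fun n => (((Real.exp 2 * m) * (1 / ((n : ℝ) * √(n : ℝ)) * Real.exp (-(M / n))) : ℝ) : ℂ)) (fun ν => 1 / (ν : ℝ)) t‖ ^ 4 = Real.exp 2 ^ 4 * M ^ 6 * ‖BV M V t‖ ^ 4 := by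
      intro t
      rw [EP_smul, norm_mul, mul_pow, Complex.norm_real, Real.norm_of_nonneg (by positivity), mul_pow, hm4]; rfl
    simp only [e]
    rw [intervalIntegral.integral_const_mul, even_int (fun t => ‖BV M V t‖ ^ 4) ((BV_cont M V).norm.pow 4) (fun x => by simp only [BV]; rw [EP_even])]
    have := mul_le_mul_of_nonneg_left hhV (by positivity : 0 ≤ 4 * Real.exp 2 ^ 4)
    have e5 : M ^ (5:ℝ) = M ^ 5 := by norm_cast
    rw [e5]
    calc _ = 4 * Real.exp 2 ^ 4 * (M ^ 6 * ∫ τ in (0:ℝ)..(2 * T0), ‖BV M V τ‖ ^ 4) := by ring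
      _ ≤ _ := this
      _ = _ := by ring
  have hext := extension (fun t => ‖BL N t‖ ^ 4) ((BL_cont N).norm.pow 4) (fun _ => by positivity) _ T0 (by positivity) hT0p hBL T hT
  refine hext.trans (le_of_eq ?_)
  have e1 : M ^ (2 + κ') = M ^ (5 : ℝ) / T0 := by
    rw [hT0, ← Real.rpow_sub hN0]; congr 1; ring
  rw [e1]; ring

lemma D_core (κ κ' : ℝ) (hκ : 0 ≤ κ) (hκ2 : κ ≤ 2) (hκ' : κ' * (1 + κ) = κ) (h : HS κ) : HD κ' := by
  obtain ⟨C, hC, hB⟩ := D_block κ κ' hκ hκ2 hκ' h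
  have k0 : 0 ≤ κ' := by by_contra hc; nlinarith
  have main : ∀ M : ℕ, ∀ T : ℝ, 0 < T → ∫ t in (-T)..T, ‖DM M t‖ ^ 4 ≤ (4802 * C) * ((M : ℝ) ^ (5 : ℝ) + T * (M : ℝ) ^ (2 + κ')) := by
    intro M
    induction M using Nat.strong_induction_on with
    | _ M ih =>
      intro T hT
      rcases Nat.eq_zero_or_pos M with hM | hM
      · subst hM
        have : ∀ t, DM 0 t = 0 := by intro t; simp [DM, EP]
        simp only [this]
        simp only [norm_zero, ne_eq, OfNat.ofNat_ne_zero, not_false_eq_true, zero_pow, intervalIntegral.integral_zero]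
        positivity
      · have h1 := ih (M / 2) (by omega) T hT
        have h2 := hB M hM T hT
        have hh : ((M / 2 : ℕ) : ℝ) ≤ (M:ℝ) / 2 := Nat.cast_div_le
        have hM0 : (0:ℝ) < M := by exact_mod_cast hM
        have c1 : ((M / 2 : ℕ) : ℝ) ^ (5:ℝ) ≤ (M:ℝ) ^ (5:ℝ) / 4 := by
          calc ((M / 2 : ℕ) : ℝ) ^ (5:ℝ) ≤ ((M:ℝ) / 2) ^ (5:ℝ) := by gcongr
            _ = (M:ℝ) ^ (5:ℝ) / 2 ^ (5:ℝ) := by rw [Real.div_rpow hM0.le (by norm_num)]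
            _ ≤ _ := by gcongr; norm_num
        have c2 : ((M / 2 : ℕ) : ℝ) ^ (2 + κ') ≤ (M:ℝ) ^ (2 + κ') / 4 := by
          calc ((M / 2 : ℕ) : ℝ) ^ (2 + κ') ≤ ((M:ℝ) / 2) ^ (2 + κ') := by gcongr
            _ = (M:ℝ) ^ (2 + κ') / 2 ^ (2 + κ') := by rw [Real.div_rpow hM0.le (by norm_num)]
            _ ≤ _ := by
              gcongr
              calc (4:ℝ) = 2 ^ (2:ℝ) := by norm_num
                _ ≤ _ := Real.rpow_le_rpow_of_exponent_le (by norm_num) (by linarith)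
        have c3 : ((M / 2 : ℕ) : ℝ) ^ (5:ℝ) + T * ((M / 2 : ℕ) : ℝ) ^ (2 + κ') ≤ ((M:ℝ) ^ (5:ℝ) + T * (M:ℝ) ^ (2 + κ')) / 4 := by
          have := mul_le_mul_of_nonneg_left c2 hT.le
          linarith
        have c4 : ∫ t in (-T)..T, ‖DM M t‖ ^ 4 ≤ ∫ t in (-T)..T, (2 * ‖DM (M / 2) t‖ ^ 4 + 2401 * ‖BL M t‖ ^ 4) := by
          have u1 := DM_cont M
          have u2 := DM_cont (M / 2)
          have u3 := BL_cont M
          apply intervalIntegral.integral_mono_on (by linarith)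
          · apply Continuous.intervalIntegrable; fun_prop
          · apply Continuous.intervalIntegrable; fun_prop
          · intro t _
            calc ‖DM M t‖ ^ 4 ≤ (‖DM (M / 2) t‖ + ‖BL M t‖) ^ 4 := by
                  rw [DM_split]; gcongr; exact norm_add_le _ _
              _ ≤ _ := pow4_split _ _ (norm_nonneg _) (norm_nonneg _)
        have u2 := DM_cont (M / 2)
        have u3 := BL_cont M
        rw [intervalIntegral.integral_add (by apply Continuous.intervalIntegrable; fun_prop) (by apply Continuous.intervalIntegrable; fun_prop),
          intervalIntegral.integral_const_mul, intervalIntegral.integral_const_mul] at c4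
        have c5 := h1.trans (mul_le_mul_of_nonneg_left c3 (by positivity : 0 ≤ 4802 * C))
        linarith
  exact ⟨4802 * C, by positivity, fun M _ T hT => main M T hT⟩

lemma HS_two : HS 2 := by
  refine ⟨2, by norm_num, fun N hN T hT => ?_⟩
  have hc := (SN_cont N).norm.pow 4
  have h1 : ∫ t in (-T)..T, ‖SN N t‖ ^ 4 ≤ ∫ t in (-T)..T, (N:ℝ) ^ 4 := by
    apply intervalIntegral.integral_mono_on (by linarith) (hc.intervalIntegrable _ _) (by simp)
    intro t _
    exact pow_le_pow_left₀ (norm_nonneg _) (SN_le N t) 4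
  rw [intervalIntegral.integral_const, smul_eq_mul] at h1
  have e : (N:ℝ) ^ ((2:ℝ) + 2) = (N:ℝ) ^ 4 := by norm_num
  rw [e]
  have : 0 ≤ (N:ℝ) ^ (7/2 : ℝ) := by positivity
  linarith

lemma HS_iter (n : ℕ) : HS (2 / (4 * n + 1)) := by
  induction n with
  | zero => simpa using HS_two
  | succ n ih =>
    have hn : (0:ℝ) ≤ n := by positivity
    have h1 := D_core (2 / (4 * n + 1)) (2 / (4 * n + 3)) (by positivity) (by
      rw [div_le_iff₀ (by positivity)]; linarith) (by field_simp; ring) ih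
    have h2 := S_core (2 / (4 * n + 3)) (2 / (4 * (n + 1 : ℕ) + 1)) (by positivity) (by
      rw [div_le_iff₀ (by positivity)]; linarith) (by push_cast; field_simp; ring) h1
    exact h2

lemma HS_small (ε : ℝ) (hε : 0 < ε) : HS ε := by
  obtain ⟨n, hn⟩ := exists_nat_ge (2 / ε)
  obtain ⟨C, hC, h⟩ := HS_iter n
  refine ⟨C, hC, fun N hN T hT => (h N hN T hT).trans ?_⟩
  have hN1 : (1:ℝ) ≤ N := by exact_mod_cast hN
  gcongr
  rw [div_le_iff₀ (by positivity)]
  rw [div_le_iff₀ hε] at hn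
  have : 0 ≤ (n:ℝ) := by positivity
  nlinarith

def WW (ε Δ N : ℝ) : ℝ := (Δ ^ ((1:ℝ)/4) * N ^ ((7:ℝ)/8) + N ^ ((1:ℝ)/2)) * N ^ ε

lemma WW_pos (ε Δ N : ℝ) (hN : 2 ≤ N) (hΔ : 0 < Δ) : 0 < WW ε Δ N := by
  have : 0 < N := by linarith
  unfold WW; positivity

lemma WW_four (ε Δ N : ℝ) (hε : 0 < ε) (hN : 2 ≤ N) (hΔ : 0 < Δ) :
    Δ * N ^ (7/2 : ℝ) + N ^ (2 + 4 * ε) ≤ WW ε Δ N ^ 4 := by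
  have hN0 : 0 < N := by linarith
  have p : ∀ (x s : ℝ), 0 < x → (x ^ s) ^ 4 = x ^ (s * 4) := by
    intro x s hx
    rw [Real.rpow_mul hx.le]; norm_cast
  have h1 : (Δ ^ ((1:ℝ)/4) * N ^ ((7:ℝ)/8)) ^ 4 = Δ * N ^ (7/2 : ℝ) := by
    rw [mul_pow, p _ _ hΔ, p _ _ hN0]; norm_num
  have h2 : (N ^ ((1:ℝ)/2)) ^ 4 = N ^ (2:ℝ) := by
    rw [p _ _ hN0]; norm_num
  have h3 : (N ^ ε) ^ 4 = N ^ (4 * ε) := by rw [p _ _ hN0, mul_comm]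
  have h4 : 1 ≤ N ^ (4 * ε) := Real.one_le_rpow (by linarith) (by positivity)
  unfold WW
  rw [mul_pow, h3, Real.rpow_add hN0, ← h1, ← h2]
  set a := Δ ^ ((1:ℝ)/4) * N ^ ((7:ℝ)/8)
  set b := N ^ ((1:ℝ)/2)
  have ha : 0 ≤ a := by positivity
  have hb : 0 ≤ b := by positivity
  have h5 : a ^ 4 + b ^ 4 ≤ (a + b) ^ 4 := by
    have : 0 ≤ 4 * a ^ 3 * b + 6 * a ^ 2 * b ^ 2 + 4 * a * b ^ 3 := by positivity
    nlinarith
  calc a ^ 4 + b ^ 4 * N ^ (4 * ε) ≤ a ^ 4 * N ^ (4 * ε) + b ^ 4 * N ^ (4 * ε) := by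
        have := mul_le_mul_of_nonneg_left h4 (by positivity : 0 ≤ a ^ 4)
        linarith
    _ = (a ^ 4 + b ^ 4) * N ^ (4 * ε) := by ring
    _ ≤ _ := by gcongr

lemma four_int (ε : ℝ) (hε : 0 < ε) : ∃ D : ℝ, 0 < D ∧ ∀ N Δ : ℝ, 2 ≤ N → 0 < Δ →
    ∫ t in (-(1 / (2 * √(2 * π) * Δ)))..(1 / (2 * √(2 * π) * Δ)), ‖SN ⌊2 * N⌋₊ t‖ ^ 4
      ≤ D * ((1 / (2 * √(2 * π) * Δ)) * WW ε Δ N ^ 4) := by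
  obtain ⟨C, hC, h⟩ := HS_small (4 * ε) (by positivity)
  obtain ⟨hc1, hc3⟩ := cpi_bounds
  set c := √(2 * π) with hc
  have hc0 : 0 < c := by linarith
  refine ⟨C * (2 ^ (7/2 : ℝ) * (2 * c) + 2 ^ (2 + 4 * ε)), by positivity, fun N Δ hN hΔ => ?_⟩
  have hN0 : 0 < N := by linarith
  set T := 1 / (2 * c * Δ) with hT
  have hT0 : 0 < T := by positivity
  have hf : 1 ≤ ⌊2 * N⌋₊ := by rw [Nat.one_le_floor_iff]; linarith
  have hfl : ((⌊2 * N⌋₊ : ℕ) : ℝ) ≤ 2 * N := Nat.floor_le (by linarith)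
  refine (h _ hf T hT0).trans ?_
  have hw := WW_four ε Δ N hε hN hΔ
  have e1 : ((⌊2 * N⌋₊ : ℕ) : ℝ) ^ (7/2 : ℝ) ≤ 2 ^ (7/2 : ℝ) * N ^ (7/2 : ℝ) := by
    rw [← Real.mul_rpow (by norm_num) hN0.le]; gcongr
  have e2 : ((⌊2 * N⌋₊ : ℕ) : ℝ) ^ (2 + 4 * ε) ≤ 2 ^ (2 + 4 * ε) * N ^ (2 + 4 * ε) := by
    rw [← Real.mul_rpow (by norm_num) hN0.le]; gcongr
  have n1 : 0 ≤ N ^ (7/2 : ℝ) := by positivity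
  have n2 : 0 ≤ N ^ (2 + 4 * ε) := by positivity
  have f1 : N ^ (7/2 : ℝ) ≤ (2 * c) * (T * WW ε Δ N ^ 4) := by
    calc N ^ (7/2 : ℝ) = (2 * c) * (T * (Δ * N ^ (7/2 : ℝ))) := by rw [hT]; field_simp
      _ ≤ _ := by gcongr; linarith
  have f2 : T * N ^ (2 + 4 * ε) ≤ T * WW ε Δ N ^ 4 := by
    gcongr
    have : 0 ≤ Δ * N ^ (7/2 : ℝ) := by positivity
    linarith
  rw [mul_assoc C]
  gcongr
  calc _ ≤ 2 ^ (7/2 : ℝ) * N ^ (7/2 : ℝ) + T * (2 ^ (2 + 4 * ε) * N ^ (2 + 4 * ε)) := by gcongr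
    _ = 2 ^ (7/2 : ℝ) * N ^ (7/2 : ℝ) + 2 ^ (2 + 4 * ε) * (T * N ^ (2 + 4 * ε)) := by ring
    _ ≤ 2 ^ (7/2 : ℝ) * ((2 * c) * (T * WW ε Δ N ^ 4)) + 2 ^ (2 + 4 * ε) * (T * WW ε Δ N ^ 4) := by gcongr
    _ = _ := by ring

lemma amgm4 (a b c d : ℝ) : a * b * c * d ≤ (a ^ 4 + b ^ 4 + c ^ 4 + d ^ 4) / 4 := by
  nlinarith [sq_nonneg (a * b - c * d), sq_nonneg (a ^ 2 - b ^ 2), sq_nonneg (c ^ 2 - d ^ 2)]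

lemma amgm4w (a b c d A B C D : ℝ) (hA : 0 < A) (hB : 0 < B) (hC : 0 < C) (hD : 0 < D) :
    a * b * c * d ≤ (A * B * C * D / 4) * (a ^ 4 / A ^ 4 + b ^ 4 / B ^ 4 + c ^ 4 / C ^ 4 + d ^ 4 / D ^ 4) := by
  have h := mul_le_mul_of_nonneg_left (amgm4 (a / A) (b / B) (c / C) (d / D)) (by positivity : 0 ≤ A * B * C * D)
  simp only [div_pow] at h
  calc a * b * c * d = A * B * C * D * (a / A * (b / B) * (c / C) * (d / D)) := by field_simp
    _ ≤ _ := h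
    _ = _ := by ring

lemma norm_EP_sign (N : ℕ) (e : ℝ) (he : e = 1 ∨ e = -1) (t : ℝ) :
    ‖EP (Icc 1 N) (fun _ => 1) (fun n => e * lam n) t‖ = ‖SN N t‖ := by
  rcases he with rfl | rfl
  · simp only [one_mul]; rfl
  · rw [SN, ← Complex.norm_conj (EP _ _ lam t), EP_conj]
    simp

theorem Apm_count_bound (ε : ℝ) (hε : 0 < ε) :
    ∃ C : ℝ, 0 < C ∧ ∀ (e N₁ N₂ N₃ N₄ Δ : ℝ), (e = 1 ∨ e = -1) →
      2 ≤ N₁ → 2 ≤ N₂ → 2 ≤ N₃ → 2 ≤ N₄ → 0 < Δ →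
      ((Apm e N₁ N₂ N₃ N₄ Δ).ncard : ℝ)
        ≤ C * ((Δ ^ ((1:ℝ)/4) * N₁ ^ ((7:ℝ)/8) + N₁ ^ ((1:ℝ)/2)) * N₁ ^ ε)
            * ((Δ ^ ((1:ℝ)/4) * N₂ ^ ((7:ℝ)/8) + N₂ ^ ((1:ℝ)/2)) * N₂ ^ ε)
            * ((Δ ^ ((1:ℝ)/4) * N₃ ^ ((7:ℝ)/8) + N₃ ^ ((1:ℝ)/2)) * N₃ ^ ε)
            * ((Δ ^ ((1:ℝ)/4) * N₄ ^ ((7:ℝ)/8) + N₄ ^ ((1:ℝ)/2)) * N₄ ^ ε) := by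
  obtain ⟨D, hD, hfour⟩ := four_int ε hε
  refine ⟨2 * D, by positivity, fun e N₁ N₂ N₃ N₄ Δ he h1 h2 h3 h4 hΔ => ?_⟩
  change _ ≤ 2 * D * WW ε Δ N₁ * WW ε Δ N₂ * WW ε Δ N₃ * WW ε Δ N₄
  obtain ⟨hc1, -⟩ := cpi_bounds
  have w1 := WW_pos ε Δ N₁ h1 hΔ
  have w2 := WW_pos ε Δ N₂ h2 hΔ
  have w3 := WW_pos ε Δ N₃ h3 hΔ
  have w4 := WW_pos ε Δ N₄ h4 hΔ
  have i1 := hfour N₁ Δ h1 hΔ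
  have i2 := hfour N₂ Δ h2 hΔ
  have i3 := hfour N₃ Δ h3 hΔ
  have i4 := hfour N₄ Δ h4 hΔ
  set W₁ := WW ε Δ N₁
  set W₂ := WW ε Δ N₂
  set W₃ := WW ε Δ N₃
  set W₄ := WW ε Δ N₄
  set c := 2 * √(2 * π) with hc
  have hc0 : 0 < c := by linarith
  set T := 1 / (c * Δ) with hT
  have hT0 : 0 < T := by positivity
  set G := Icc 1 ⌊2 * N₁⌋₊ ×ˢ Icc 1 ⌊2 * N₂⌋₊ ×ˢ Icc 1 ⌊2 * N₃⌋₊ ×ˢ Icc 1 ⌊2 * N₄⌋₊ with hG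
  have hmem : ∀ (N : ℝ) (n : ℕ), 2 ≤ N → N < n → (n:ℝ) ≤ 2 * N → n ∈ Icc 1 ⌊2 * N⌋₊ := by
    intro N n hN a b
    rw [Finset.mem_Icc]
    refine ⟨?_, Nat.le_floor b⟩
    have : (1:ℝ) ≤ n := by linarith
    exact_mod_cast this
  have hsub : Apm e N₁ N₂ N₃ N₄ Δ ⊆ (G : Set (ℕ × ℕ × ℕ × ℕ)) := by
    rintro ⟨n₁, n₂, n₃, n₄⟩ ⟨a1, a2, b1, b2, c1, c2, d1, d2, -, -⟩
    rw [hG, Finset.mem_coe, Finset.mem_product, Finset.mem_product, Finset.mem_product]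
    exact ⟨hmem _ _ h1 a1 a2, hmem _ _ h2 b1 b2, hmem _ _ h3 c1 c2, hmem _ _ h4 d1 d2⟩
  have hcard : ((Apm e N₁ N₂ N₃ N₄ Δ).ncard : ℝ) = ((G.filter (fun q => q ∈ Apm e N₁ N₂ N₃ N₄ Δ)).card : ℝ) := by
    rw [← Set.ncard_coe_finset]
    congr 2
    ext q
    simp only [Finset.coe_filter, Set.mem_setOf_eq]
    exact ⟨fun h => ⟨hsub h, h⟩, fun h => h.2⟩
  set ph : ℕ × ℕ × ℕ × ℕ → ℝ := fun q => lam q.1 + lam q.2.1 + e * lam q.2.2.1 + (-1) * lam q.2.2.2 with hph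
  have hlow : ((Apm e N₁ N₂ N₃ N₄ Δ).ncard : ℝ) * (T / 2) ≤ ∑ q ∈ G, tri T (ph q) := by
    rw [hcard, ← nsmul_eq_mul]
    refine (Finset.card_nsmul_le_sum _ (fun q => tri T (ph q)) (T / 2) ?_).trans
      (Finset.sum_le_sum_of_subset_of_nonneg (Finset.filter_subset _ _) (fun q _ _ => tri_nonneg _ _ hT0))
    intro q hq
    obtain ⟨-, -, -, -, -, -, -, -, -, hq⟩ := (Finset.mem_filter.mp hq).2
    apply tri_lower _ _ hT0
    have e1 : ph q = c * (Real.sqrt q.1 + Real.sqrt q.2.1 + e * Real.sqrt q.2.2.1 - Real.sqrt q.2.2.2) := by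
      simp only [hph, lam_eq, hc]; ring
    rw [e1, abs_mul, abs_of_pos hc0, hT, mul_one_div, div_le_one (by positivity)]
    gcongr
  have hP := prod4_integral (Icc 1 ⌊2 * N₁⌋₊) (Icc 1 ⌊2 * N₂⌋₊) (Icc 1 ⌊2 * N₃⌋₊) (Icc 1 ⌊2 * N₄⌋₊)
    (fun _ => 1) (fun _ => 1) (fun _ => 1) (fun _ => 1) lam lam (fun n => e * lam n) (fun n => (-1) * lam n) T hT0
  simp only [one_mul] at hP
  have hsum : ∑ q ∈ G, tri T (ph q) ≤ W₁ * W₂ * W₃ * W₄ * (D * T) := by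
    have s1 : ∑ q ∈ G, tri T (ph q) ≤ ‖∑ q ∈ G, ((tri T (ph q) : ℝ) : ℂ)‖ := by
      rw [← Complex.ofReal_sum, Complex.norm_real]
      exact le_abs_self _
    refine s1.trans ?_
    rw [← hP]
    have k1 := SN_cont ⌊2 * N₁⌋₊
    have k2 := SN_cont ⌊2 * N₂⌋₊
    have k3 := SN_cont ⌊2 * N₃⌋₊
    have k4 := SN_cont ⌊2 * N₄⌋₊
    refine (intervalIntegral.norm_integral_le_of_norm_le (by linarith) (g := fun t => (W₁ * W₂ * W₃ * W₄ / 4) * (‖SN ⌊2 * N₁⌋₊ t‖ ^ 4 / W₁ ^ 4 + ‖SN ⌊2 * N₂⌋₊ t‖ ^ 4 / W₂ ^ 4 + ‖SN ⌊2 * N₃⌋₊ t‖ ^ 4 / W₃ ^ 4 + ‖SN ⌊2 * N₄⌋₊ t‖ ^ 4 / W₄ ^ 4)) ?_ ?_).trans ?_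
    · refine Filter.Eventually.of_forall fun t ht => ?_
      have ht' : t ∈ Set.Icc (-T) T := Set.Ioc_subset_Icc_self ht
      have q1 := tri_kernel_nonneg hT0 ht'
      have q2 : 1 - |t| / T ≤ 1 := by
        have : 0 ≤ |t| / T := by positivity
        linarith
      rw [norm_mul, Complex.norm_real, Real.norm_of_nonneg q1, norm_mul, norm_mul, norm_mul, norm_EP_sign _ e he, norm_EP_sign _ (-1) (Or.inr rfl)]
      refine (mul_le_of_le_one_left (by positivity) q2).trans ?_
      exact amgm4w _ _ _ _ _ _ _ _ w1 w2 w3 w4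
    · apply Continuous.intervalIntegrable; fun_prop
    · rw [intervalIntegral.integral_const_mul,
        intervalIntegral.integral_add (by apply Continuous.intervalIntegrable; fun_prop) (by apply Continuous.intervalIntegrable; fun_prop),
        intervalIntegral.integral_add (by apply Continuous.intervalIntegrable; fun_prop) (by apply Continuous.intervalIntegrable; fun_prop),
        intervalIntegral.integral_add (by apply Continuous.intervalIntegrable; fun_prop) (by apply Continuous.intervalIntegrable; fun_prop),
        intervalIntegral.integral_div, intervalIntegral.integral_div, intervalIntegral.integral_div, intervalIntegral.integral_div]
      have r : ∀ (I W : ℝ), 0 < W → I ≤ D * (T * W ^ 4) → I / W ^ 4 ≤ D * T := by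
        intro I W hW h
        rw [div_le_iff₀ (by positivity)]; linarith
      have j1 := r _ _ w1 i1
      have j2 := r _ _ w2 i2
      have j3 := r _ _ w3 i3
      have j4 := r _ _ w4 i4
      calc _ ≤ W₁ * W₂ * W₃ * W₄ / 4 * (D * T + D * T + D * T + D * T) := by gcongr
        _ = _ := by ring
  have hfin := hlow.trans hsum
  have : ((Apm e N₁ N₂ N₃ N₄ Δ).ncard : ℝ) * (T / 2) ≤ (2 * D * W₁ * W₂ * W₃ * W₄) * (T / 2) := by
    refine hfin.trans (le_of_eq ?_); ring
  exact le_of_mul_le_mul_right this (by positivity)
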